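/- Assume ε ∉ (1/2)ℤ. Then there exist h₀ > 0 and C > 0, depending only on V₁, V₂ and ε, such that for every C^∞ 1-periodic φ : ℝ → ℂ and every positive integer N with h = 1/N ≤ h₀, the Nyström system with data g = Wφ has a unique solution (φ₀,…,φ_{N−1}), and max_{0 ≤ j ≤ N−1} |φ_j − φ(t_j)| ≤ C h ‖φ‖₃. -/

import Mathlib

/-!
The proof works on the Fourier side. In the variables `(s, u) = (s, s - t)` a logarithmic kernel is
`β(s,u) log(4 sin² πu) + κ(s,u)` with smooth `β`, `κ`, so `W` sends `e_n` to `∑ₖ w(k,n) e_{n+k}` with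
a symbol `w` (`ws`, lemma `Wop_fs`) that decays rapidly in `k` and grows linearly in `n`. The Nyström
matrix, applied to `e_n` on the grid, is given on the shifted grid in the same way by a discrete
symbol `wd` (`wds`, lemma `Wmat_hasSum`): the Fourier coefficients `-1/|q|` of the logarithm are
replaced by discrete ones `Lh(q)`, and the derivatives by the difference symbol
`2 N sin(πn/N)`.

Everything rests on uniform estimates for `Lh` on `2|n| ≤ N`. The aliasing formula `Lh_formula`
expresses `Lh(q) + 1/|q|` by the integrals `∫₀¹ z r^{k-1}/(1 - r^N z) dr`, `z = exp(2πiε)`,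
`k = N ± q`. Their denominators are bounded below by `|sin 2πε|`, which is positive because
`ε ∉ ½ℤ`.
Hence `Lh(q) + 1/|q| = O(1/N)`, the remainder has differences `O(N⁻²)`, and `|n| |Lh(n)|` is bounded
below (`Lh_lower`): where the real part could cancel, the imaginary part does not vanish. Since
`A₁(s,s)` is constant, the off-diagonal part of `wd` has order zero, while its diagonal is elliptic
of order one. These properties are collected in `Symb` and proved in `symb_wds`.

Stability (`stability`) is a compactness argument. If it failed, there would be coefficient vectors
`c` with `max ⟨n⟩²|c(n)| = 1` and images tending to zero. A limit along an ultrafilter is annihilated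
by the symbol `w`; ellipticity makes it rapidly decreasing (`null_rapD`), so it vanishes by
injectivity of `W`. But ellipticity of the diagonal also keeps the maximizing mode in a bounded
range, so the limit is not zero. Stability gives injectivity of the square matrix, hence unique
solvability.

For the error estimate, compare the discrete Fourier coefficients of the solution with the
coefficients of `φ`, which are bounded by `8 ‖φ‖₃ ⟨n⟩⁻³`. On the modes `|n| ≤ N/2` the defect is
`O(⟨n⟩⁻¹ ‖φ‖₃/N)` because `w - wd = O(⟨n⟩²/N)` (`Fh_cons`); the remaining modes, folded back by
aliasing, contribute the same order (`act_rest_le`, `foldc_le`). Stability bounds the coefficient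
error by `C ⟨n⟩⁻² ‖φ‖₃/N`, which is summable (`nodal_le`).
-/

noncomputable section

/-- Smooth kernel data, 1-periodic in each variable. -/
def SPK (A : ℝ → ℝ → ℂ) : Prop :=
  ContDiff ℝ (⊤ : ℕ∞) (fun p : ℝ × ℝ => A p.1 p.2) ∧
    (∀ s t, A (s + 1) t = A s t) ∧ (∀ s t, A s (t + 1) = A s t)

/-- Logarithmic kernel `V(s,t) = (i/(2π)) A(s,t) log(sin²(π(s−t))) + K(s,t)`. -/
def logKer (A K : ℝ → ℝ → ℂ) (s t : ℝ) : ℂ :=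
  Complex.I / (2 * Real.pi) * A s t * (Real.log (Real.sin (Real.pi * (s - t)) ^ 2) : ℂ) + K s t

/-- Grid point `s_{j+ε} = (j − 1/2 + ε)h`. -/
def sg (h ε : ℝ) (j : ℤ) : ℝ := ((j : ℝ) - 1 / 2 + ε) * h

/-- Grid point `t_{j+ε} = (j + ε)h`. -/
def tg (h ε : ℝ) (j : ℤ) : ℝ := ((j : ℝ) + ε) * h

/-- Integral operator with kernel `V`. -/
def Vop (V : ℝ → ℝ → ℂ) (φ : ℝ → ℂ) (s : ℝ) : ℂ := ∫ t in (0:ℝ)..1, V s t * φ t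

/-- Hypersingular operator `W = −D V₁ D + V₂`. -/
def Wop (V1 V2 : ℝ → ℝ → ℂ) (φ : ℝ → ℂ) (s : ℝ) : ℂ :=
  -deriv (Vop V1 (deriv φ)) s + Vop V2 φ s

/-- Nyström matrix entries `W^ε_{ij}`. -/
def Wmat (V1 V2 : ℝ → ℝ → ℂ) (h ε : ℝ) (i j : ℤ) : ℂ :=
  V1 (sg h ε (i + 1)) (sg h 0 (j + 1)) - V1 (sg h ε i) (sg h 0 (j + 1))
    - V1 (sg h ε (i + 1)) (sg h 0 j) + V1 (sg h ε i) (sg h 0 j)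
    + (h : ℂ) ^ 2 * V2 (tg h ε i) (tg h 0 j)

/-- Fourier coefficient of a 1-periodic function. -/
def fc (u : ℝ → ℂ) (m : ℤ) : ℂ :=
  ∫ t in (0:ℝ)..1, u t * Complex.exp (-(2 * Real.pi * Complex.I * (m : ℂ) * (t : ℂ)))

/-- Periodic Sobolev norm of order `r`. -/
def sobNorm (r : ℝ) (u : ℝ → ℂ) : ℝ :=
  Real.sqrt (‖fc u 0‖ ^ 2 +
    ∑' m : ℤ, if m = 0 then 0 else |(m : ℝ)| ^ (2 * r) * ‖fc u m‖ ^ 2)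

/-- 1-periodic step function on the ε-shifted grid with coefficients `v`. -/
def stepf (N : ℕ) (ε : ℝ) (v : ZMod N → ℂ) (s : ℝ) : ℂ :=
  v ((⌊s * N + 1 / 2 - ε⌋ : ℤ) : ZMod N)

/-- Midpoint quadrature error matrix entries `E^ε_{ij}`. -/
def Emat (V2 : ℝ → ℝ → ℂ) (h ε : ℝ) (i j : ℤ) : ℂ :=
  (∫ s in (sg h ε i)..(sg h ε (i + 1)), ∫ t in (sg h 0 j)..(sg h 0 (j + 1)), V2 s t)
    - (h : ℂ) ^ 2 * V2 (tg h ε i) (tg h 0 j)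

/-- Spectral (ℓ²-operator) norm of a complex `N×N` matrix. -/
def specNorm {N : ℕ} (M : Matrix (Fin N) (Fin N) ℂ) : ℝ :=
  ‖LinearMap.toContinuousLinearMap (Matrix.toEuclideanLin M)‖

/-- The function `C̄₁(t) = −(1/(2πi)) log(4 sin²(πt))`. -/
def Cbar1 (t : ℝ) : ℂ :=
  -(1 / (2 * Real.pi * Complex.I)) * (Real.log (4 * Real.sin (Real.pi * t) ^ 2) : ℂ)

end

/-- The Nyström linear system with data `g = Wφ`:
`Σ_j W^ε_{ij} v_j = h (Wφ)(t_{i+ε})`, `i = 0,…,N−1`. -/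
def Nys (V1 V2 : ℝ → ℝ → ℂ) (ε : ℝ) (N : ℕ) [NeZero N] (φ : ℝ → ℂ)
    (v : ZMod N → ℂ) : Prop :=
  ∀ i : ZMod N,
    (∑ j : ZMod N,
        Wmat V1 V2 (1 / (N : ℝ)) ε ((i.val : ℕ) : ℤ) ((j.val : ℕ) : ℤ) * v j)
      = (1 / (N : ℂ)) * Wop V1 V2 φ (tg (1 / (N : ℝ)) ε ((i.val : ℕ) : ℤ))

namespace Nystrom

open Complex Filter Topology

/-! ### Brackets and characters -/

/-- The weight `⟨n⟩ = 1 + |n|`. -/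
noncomputable def jb (n : ℤ) : ℝ := 1 + |(n : ℝ)|

/-- The character `e_n(t) = exp(2πint)`. -/
noncomputable def ee (n : ℤ) (t : ℝ) : ℂ := Complex.exp (2 * Real.pi * Complex.I * n * t)

lemma jb_one_le (n : ℤ) : 1 ≤ jb n := by
  have := abs_nonneg (n : ℝ)
  unfold jb; linarith

lemma jb_pos (n : ℤ) : 0 < jb n := lt_of_lt_of_le one_pos (jb_one_le n)

lemma jb_neg (n : ℤ) : jb (-n) = jb n := by simp [jb]

lemma jb_zero : jb 0 = 1 := by simp [jb]

lemma abs_le_jb (n : ℤ) : |(n : ℝ)| ≤ jb n := by unfold jb; linarith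

lemma jb_add_le (m n : ℤ) : jb (m + n) ≤ jb m * jb n := by
  unfold jb
  push_cast
  have := abs_add_le (m : ℝ) n
  nlinarith [mul_nonneg (abs_nonneg (m : ℝ)) (abs_nonneg (n : ℝ))]

lemma jb_sub_le (m n : ℤ) : jb (m - n) ≤ jb m * jb n := by
  rw [sub_eq_add_neg, ← jb_neg n]; exact jb_add_le _ _

lemma jb_le_of_abs_le {m n : ℤ} (h : |m| ≤ |n|) : jb m ≤ jb n := by
  unfold jb
  have : ((|m| : ℤ) : ℝ) ≤ ((|n| : ℤ) : ℝ) := by exact_mod_cast h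
  push_cast at this
  linarith

lemma jb_le_two_mul {n : ℤ} (h : n ≠ 0) : jb n ≤ 2 * |(n : ℝ)| := by
  have : (1 : ℝ) ≤ |(n : ℝ)| := by exact_mod_cast Int.one_le_abs h
  unfold jb; linarith

lemma summable_jb : Summable (fun n : ℤ => (jb n ^ 2)⁻¹) := by
  have h1 : Summable (fun n : ℤ => 1 / |(n : ℝ)| ^ 2) := by
    have := (Real.summable_one_div_int_pow (p := 2)).2 (by norm_num)
    simpa using this
  refine (Summable.of_norm_bounded_eventually h1 ?_)
  have : ∀ᶠ n : ℤ in cofinite, n ≠ 0 := by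
    simpa using (Set.finite_singleton (0 : ℤ)).compl_mem_cofinite
  filter_upwards [this] with n hn
  have h2 : 0 < |(n : ℝ)| := by positivity
  rw [Real.norm_of_nonneg (by positivity), one_div]
  gcongr
  exact abs_le_jb n

lemma summable_jb_of_le {f : ℤ → ℂ} {C : ℝ} {K : ℕ} (hK : 2 ≤ K)
    (hf : ∀ n, ‖f n‖ * jb n ^ K ≤ C) : Summable (fun n => ‖f n‖) := by
  refine Summable.of_nonneg_of_le (fun _ => norm_nonneg _) (fun n => ?_) (summable_jb.mul_left C)
  have h1 : jb n ^ 2 ≤ jb n ^ K := pow_le_pow_right₀ (jb_one_le n) hK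
  have h2 : ‖f n‖ * jb n ^ 2 ≤ C := le_trans (by gcongr) (hf n)
  have h3 := jb_pos n
  rw [← div_eq_mul_inv, le_div_iff₀ (by positivity)]
  exact h2

lemma ee_zero_left (t : ℝ) : ee 0 t = 1 := by simp [ee]
lemma ee_zero_right (n : ℤ) : ee n 0 = 1 := by simp [ee]

lemma ee_add_left (m n : ℤ) (t : ℝ) : ee (m + n) t = ee m t * ee n t := by
  unfold ee; rw [← Complex.exp_add]; push_cast; ring_nf

lemma ee_add_right (n : ℤ) (s t : ℝ) : ee n (s + t) = ee n s * ee n t := by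
  unfold ee; rw [← Complex.exp_add]; push_cast; ring_nf

lemma ee_neg_left (n : ℤ) (t : ℝ) : ee (-n) t = ee n (-t) := by
  unfold ee; push_cast; ring_nf

lemma ee_norm (n : ℤ) (t : ℝ) : ‖ee n t‖ = 1 := by
  unfold ee
  have : (2 * Real.pi * Complex.I * n * t : ℂ) = ((2 * Real.pi * n * t : ℝ) : ℂ) * Complex.I := by
    push_cast; ring
  rw [this, Complex.norm_exp_ofReal_mul_I]

lemma ee_ne_zero (n : ℤ) (t : ℝ) : ee n t ≠ 0 := Complex.exp_ne_zero _

lemma ee_conj (n : ℤ) (t : ℝ) : (starRingEnd ℂ) (ee n t) = ee (-n) t := by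
  unfold ee
  rw [← Complex.exp_conj]
  congr 1
  simp [map_ofNat]

lemma ee_neg_mul (n : ℤ) (t : ℝ) : ee (-n) t * ee n t = 1 := by
  rw [← ee_add_left]; simp [ee_zero_left]

lemma ee_int (n m : ℤ) : ee n m = 1 := by
  unfold ee
  rw [Complex.exp_eq_one_iff]
  exact ⟨n * m, by push_cast; ring⟩

lemma ee_add_int (n : ℤ) (t : ℝ) (m : ℤ) : ee n (t + m) = ee n t := by
  rw [ee_add_right, ee_int, mul_one]

lemma ee_periodic (n : ℤ) : Function.Periodic (ee n) 1 := fun t => by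
  simpa using ee_add_int n t 1

lemma ee_sub_right (n : ℤ) (s t : ℝ) : ee n (s - t) = ee n s * ee (-n) t := by
  rw [sub_eq_add_neg, ee_add_right, ee_neg_left]

lemma ee_continuous (n : ℤ) : Continuous (ee n) := by
  unfold ee; fun_prop

lemma ee_hasDerivAt (n : ℤ) (t : ℝ) :
    HasDerivAt (ee n) (2 * Real.pi * Complex.I * n * ee n t) t := by
  unfold ee
  have h1 : HasDerivAt (fun t : ℝ => (2 * Real.pi * Complex.I * n * t : ℂ))
      (2 * Real.pi * Complex.I * n) t := by
    simpa using (Complex.ofRealCLM.hasDerivAt (x := t)).const_mul (2 * Real.pi * Complex.I * n : ℂ)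
  exact h1.cexp.congr_deriv (by ring)

lemma ee_nsmul (n : ℤ) (j : ℕ) (t : ℝ) : ee (j * n) t = ee n t ^ j := by
  unfold ee; rw [← Complex.exp_nat_mul]; push_cast; ring_nf

lemma ee_eq_pow (j : ℕ) (t : ℝ) : ee j t = ee 1 t ^ j := by
  simpa using ee_nsmul 1 j t

lemma fc_eq (u : ℝ → ℂ) (m : ℤ) : fc u m = ∫ t in (0:ℝ)..1, u t * ee (-m) t := by
  unfold fc ee
  congr 1; ext t; congr 2; push_cast; ring

lemma ee_integral (n : ℤ) : ∫ t in (0:ℝ)..1, ee n t = if n = 0 then 1 else 0 := by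
  split_ifs with h
  · simp [h, ee_zero_left]
  · have hc : (2 * Real.pi * Complex.I * n : ℂ) ≠ 0 := by
      have : (Real.pi : ℂ) ≠ 0 := by exact_mod_cast Real.pi_ne_zero
      have h2 : (n : ℂ) ≠ 0 := by exact_mod_cast h
      simp [this, h2]
    have h1 : ∀ t : ℝ, HasDerivAt (fun t => (2 * Real.pi * Complex.I * n : ℂ)⁻¹ * ee n t)
        (ee n t) t := fun t => by
      refine ((ee_hasDerivAt n t).const_mul (2 * Real.pi * Complex.I * n : ℂ)⁻¹).congr_deriv ?_
      rw [← mul_assoc, inv_mul_cancel₀ hc, one_mul]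
    rw [intervalIntegral.integral_eq_sub_of_hasDerivAt (fun t _ => h1 t)
      ((ee_continuous n).intervalIntegrable _ _)]
    have := ee_int n 1
    push_cast at this
    simp [this, ee_zero_right]

/-! ### The sampled logarithm -/

/-- The periodic logarithm `log (4 sin² πt)`. -/
noncomputable def ell (t : ℝ) : ℝ := Real.log (4 * Real.sin (Real.pi * t) ^ 2)

/-- The Fourier coefficients of `ell`. -/
noncomputable def lam (q : ℤ) : ℂ := if q = 0 then 0 else -(1 / |(q : ℝ)| : ℝ)

/-- The discrete Fourier coefficient of `ell` on the shifted grid `(j + ε)/N`. -/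
noncomputable def Lh (N : ℕ) (ε : ℝ) (q : ℤ) : ℂ :=
  (1 / N : ℂ) * ∑ j ∈ Finset.range N, (ell ((j + ε) / N) : ℂ) * ee (-q) ((j + ε) / N)

/-- The discrete Fourier coefficient of the constant `1` on the shifted grid `(j + ε)/N`. -/
noncomputable def deltah (N : ℕ) (ε : ℝ) (q : ℤ) : ℂ :=
  (1 / N : ℂ) * ∑ j ∈ Finset.range N, ee (-q) ((j + ε) / N)

lemma ee_one_re (t : ℝ) : (ee 1 t).re = Real.cos (2 * Real.pi * t) := by
  unfold ee
  have : (2 * Real.pi * Complex.I * (1 : ℤ) * t : ℂ) = ((2 * Real.pi * t : ℝ) : ℂ) * Complex.I := by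
    push_cast; ring
  rw [this, Complex.exp_ofReal_mul_I_re]

lemma ee_one_im (t : ℝ) : (ee 1 t).im = Real.sin (2 * Real.pi * t) := by
  unfold ee
  have : (2 * Real.pi * Complex.I * (1 : ℤ) * t : ℂ) = ((2 * Real.pi * t : ℝ) : ℂ) * Complex.I := by
    push_cast; ring
  rw [this, Complex.exp_ofReal_mul_I_im]

lemma sin_ne_zero_of_not_half {ε : ℝ} (hε : ∀ k : ℤ, ε ≠ (k : ℝ) / 2) :
    Real.sin (2 * Real.pi * ε) ≠ 0 := by
  intro h
  rw [Real.sin_eq_zero_iff] at h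
  obtain ⟨n, hn⟩ := h
  apply hε n
  have := Real.pi_pos
  field_simp
  nlinarith

/-- Lower bound for the distance from `1` to the points `r z`, `z = e₁(ε)`, of a line through `0`. -/
lemma abs_sin_le_norm (ε : ℝ) (r : ℝ) :
    |Real.sin (2 * Real.pi * ε)| ≤ ‖(1 : ℂ) - r * ee 1 ε‖ := by
  have h1 : ‖(1 : ℂ) - r * ee 1 ε‖ = ‖ee (-1) ε - r‖ := by
    have : ee (-1) ε - r = ee (-1) ε * (1 - r * ee 1 ε) := by
      have := ee_neg_mul 1 ε
      linear_combination (r : ℂ) * this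
    rw [this, norm_mul, ee_norm, one_mul]
  rw [h1]
  have h2 : (ee (-1) ε - r).im = - Real.sin (2 * Real.pi * ε) := by
    rw [← ee_conj]; simp [ee_one_im]
  rw [← abs_neg, ← h2]
  exact Complex.abs_im_le_norm _

lemma one_sub_ne_zero {ω : ℂ} (hω : ‖ω‖ = 1) (h1 : ω ≠ 1) {r : ℝ} (hr : r ∈ Set.Icc (0:ℝ) 1) :
    (1 : ℂ) - r * ω ≠ 0 := by
  intro h
  have h2 : (r : ℂ) * ω = 1 := by linear_combination -h
  have h3 : ‖(r : ℂ) * ω‖ = 1 := by rw [h2]; simp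
  rw [norm_mul, hω, mul_one, Complex.norm_real, Real.norm_of_nonneg hr.1] at h3
  apply h1
  simpa [h3] using h2

/-- Integral representation of the logarithm, from `-log|1 - z|² = ∫₀¹ (z/(1-rz) + z̄/(1-rz̄)) dr`. -/
lemma ell_eq_integral {t : ℝ} (ht : ee 1 t ≠ 1) :
    (ell t : ℂ) = -∫ r in (0:ℝ)..1,
      (ee 1 t / (1 - r * ee 1 t) + ee (-1) t / (1 - r * ee (-1) t)) := by
  set c := Real.cos (2 * Real.pi * t) with hc
  have hsq : ∀ r : ℝ, ((1 : ℂ) - r * ee 1 t) * (1 - r * ee (-1) t) = ((1 - 2 * r * c + r ^ 2 : ℝ) : ℂ) := by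
    intro r
    have h1 := ee_neg_mul 1 t
    have h2 : ee 1 t + ee (-1) t = 2 * (c : ℂ) := by
      rw [← ee_conj, Complex.add_conj, ee_one_re, ← hc]; push_cast; ring
    push_cast
    linear_combination (-(r : ℂ)) * h2 + (r : ℂ) ^ 2 * h1
  have hne' : ee (-1) t ≠ 1 := by
    intro h
    apply ht
    have := ee_neg_mul 1 t
    rw [h, one_mul] at this
    exact this
  have hne : ∀ r ∈ Set.Icc (0:ℝ) 1, 1 - 2 * r * c + r ^ 2 ≠ 0 := by
    intro r hr h
    have := hsq r
    rw [h] at this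
    simp only [ofReal_zero, mul_eq_zero] at this
    rcases this with h | h
    · exact one_sub_ne_zero (ee_norm _ _) ht hr h
    · exact one_sub_ne_zero (ee_norm _ _) hne' hr h
  have hInt : ∀ r ∈ Set.Icc (0:ℝ) 1,
      -(ee 1 t / (1 - r * ee 1 t) + ee (-1) t / (1 - r * ee (-1) t))
        = (((2 * r - 2 * c) / (1 - 2 * r * c + r ^ 2) : ℝ) : ℂ) := by
    intro r hr
    have h1 := one_sub_ne_zero (ee_norm _ _) ht hr
    have h2 := one_sub_ne_zero (ee_norm _ _) hne' hr
    have h3 := ee_neg_mul 1 t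
    have h4 : ee 1 t + ee (-1) t = 2 * (c : ℂ) := by
      rw [← ee_conj, Complex.add_conj, ee_one_re, ← hc]; push_cast; ring
    rw [ofReal_div, ← hsq r]
    rw [div_add_div _ _ h1 h2, ← neg_div]
    congr 1
    push_cast
    linear_combination -h4 + 2 * (r : ℂ) * h3
  rw [← intervalIntegral.integral_neg, intervalIntegral.integral_congr (g := fun r =>
    (((2 * r - 2 * c) / (1 - 2 * r * c + r ^ 2) : ℝ) : ℂ)) (fun r hr => hInt r (by simpa using hr)),
    intervalIntegral.integral_ofReal]
  congr 1
  have hderiv : ∀ r ∈ Set.uIcc (0:ℝ) 1, HasDerivAt (fun r : ℝ => Real.log (1 - 2 * r * c + r ^ 2))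
      ((2 * r - 2 * c) / (1 - 2 * r * c + r ^ 2)) r := by
    intro r hr
    have h1 : HasDerivAt (fun r : ℝ => 1 - 2 * r * c + r ^ 2) (2 * r - 2 * c) r := by
      have := (((hasDerivAt_id r).const_mul 2).mul_const c).const_sub 1
      have h2 := this.add ((hasDerivAt_id r).pow 2)
      exact h2.congr_deriv (by simp; ring)
    exact h1.log (hne r (by simpa using hr))
  rw [intervalIntegral.integral_eq_sub_of_hasDerivAt hderiv]
  · unfold ell
    simp only [mul_one, mul_zero, zero_mul, sub_zero]
    norm_num
    congr 1
    have : Real.cos (2 * Real.pi * t) = 1 - 2 * Real.sin (Real.pi * t) ^ 2 := by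
      rw [mul_assoc, Real.cos_two_mul, Real.cos_sq']; ring
    rw [hc, this]; ring
  · apply ContinuousOn.intervalIntegrable
    apply ContinuousOn.div (by fun_prop) (by fun_prop)
    intro r hr
    exact hne r (by simpa using hr)

/-- `∫₀¹ z r^{k-1}/(1 - r^N z) dr` with `z = e₁(ε)`: the aliasing remainder of `Lh`. -/
noncomputable def Gm (N : ℕ) (ε : ℝ) (k : ℕ) : ℂ :=
  ∫ r in (0:ℝ)..1, ee 1 ε * (r : ℂ) ^ (k - 1) / (1 - (r : ℂ) ^ N * ee 1 ε)

lemma grid_sum (N : ℕ) [NeZero N] (ε : ℝ) (q : ℤ) :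
    ∑ j ∈ Finset.range N, ee q ((j + ε) / N) = if (N : ℤ) ∣ q then N * ee q (ε / N) else 0 := by
  have hN : (N : ℝ) ≠ 0 := by exact_mod_cast NeZero.ne N
  have h1 : ∀ j : ℕ, ee q ((j + ε) / N) = ee q (ε / N) * (ee q (1 / N)) ^ j := by
    intro j
    rw [← ee_nsmul, show ((j : ℝ) + ε) / N = ε / N + j / N by ring, ee_add_right]
    congr 1
    unfold ee; congr 1; push_cast; ring
  simp_rw [h1, ← Finset.mul_sum]
  split_ifs with h
  · obtain ⟨p, rfl⟩ := h
    have : ee (N * p) (1 / N) = 1 := by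
      have h2 := ee_int p 1
      rw [← h2]; unfold ee; congr 1; push_cast
      have : (N : ℂ) ≠ 0 := by exact_mod_cast NeZero.ne N
      field_simp
    simp only [this, one_pow, Finset.sum_const, Finset.card_range, nsmul_eq_mul]; ring
  · have hne : ee q (1 / N) ≠ 1 := by
      intro h3
      apply h
      unfold ee at h3
      rw [Complex.exp_eq_one_iff] at h3
      obtain ⟨n, hn⟩ := h3
      refine ⟨n, ?_⟩
      have hN' : (N : ℂ) ≠ 0 := by exact_mod_cast NeZero.ne N
      have hpi : (Real.pi : ℂ) ≠ 0 := by exact_mod_cast Real.pi_ne_zero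
      have h4 : (q : ℂ) = N * n := by
        push_cast at hn
        field_simp at hn
        linear_combination hn
      exact_mod_cast h4
    rw [geom_sum_eq hne]
    have : ee q (1 / N) ^ N = 1 := by
      rw [← ee_nsmul]
      have h2 := ee_int q 1
      rw [← h2]; unfold ee; congr 1; push_cast
      have : (N : ℂ) ≠ 0 := by exact_mod_cast NeZero.ne N
      field_simp
    rw [this]; simp

lemma deltah_eq (N : ℕ) [NeZero N] (ε : ℝ) (q : ℤ) :
    deltah N ε q = if (N : ℤ) ∣ q then ee (-q) (ε / N) else 0 := by
  have hN : (N : ℂ) ≠ 0 := by exact_mod_cast NeZero.ne N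
  unfold deltah
  rw [grid_sum]
  by_cases h : (N : ℤ) ∣ q
  · simp [h]; field_simp
  · simp [h]

lemma ee_grid_shift (N : ℕ) [NeZero N] (ε : ℝ) (q p : ℤ) (j : ℤ) :
    ee (q + p * N) ((j + ε) / N) = ee q ((j + ε) / N) * ee p ε := by
  have hN : (N : ℂ) ≠ 0 := by exact_mod_cast NeZero.ne N
  rw [ee_add_left]
  congr 1
  have : ee (p * N) ((j + ε) / N) = ee p (ε + j) := by
    unfold ee; congr 1; push_cast; field_simp; ring
  rw [this, ee_add_int]

lemma ee_grid_shift' (N : ℕ) [NeZero N] (ε : ℝ) (q p : ℤ) (j : ℕ) :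
    ee (q + p * N) ((j + ε) / N) = ee q ((j + ε) / N) * ee p ε := by
  simpa using ee_grid_shift N ε q p j

lemma ee_one_grid_pow (N : ℕ) [NeZero N] (ε : ℝ) (j : ℕ) : ee 1 ((j + ε) / N) ^ N = ee 1 ε := by
  rw [← ee_nsmul]
  have := ee_grid_shift' N ε 0 1 j
  simpa [ee_zero_left] using this

/-- The partial-fraction sum that carries the aliasing formula. -/
noncomputable def PF (N : ℕ) (ε : ℝ) (q : ℤ) (r : ℝ) : ℂ :=
  (1 / N : ℂ) * ∑ j ∈ Finset.range N,
    ee (-q) ((j + ε) / N) * (ee 1 ((j + ε) / N) / (1 - r * ee 1 ((j + ε) / N)))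

lemma PF_shift (N : ℕ) [NeZero N] (ε : ℝ) (q : ℤ) (r : ℝ) :
    PF N ε (q - N) r = ee 1 ε * PF N ε q r := by
  unfold PF
  have : ∀ j : ℕ, ee (-(q - N)) ((j + ε) / N) = ee (-q) ((j + ε) / N) * ee 1 ε := by
    intro j
    have := ee_grid_shift' N ε (-q) 1 j
    rw [← this]; congr 1; ring
  simp_rw [this, Finset.mul_sum]
  refine Finset.sum_congr rfl fun j _ => ?_
  ring

lemma grid_ne_one {ε : ℝ} (hz : ee 1 ε ≠ 1) (N : ℕ) [NeZero N] (j : ℕ) : ee 1 ((j + ε) / N) ≠ 1 := by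
  intro h
  apply hz
  rw [← ee_one_grid_pow N ε j, h, one_pow]

lemma denom_ne_zero {ε : ℝ} (hz : ee 1 ε ≠ 1) {r : ℝ} (hr : r ∈ Set.Icc (0:ℝ) 1) (N : ℕ) : (1 : ℂ) - (r : ℂ) ^ N * ee 1 ε ≠ 0 := by
  have := one_sub_ne_zero (ee_norm 1 ε) hz (r := r ^ N) ⟨pow_nonneg hr.1 _, pow_le_one₀ hr.1 hr.2⟩
  simpa using this

/-- Closed form of the partial-fraction sum over the `N`-th roots of `e₁(ε)`. -/
lemma PF_eq {ε : ℝ} (hz : ee 1 ε ≠ 1) {r : ℝ} (hr : r ∈ Set.Icc (0:ℝ) 1)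
    (N : ℕ) [NeZero N] (q : ℕ) (hq : q < N) :
    PF N ε (q + 1 : ℕ) r = (r : ℂ) ^ q / (1 - (r : ℂ) ^ N * ee 1 ε) := by
  have hN : (N : ℂ) ≠ 0 := by exact_mod_cast NeZero.ne N
  have hd := denom_ne_zero hz hr N
  have h1 : ∀ j : ℕ, ee (-(q + 1 : ℕ)) ((j + ε) / N) *
      (ee 1 ((j + ε) / N) / (1 - r * ee 1 ((j + ε) / N)))
      = ∑ k ∈ Finset.range N, (r : ℂ) ^ k / (1 - (r : ℂ) ^ N * ee 1 ε) *
          ee ((k : ℤ) - q) ((j + ε) / N) := by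
    intro j
    have hn := one_sub_ne_zero (ee_norm 1 ((j + ε) / N)) (grid_ne_one hz N j) hr
    have hg : ee 1 ((j + ε) / N) / (1 - r * ee 1 ((j + ε) / N)) =
        ∑ k ∈ Finset.range N, (r : ℂ) ^ k / (1 - (r : ℂ) ^ N * ee 1 ε) *
          ee ((k : ℤ) + 1) ((j + ε) / N) := by
      rw [div_eq_iff hn]
      have h2 : ∀ k : ℕ, (r : ℂ) ^ k / (1 - (r : ℂ) ^ N * ee 1 ε) *
          ee ((k : ℤ) + 1) ((j + ε) / N) = (ee 1 ((j + ε) / N) / (1 - (r : ℂ) ^ N * ee 1 ε)) *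
            (r * ee 1 ((j + ε) / N)) ^ k := by
        intro k
        rw [ee_add_left, ee_eq_pow, mul_pow]; ring
      simp_rw [h2, ← Finset.mul_sum]
      have h3 := geom_sum_mul_neg (r * ee 1 ((j + ε) / N)) N
      rw [mul_assoc, h3, mul_pow, ee_one_grid_pow]
      field_simp
    rw [hg, Finset.mul_sum]
    refine Finset.sum_congr rfl fun k _ => ?_
    rw [mul_left_comm, ← ee_add_left]
    congr 2; push_cast; ring
  unfold PF
  simp_rw [h1]
  rw [Finset.sum_comm]
  simp_rw [← Finset.mul_sum, grid_sum]
  rw [Finset.sum_eq_single q]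
  · simp [ee_zero_left]; field_simp
  · intro k hk hkq
    have hk' := Finset.mem_range.1 hk
    rw [if_neg, mul_zero]
    intro hdvd
    have h5 : |(k : ℤ) - q| < N := by rw [abs_lt]; constructor <;> omega
    have := Int.eq_zero_of_abs_lt_dvd hdvd h5
    omega
  · intro h; exact absurd (Finset.mem_range.2 hq) h

lemma ell_grid_continuous {ε : ℝ} (hz : ee 1 ε ≠ 1) (N : ℕ) [NeZero N] (q : ℤ) :
    ContinuousOn (PF N ε q) (Set.Icc (0:ℝ) 1) := by
  unfold PF
  apply ContinuousOn.mul continuousOn_const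
  apply continuousOn_finsetSum
  intro j _
  apply ContinuousOn.mul continuousOn_const
  apply ContinuousOn.div continuousOn_const (by fun_prop)
  intro r hr
  exact one_sub_ne_zero (ee_norm _ _) (grid_ne_one hz N j) hr

lemma Lh_eq_PF {ε : ℝ} (hz : ee 1 ε ≠ 1) (N : ℕ) [NeZero N] (q : ℤ) :
    Lh N ε q = -(∫ r in (0:ℝ)..1, PF N ε q r) - (starRingEnd ℂ) (∫ r in (0:ℝ)..1, PF N ε (-q) r) := by
  have hcont : ∀ q, IntervalIntegrable (PF N ε q) MeasureTheory.volume 0 1 := fun q =>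
    ContinuousOn.intervalIntegrable (by simpa using ell_grid_continuous hz N q)
  have hconj : (starRingEnd ℂ) (∫ r in (0:ℝ)..1, PF N ε (-q) r)
      = ∫ r in (0:ℝ)..1, (starRingEnd ℂ) (PF N ε (-q) r) := by
    rw [intervalIntegral.integral_of_le zero_le_one, intervalIntegral.integral_of_le zero_le_one,
      integral_conj]
  have hc2 : IntervalIntegrable (fun r => (starRingEnd ℂ) (PF N ε (-q) r))
      MeasureTheory.volume 0 1 := by
    apply ContinuousOn.intervalIntegrable
    exact Complex.continuous_conj.comp_continuousOn (by simpa using ell_grid_continuous hz N (-q))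
  have hc1 : IntervalIntegrable (fun r => -PF N ε q r) MeasureTheory.volume 0 1 := (hcont q).neg
  rw [hconj, ← intervalIntegral.integral_neg, ← intervalIntegral.integral_sub hc1 hc2]
  unfold Lh
  have h1 : ∀ j : ℕ, (ell ((j + ε) / N) : ℂ) * ee (-q) ((j + ε) / N) = ∫ r in (0:ℝ)..1,
      -(ee (-q) ((j + ε) / N) * (ee 1 ((j + ε) / N) / (1 - r * ee 1 ((j + ε) / N)) +
        ee (-1) ((j + ε) / N) / (1 - r * ee (-1) ((j + ε) / N)))) := by
    intro j
    rw [ell_eq_integral (grid_ne_one hz N j), intervalIntegral.integral_neg,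
      intervalIntegral.integral_const_mul]
    ring
  simp_rw [h1]
  rw [← intervalIntegral.integral_finsetSum, ← intervalIntegral.integral_const_mul]
  · apply intervalIntegral.integral_congr
    intro r _
    simp only [PF, map_mul, map_sum, map_div₀, map_sub, map_one, ee_conj, neg_neg,
      Complex.conj_ofReal, map_natCast]
    rw [Finset.mul_sum, Finset.mul_sum, Finset.mul_sum, ← Finset.sum_neg_distrib,
      ← Finset.sum_sub_distrib]
    refine Finset.sum_congr rfl fun j _ => ?_
    ring
  · intro j _
    apply ContinuousOn.intervalIntegrable
    apply ContinuousOn.neg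
    apply ContinuousOn.mul continuousOn_const
    have h2 := grid_ne_one hz N j
    have h3 : ee (-1) ((j + ε) / N) ≠ 1 := by
      intro h
      have := ee_neg_mul 1 ((j + ε) / N)
      rw [h, one_mul] at this
      exact h2 this
    apply ContinuousOn.add
    · apply ContinuousOn.div continuousOn_const (by fun_prop)
      intro r hr
      exact one_sub_ne_zero (ee_norm _ _) h2 (by simpa using hr)
    · apply ContinuousOn.div continuousOn_const (by fun_prop)
      intro r hr
      exact one_sub_ne_zero (ee_norm _ _) h3 (by simpa using hr)

lemma Gm_integrand_continuous {ε : ℝ} (hz : ee 1 ε ≠ 1) (N k : ℕ) :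
    ContinuousOn (fun r : ℝ => ee 1 ε * (r : ℂ) ^ (k - 1) / (1 - (r : ℂ) ^ N * ee 1 ε))
      (Set.Icc (0:ℝ) 1) :=
  ContinuousOn.div (by fun_prop) (by fun_prop) fun _ hr => denom_ne_zero hz hr N

lemma integral_PF_neg {ε : ℝ} (hz : ee 1 ε ≠ 1) (N : ℕ) [NeZero N] (q : ℕ) (hq : q < N) :
    ∫ r in (0:ℝ)..1, PF N ε (-(q : ℤ)) r = Gm N ε (N - q) := by
  unfold Gm
  apply intervalIntegral.integral_congr
  intro r hr
  have hr' : r ∈ Set.Icc (0:ℝ) 1 := by simpa using hr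
  have h1 := PF_shift N ε (((N - q - 1 : ℕ) + 1 : ℕ) : ℤ) r
  rw [PF_eq hz hr' N _ (by omega)] at h1
  have h2 : (((N - q - 1 : ℕ) + 1 : ℕ) : ℤ) - N = -(q : ℤ) := by omega
  rw [h2] at h1
  simp only []
  rw [h1, mul_div_assoc]

lemma integral_PF_pos {ε : ℝ} (hz : ee 1 ε ≠ 1) (N : ℕ) [NeZero N] (q : ℕ) (hq : q < N) :
    ∫ r in (0:ℝ)..1, PF N ε q r = -lam q + Gm N ε (N + q) := by
  rcases Nat.eq_zero_or_pos q with rfl | hq0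
  · have := integral_PF_neg hz N 0 hq
    simpa [lam] using this
  · unfold Gm
    have h0 : -lam q = ∫ r in (0:ℝ)..1, (r : ℂ) ^ (q - 1) := by
      have h3 : ((q - 1 : ℕ) : ℝ) + 1 = q := by
        have : q - 1 + 1 = q := by omega
        exact_mod_cast this
      have h4 : ∫ r in (0:ℝ)..1, (r : ℂ) ^ (q - 1) = ((∫ r in (0:ℝ)..1, r ^ (q - 1) : ℝ) : ℂ) := by
        rw [← intervalIntegral.integral_ofReal]; simp
      rw [h4, integral_pow, h3]
      have : q ≠ 0 := by omega
      simp [lam, this]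
    rw [h0, ← intervalIntegral.integral_add]
    · apply intervalIntegral.integral_congr
      intro r hr
      have hr' : r ∈ Set.Icc (0:ℝ) 1 := by simpa using hr
      have h1 := PF_eq hz hr' N (q - 1) (by omega)
      rw [show q - 1 + 1 = q by omega] at h1
      have hd := denom_ne_zero hz hr' N
      simp only []
      rw [h1, show N + q - 1 = N + (q - 1) by omega, pow_add]
      field_simp
      ring
    · exact (by fun_prop : Continuous fun r : ℝ => (r : ℂ) ^ (q - 1)).intervalIntegrable _ _
    · exact ContinuousOn.intervalIntegrable (by simpa using Gm_integrand_continuous hz N (N + q))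

lemma Lh_neg (N : ℕ) (ε : ℝ) (q : ℤ) : Lh N ε (-q) = (starRingEnd ℂ) (Lh N ε q) := by
  simp [Lh, ee_conj]

lemma lam_neg (q : ℤ) : lam (-q) = lam q := by simp [lam]

/-- The aliasing formula `Lh(q) = lam(q) - Gm(N+q) - conj Gm(N-q)`, `|q| < N`. -/
lemma Lh_formula {ε : ℝ} (hz : ee 1 ε ≠ 1) (N : ℕ) [NeZero N] (q : ℤ) (hq : |q| < N) :
    Lh N ε q = lam q - Gm N ε (N + q).toNat - (starRingEnd ℂ) (Gm N ε (N - q).toNat) := by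
  have key : ∀ q : ℕ, q < N →
      Lh N ε q = lam q - Gm N ε (N + q) - (starRingEnd ℂ) (Gm N ε (N - q)) := by
    intro q hq
    rw [Lh_eq_PF hz, integral_PF_pos hz N q hq, integral_PF_neg hz N q hq]
    ring
  rcases Int.eq_nat_or_neg q with ⟨n, rfl | rfl⟩
  · have hn : n < N := by simpa using hq
    rw [key n hn]
    congr 3
    omega
  · have hn : n < N := by simpa using hq
    rw [Lh_neg, key n hn, lam_neg]
    have : (starRingEnd ℂ) (lam n) = lam n := by
      unfold lam; split_ifs <;> simp
    simp only [map_sub, this, Complex.conj_conj]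
    rw [show ((N : ℤ) + -(n : ℤ)).toNat = N - n by omega,
      show ((N : ℤ) - -(n : ℤ)).toNat = N + n by omega]
    ring

lemma integral_pow_pred {k : ℕ} (hk : 1 ≤ k) : ∫ r in (0:ℝ)..1, r ^ (k - 1) = 1 / k := by
  have h3 : ((k - 1 : ℕ) : ℝ) + 1 = k := by
    have : k - 1 + 1 = k := by omega
    exact_mod_cast this
  rw [integral_pow, h3]
  simp [show k - 1 + 1 = k by omega, show k ≠ 0 by omega]

/-- `|sin 2πε|`, the distance from `1` to the line spanned by `e₁(ε)`. -/
noncomputable def ce (ε : ℝ) : ℝ := |Real.sin (2 * Real.pi * ε)|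

lemma ce_le_one (ε : ℝ) : ce ε ≤ 1 := Real.abs_sin_le_one _

lemma z_ne_one {ε : ℝ} (h : 0 < ce ε) : ee 1 ε ≠ 1 := by
  intro h1
  have := ee_one_im ε
  rw [h1] at this
  simp [ce, ← this] at h

lemma ce_le_norm (ε r : ℝ) (N : ℕ) : ce ε ≤ ‖(1 : ℂ) - (r : ℂ) ^ N * ee 1 ε‖ := by
  have := abs_sin_le_norm ε (r ^ N)
  simpa [ce] using this

lemma norm_Gm_le {ε : ℝ} (h : 0 < ce ε) (N : ℕ) {k : ℕ} (hk : 1 ≤ k) :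
    ‖Gm N ε k‖ ≤ 1 / ce ε * (1 / k) := by
  unfold Gm
  have : ∫ r in (0:ℝ)..1, 1 / ce ε * r ^ (k - 1) = 1 / ce ε * (1 / k) := by
    rw [intervalIntegral.integral_const_mul, integral_pow_pred hk]
  rw [← this]
  apply intervalIntegral.norm_integral_le_of_norm_le zero_le_one
  · refine Eventually.of_forall fun r hr => ?_
    have hc := ce_le_norm ε r N
    have hr0 : 0 ≤ r := hr.1.le
    rw [norm_div, norm_mul, ee_norm, one_mul, norm_pow, Complex.norm_real,
      Real.norm_of_nonneg hr0, one_div, ← div_eq_inv_mul]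
    gcongr
  · exact (by fun_prop : Continuous fun r : ℝ => 1 / ce ε * r ^ (k - 1)).intervalIntegrable _ _

lemma norm_Gm_sub_le {ε : ℝ} (h : 0 < ce ε) (N : ℕ) {k k' : ℕ} (hk : 1 ≤ k) (hkk : k ≤ k') :
    ‖Gm N ε k - Gm N ε k'‖ ≤ 1 / ce ε * (1 / k - 1 / k') := by
  have hz := z_ne_one h
  unfold Gm
  rw [← intervalIntegral.integral_sub]
  · have : ∫ r in (0:ℝ)..1, 1 / ce ε * (r ^ (k - 1) - r ^ (k' - 1)) = 1 / ce ε * (1 / k - 1 / k') := by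
      rw [intervalIntegral.integral_const_mul, intervalIntegral.integral_sub,
        integral_pow_pred hk, integral_pow_pred (hk.trans hkk)]
      · exact (by fun_prop : Continuous fun r : ℝ => r ^ (k - 1)).intervalIntegrable _ _
      · exact (by fun_prop : Continuous fun r : ℝ => r ^ (k' - 1)).intervalIntegrable _ _
    rw [← this]
    apply intervalIntegral.norm_integral_le_of_norm_le zero_le_one
    · refine Eventually.of_forall fun r hr => ?_
      have hc := ce_le_norm ε r N
      have hr0 : 0 ≤ r := hr.1.le
      have hle : r ^ (k' - 1) ≤ r ^ (k - 1) := pow_le_pow_of_le_one hr0 hr.2 (by omega)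
      rw [← sub_div, ← mul_sub, norm_div, norm_mul, ee_norm, one_mul]
      have : ‖(r : ℂ) ^ (k - 1) - (r : ℂ) ^ (k' - 1)‖ = r ^ (k - 1) - r ^ (k' - 1) := by
        rw [← ofReal_pow, ← ofReal_pow, ← ofReal_sub, Complex.norm_real,
          Real.norm_of_nonneg (by linarith)]
      rw [this, one_div, ← div_eq_inv_mul]
      have h0 : 0 ≤ r ^ (k - 1) - r ^ (k' - 1) := by linarith
      gcongr
    · exact (by fun_prop : Continuous fun r : ℝ =>
        1 / ce ε * (r ^ (k - 1) - r ^ (k' - 1))).intervalIntegrable _ _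
  · exact ContinuousOn.intervalIntegrable (by simpa using Gm_integrand_continuous hz N k)
  · exact ContinuousOn.intervalIntegrable (by simpa using Gm_integrand_continuous hz N k')

lemma Gm_im {ε : ℝ} (h : 0 < ce ε) (N k : ℕ) :
    (Gm N ε k).im = Real.sin (2 * Real.pi * ε) *
      ∫ r in (0:ℝ)..1, r ^ (k - 1) / Complex.normSq (1 - (r : ℂ) ^ N * ee 1 ε) := by
  have hz := z_ne_one h
  unfold Gm
  have h1 : (∫ r in (0:ℝ)..1, ee 1 ε * (r : ℂ) ^ (k - 1) / (1 - (r : ℂ) ^ N * ee 1 ε)).im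
      = ∫ r in (0:ℝ)..1, (ee 1 ε * (r : ℂ) ^ (k - 1) / (1 - (r : ℂ) ^ N * ee 1 ε)).im := by
    have := Complex.imCLM.intervalIntegral_comp_comm (μ := MeasureTheory.volume) (a := 0) (b := 1)
      (f := fun r : ℝ => ee 1 ε * (r : ℂ) ^ (k - 1) / (1 - (r : ℂ) ^ N * ee 1 ε))
      (ContinuousOn.intervalIntegrable (by simpa using Gm_integrand_continuous hz N k))
    exact this.symm
  rw [h1, ← intervalIntegral.integral_const_mul]
  congr 1
  ext r
  rw [Complex.div_im, ← ofReal_pow, ← ofReal_pow]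
  simp only [mul_im, mul_re, ofReal_re, ofReal_im, sub_re, sub_im, one_re, one_im, ee_one_im, ee_one_re]
  ring

lemma normSq_denom_le {ε r : ℝ} (hr : r ∈ Set.Icc (0:ℝ) 1) (N : ℕ) :
    Complex.normSq (1 - (r : ℂ) ^ N * ee 1 ε) ≤ 4 := by
  rw [Complex.normSq_eq_norm_sq]
  have h1 : ‖(1 : ℂ) - (r : ℂ) ^ N * ee 1 ε‖ ≤ 2 := by
    refine (norm_sub_le _ _).trans ?_
    rw [norm_mul, ee_norm, mul_one, norm_pow, Complex.norm_real, Real.norm_of_nonneg hr.1, norm_one]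
    have := pow_le_one₀ (n := N) hr.1 hr.2
    linarith
  nlinarith [norm_nonneg ((1 : ℂ) - (r : ℂ) ^ N * ee 1 ε)]

/-- The imaginary part of the integrand of `Gm` has constant sign and is bounded below, which makes
`Im Gm` quantitatively monotone in `k`. -/
lemma Gm_im_sub {ε : ℝ} (h : 0 < ce ε) (N : ℕ) {k k' : ℕ} (hk : 1 ≤ k) (hkk : k ≤ k') :
    ce ε / 4 * (1 / k - 1 / k') ≤ |(Gm N ε k).im - (Gm N ε k').im| := by
  have hz := z_ne_one h
  have hcont : ∀ k : ℕ, IntervalIntegrable (fun r : ℝ => r ^ (k - 1) /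
      Complex.normSq (1 - (r : ℂ) ^ N * ee 1 ε)) MeasureTheory.volume 0 1 := by
    intro k
    apply ContinuousOn.intervalIntegrable
    apply ContinuousOn.div (by fun_prop)
    · exact Continuous.continuousOn (Complex.continuous_normSq.comp (by fun_prop))
    · intro r hr
      have := denom_ne_zero hz (r := r) (by simpa using hr) N
      exact fun h => this (Complex.normSq_eq_zero.1 h)
  rw [Gm_im h, Gm_im h, ← mul_sub, abs_mul, ← intervalIntegral.integral_sub (hcont k) (hcont k')]
  have hlow : 1 / 4 * (1 / (k : ℝ) - 1 / k') ≤ ∫ r in (0:ℝ)..1, (r ^ (k - 1) /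
      Complex.normSq (1 - (r : ℂ) ^ N * ee 1 ε) - r ^ (k' - 1) /
      Complex.normSq (1 - (r : ℂ) ^ N * ee 1 ε)) := by
    have : ∫ r in (0:ℝ)..1, 1 / 4 * (r ^ (k - 1) - r ^ (k' - 1)) = 1 / 4 * (1 / k - 1 / k') := by
      rw [intervalIntegral.integral_const_mul, intervalIntegral.integral_sub,
        integral_pow_pred hk, integral_pow_pred (hk.trans hkk)]
      · exact (by fun_prop : Continuous fun r : ℝ => r ^ (k - 1)).intervalIntegrable _ _
      · exact (by fun_prop : Continuous fun r : ℝ => r ^ (k' - 1)).intervalIntegrable _ _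
    rw [← this]
    apply intervalIntegral.integral_mono_on zero_le_one
    · exact (by fun_prop : Continuous fun r : ℝ =>
        1 / 4 * (r ^ (k - 1) - r ^ (k' - 1))).intervalIntegrable _ _
    · exact (hcont k).sub (hcont k')
    · intro r hr
      have h4 := normSq_denom_le (ε := ε) hr N
      have h5 : 0 < Complex.normSq (1 - (r : ℂ) ^ N * ee 1 ε) :=
        Complex.normSq_pos.2 (denom_ne_zero hz hr N)
      have hle : r ^ (k' - 1) ≤ r ^ (k - 1) := pow_le_pow_of_le_one hr.1 hr.2 (by omega)
      rw [← sub_div, one_div, ← div_eq_inv_mul]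
      have h0 : 0 ≤ r ^ (k - 1) - r ^ (k' - 1) := by linarith
      gcongr
  calc ce ε / 4 * (1 / k - 1 / k') = ce ε * (1 / 4 * (1 / k - 1 / k')) := by ring
    _ ≤ _ := by
      unfold ce
      gcongr
      exact hlow.trans (le_abs_self _)

/-! ### Uniform bounds for the sampled logarithm -/

lemma norm_lam_le_one (q : ℤ) : ‖lam q‖ ≤ 1 := by
  unfold lam
  split_ifs with h
  · simp
  · have : (1 : ℝ) ≤ |(q : ℝ)| := by exact_mod_cast Int.one_le_abs h
    rw [norm_neg, Complex.norm_real, Real.norm_of_nonneg (by positivity)]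
    rw [div_le_one (by linarith)]; exact this

lemma norm_lam_of_ne {q : ℤ} (h : q ≠ 0) : ‖lam q‖ = 1 / |(q : ℝ)| := by
  rw [lam, if_neg h, norm_neg, Complex.norm_real, Real.norm_of_nonneg (by positivity)]

lemma norm_lam_le (q : ℤ) : ‖lam q‖ ≤ 2 / jb q := by
  by_cases h : q = 0
  · simp [h, lam, jb]
  · have h1 : (1 : ℝ) ≤ |(q : ℝ)| := by exact_mod_cast Int.one_le_abs h
    rw [norm_lam_of_ne h, div_le_div_iff₀ (by linarith) (jb_pos q)]
    linarith [jb_le_two_mul h]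

lemma jb_le_mul (n l : ℤ) : jb n ≤ jb (n - l) * jb l := by
  have := jb_add_le (n - l) l
  simpa using this

lemma norm_lam_sub_le (n l : ℤ) : ‖lam (n - l)‖ ≤ 2 * jb l / jb n := by
  refine (norm_lam_le _).trans ?_
  rw [div_le_div_iff₀ (jb_pos _) (jb_pos _)]
  nlinarith [jb_le_mul n l]

lemma norm_lam_diff_le (n l : ℤ) : ‖lam (n - l) - lam n‖ ≤ 4 * jb l ^ 2 / jb n ^ 2 := by
  have hn := jb_pos n
  have hl := jb_one_le l
  rw [le_div_iff₀ (by positivity)]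
  by_cases h0 : n = 0
  · subst h0
    have h1 : ‖lam (0 - l) - lam 0‖ ≤ 1 := by
      have := norm_lam_le_one (0 - l)
      simpa [lam] using this
    rw [jb_zero]
    nlinarith
  by_cases h1 : n - l = 0
  · have : n = l := by omega
    subst this
    have h2 : ‖lam (n - n) - lam n‖ ≤ 1 := by
      have := norm_lam_le_one n
      simpa [lam] using this
    nlinarith [sq_nonneg (jb n)]
  · have ha : (1 : ℝ) ≤ |((n - l : ℤ) : ℝ)| := by exact_mod_cast Int.one_le_abs h1
    have hb : (1 : ℝ) ≤ |(n : ℝ)| := by exact_mod_cast Int.one_le_abs h0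
    have hj1 := jb_le_two_mul h1
    have hj2 := jb_le_two_mul h0
    have hd : ‖lam (n - l) - lam n‖ ≤ |(l : ℝ)| / (|((n - l : ℤ) : ℝ)| * |(n : ℝ)|) := by
      rw [lam, if_neg h1, lam, if_neg h0, neg_sub_neg, ← ofReal_sub, Complex.norm_real, Real.norm_eq_abs]
      rw [div_sub_div _ _ (by linarith) (by linarith), abs_div, abs_of_nonneg
        (mul_nonneg (abs_nonneg (n : ℝ)) (abs_nonneg ((n - l : ℤ) : ℝ)))]
      have hnum : |(1 * |((n - l : ℤ) : ℝ)| - |(n : ℝ)| * 1)| ≤ |(l : ℝ)| := by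
        rw [one_mul, mul_one]
        have := abs_abs_sub_abs_le (((n - l : ℤ) : ℝ)) (n : ℝ)
        refine this.trans (le_of_eq ?_)
        push_cast
        rw [show (n : ℝ) - l - n = -l by ring, abs_neg]
      rw [mul_comm |(n : ℝ)| |((n - l : ℤ) : ℝ)|]
      exact div_le_div_of_nonneg_right hnum (mul_nonneg (abs_nonneg _) (abs_nonneg _))
    have hjn := jb_le_mul n l
    have hp : jb n ^ 2 ≤ 4 * jb l * (|((n - l : ℤ) : ℝ)| * |(n : ℝ)|) := by
      have hjl := jb_pos (n - l)
      calc jb n ^ 2 = jb n * jb n := by ring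
        _ ≤ (jb (n - l) * jb l) * (2 * |(n : ℝ)|) := by gcongr
        _ ≤ ((2 * |((n - l : ℤ) : ℝ)|) * jb l) * (2 * |(n : ℝ)|) := by gcongr
        _ = _ := by ring
    calc ‖lam (n - l) - lam n‖ * jb n ^ 2
        ≤ |(l : ℝ)| / (|((n - l : ℤ) : ℝ)| * |(n : ℝ)|) *
          (4 * jb l * (|((n - l : ℤ) : ℝ)| * |(n : ℝ)|)) := by gcongr
      _ = 4 * (|(l : ℝ)| * jb l) := by field_simp
      _ ≤ 4 * jb l ^ 2 := by nlinarith [abs_le_jb l]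

/-! ### Uniform estimates for the discrete symbol of the logarithm -/

lemma Lh_sub_lam_le {ε : ℝ} (h : 0 < ce ε) (N : ℕ) [NeZero N] {q : ℤ} (hq : 4 * |q| ≤ 3 * N) :
    ‖Lh N ε q - lam q‖ ≤ 8 / ce ε / N := by
  have hN : 0 < N := Nat.pos_of_ne_zero (NeZero.ne N)
  have hNr : (0 : ℝ) < N := by exact_mod_cast hN
  have hab := abs_le.1 (show |q| ≤ |q| from le_rfl)
  have hq' : |q| < N := by omega
  rw [Lh_formula (z_ne_one h) N q hq']
  have key : ∀ k : ℕ, N ≤ 4 * k → ‖Gm N ε k‖ ≤ 4 / ce ε / N := by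
    intro k hk
    have hk1 : 1 ≤ k := by omega
    have hkr : (N : ℝ) ≤ 4 * k := by exact_mod_cast hk
    have hk0 : (0 : ℝ) < k := by exact_mod_cast hk1
    refine (norm_Gm_le h N hk1).trans ?_
    rw [div_div, one_div_mul_one_div, div_le_div_iff₀ (by positivity) (by positivity)]
    nlinarith
  have h1 := key (N + q).toNat (by omega)
  have h2 := key (N - q).toNat (by omega)
  calc ‖lam q - Gm N ε (N + q).toNat - (starRingEnd ℂ) (Gm N ε (N - q).toNat) - lam q‖
      = ‖-(Gm N ε (N + q).toNat + (starRingEnd ℂ) (Gm N ε (N - q).toNat))‖ := by congr 1; ring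
    _ ≤ ‖Gm N ε (N + q).toNat‖ + ‖(starRingEnd ℂ) (Gm N ε (N - q).toNat)‖ := by
        rw [norm_neg]; exact norm_add_le _ _
    _ ≤ 4 / ce ε / N + 4 / ce ε / N := by rw [RCLike.norm_conj]; gcongr
    _ = 8 / ce ε / N := by ring

/-- The aliasing remainder `Lh - lam` is Lipschitz in the frequency with constant of order `N⁻²`. -/
lemma Lh_diff_le {ε : ℝ} (h : 0 < ce ε) (N : ℕ) [NeZero N] {q q' : ℤ} (hq : 4 * |q| ≤ 3 * N)
    (hq' : 4 * |q'| ≤ 3 * N) :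
    ‖(Lh N ε q - lam q) - (Lh N ε q' - lam q')‖ ≤ 32 / ce ε * |((q - q' : ℤ) : ℝ)| / N ^ 2 := by
  have hN : 0 < N := Nat.pos_of_ne_zero (NeZero.ne N)
  have hNr : (0 : ℝ) < N := by exact_mod_cast hN
  have hab := abs_le.1 (show |q| ≤ |q| from le_rfl)
  have hab' := abs_le.1 (show |q'| ≤ |q'| from le_rfl)
  have key0 : ∀ k k' : ℕ, N ≤ 4 * k → k ≤ k' →
      ‖Gm N ε k - Gm N ε k'‖ ≤ 16 / ce ε * |(k : ℝ) - k'| / N ^ 2 := by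
    intro k k' hk hkk
    have hk1 : 1 ≤ k := by omega
    have hkr : (N : ℝ) ≤ 4 * k := by exact_mod_cast hk
    have hk0 : (0 : ℝ) < k := by exact_mod_cast hk1
    have hkkr : (k : ℝ) ≤ k' := by exact_mod_cast hkk
    have hk0' : (0 : ℝ) < k' := by linarith
    refine (norm_Gm_sub_le h N hk1 hkk).trans ?_
    rw [abs_of_nonpos (by linarith), div_sub_div _ _ hk0.ne' hk0'.ne']
    rw [div_mul_div_comm, div_mul_eq_mul_div, div_div, div_le_div_iff₀ (by positivity) (by positivity)]
    have h1 : (N : ℝ) ^ 2 ≤ 16 * (k * k') := by nlinarith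
    have h2 : 0 ≤ (k' - k : ℝ) * ce ε := mul_nonneg (by linarith) h.le
    nlinarith
  have key : ∀ k k' : ℕ, N ≤ 4 * k → N ≤ 4 * k' →
      ‖Gm N ε k - Gm N ε k'‖ ≤ 16 / ce ε * |(k : ℝ) - k'| / N ^ 2 := by
    intro k k' hk hk'
    rcases le_total k k' with hkk | hkk
    · exact key0 k k' hk hkk
    · rw [norm_sub_rev, abs_sub_comm]; exact key0 k' k hk' hkk
  have h1 := key (N + q).toNat (N + q').toNat (by omega) (by omega)
  have h2 := key (N - q).toNat (N - q').toNat (by omega) (by omega)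
  have c1 : (((N + q).toNat : ℝ)) = N + q := by
    have : (((N + q).toNat : ℤ)) = N + q := Int.toNat_of_nonneg (by omega)
    exact_mod_cast this
  have c2 : (((N + q').toNat : ℝ)) = N + q' := by
    have : (((N + q').toNat : ℤ)) = N + q' := Int.toNat_of_nonneg (by omega)
    exact_mod_cast this
  have c3 : (((N - q).toNat : ℝ)) = N - q := by
    have : (((N - q).toNat : ℤ)) = N - q := Int.toNat_of_nonneg (by omega)
    exact_mod_cast this
  have c4 : (((N - q').toNat : ℝ)) = N - q' := by
    have : (((N - q').toNat : ℤ)) = N - q' := Int.toNat_of_nonneg (by omega)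
    exact_mod_cast this
  rw [c1, c2, add_sub_add_left_eq_sub] at h1
  rw [c3, c4, sub_sub_sub_cancel_left, abs_sub_comm] at h2
  rw [Lh_formula (z_ne_one h) N q (by omega), Lh_formula (z_ne_one h) N q' (by omega)]
  push_cast
  calc _ = ‖-((Gm N ε (N + q).toNat - Gm N ε (N + q').toNat) +
          (starRingEnd ℂ) (Gm N ε (N - q).toNat - Gm N ε (N - q').toNat))‖ := by
        congr 1; rw [map_sub]; ring
    _ ≤ ‖Gm N ε (N + q).toNat - Gm N ε (N + q').toNat‖ +
          ‖(starRingEnd ℂ) (Gm N ε (N - q).toNat - Gm N ε (N - q').toNat)‖ := by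
        rw [norm_neg]; exact norm_add_le _ _
    _ ≤ 16 / ce ε * |(q : ℝ) - q'| / N ^ 2 + 16 / ce ε * |(q : ℝ) - q'| / N ^ 2 := by
        rw [RCLike.norm_conj]; gcongr
    _ = _ := by ring

lemma exists_rep (N : ℕ) [NeZero N] (q : ℤ) : ∃ p r : ℤ, q = r + p * N ∧ 2 * |r| ≤ N := by
  have hN : 0 < N := Nat.pos_of_ne_zero (NeZero.ne N)
  have h1 := Int.emod_nonneg (q + N / 2) (b := (N : ℤ)) (by omega)
  have h2 := Int.emod_lt_of_pos (q + N / 2) (b := (N : ℤ)) (by omega)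
  have h3 := Int.emod_add_mul_ediv (q + N / 2) (N : ℤ)
  refine ⟨(q + N / 2) / N, q - (q + N / 2) / N * N, by ring, ?_⟩
  rw [mul_comm] at h3
  generalize (q + N / 2) / (N : ℤ) * N = x at *
  rw [← abs_two (α := ℤ), ← abs_mul, abs_le]
  constructor <;> omega

lemma Lh_shift (N : ℕ) [NeZero N] (ε : ℝ) (q p : ℤ) :
    Lh N ε (q + p * N) = Lh N ε q * ee (-p) ε := by
  unfold Lh
  rw [mul_assoc, Finset.sum_mul]
  congr 1
  refine Finset.sum_congr rfl fun j _ => ?_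
  rw [show -(q + p * N) = -q + (-p) * (N : ℤ) by ring, ee_grid_shift', mul_assoc]

lemma Lh_bound {ε : ℝ} (h : 0 < ce ε) (N : ℕ) [NeZero N] (q : ℤ) : ‖Lh N ε q‖ ≤ 9 / ce ε := by
  obtain ⟨p, r, rfl, hr⟩ := exists_rep N q
  have hN : 1 ≤ N := Nat.pos_of_ne_zero (NeZero.ne N)
  have hNr : (1 : ℝ) ≤ N := by exact_mod_cast hN
  rw [Lh_shift, norm_mul, ee_norm, mul_one]
  have h1 := Lh_sub_lam_le h N (q := r) (by omega)
  have h2 := norm_lam_le_one r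
  have h3 : 8 / ce ε / N ≤ 8 / ce ε := div_le_self (by positivity) hNr
  have h4 : 1 ≤ 1 / ce ε := by
    rw [le_div_iff₀ h, one_mul]; exact ce_le_one ε
  have h5 : ‖Lh N ε r‖ ≤ ‖Lh N ε r - lam r‖ + ‖lam r‖ := by
    simpa using norm_add_le (Lh N ε r - lam r) (lam r)
  calc ‖Lh N ε r‖ ≤ 8 / ce ε + 1 / ce ε := by linarith
    _ = 9 / ce ε := by ring

lemma Lh_sub_lam_shift_le {ε : ℝ} (h : 0 < ce ε) (N : ℕ) [NeZero N] {n : ℤ} (hn : 2 * |n| ≤ N)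
    (l : ℤ) : ‖Lh N ε (n - l) - lam (n - l)‖ ≤ 40 / ce ε * jb l / N := by
  have hN : 0 < N := Nat.pos_of_ne_zero (NeZero.ne N)
  have hNr : (0 : ℝ) < N := by exact_mod_cast hN
  have hl1 := jb_one_le l
  by_cases hl : 4 * |l| ≤ N
  · have : |n - l| ≤ |n| + |l| := abs_sub n l
    refine (Lh_sub_lam_le h N (by omega)).trans ?_
    gcongr ?_ / _
    rw [div_mul_eq_mul_div]
    gcongr
    linarith
  · have h1 := Lh_bound h N (n - l)
    have h2 := norm_lam_le_one (n - l)
    have h4 : 1 ≤ 1 / ce ε := by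
      rw [le_div_iff₀ h, one_mul]; exact ce_le_one ε
    have hlr : (N : ℝ) ≤ 4 * |(l : ℝ)| := by
      have : (N : ℤ) ≤ 4 * |l| := by omega
      exact_mod_cast this
    have := abs_le_jb l
    calc _ ≤ ‖Lh N ε (n - l)‖ + ‖lam (n - l)‖ := norm_sub_le _ _
      _ ≤ 9 / ce ε + 1 / ce ε := by linarith
      _ = 10 / ce ε * N / N := by field_simp; norm_num
      _ ≤ 10 / ce ε * (4 * jb l) / N := by gcongr; linarith
      _ = _ := by ring

lemma jb_le_N {N : ℕ} [NeZero N] {n : ℤ} (hn : 2 * |n| ≤ N) : 2 * jb n ≤ 3 * N := by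
  have hN : 1 ≤ N := Nat.pos_of_ne_zero (NeZero.ne N)
  have hNr : (1 : ℝ) ≤ N := by exact_mod_cast hN
  have : 2 * |(n : ℝ)| ≤ N := by exact_mod_cast hn
  unfold jb; linarith

/-- Uniform analogue of `norm_lam_diff_le` for the discrete symbol. -/
lemma Lh_shift_diff_le {ε : ℝ} (h : 0 < ce ε) (N : ℕ) [NeZero N] {n : ℤ} (hn : 2 * |n| ≤ N)
    (l : ℤ) : ‖Lh N ε (n - l) - Lh N ε n‖ ≤ 648 / ce ε * jb l ^ 2 / jb n ^ 2 := by
  have hN : 0 < N := Nat.pos_of_ne_zero (NeZero.ne N)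
  have hNr : (0 : ℝ) < N := by exact_mod_cast hN
  have hl1 := jb_one_le l
  have hn1 := jb_one_le n
  have hjN := jb_le_N hn
  have hNn : 4 * jb n ^ 2 ≤ 9 * (N : ℝ) ^ 2 := by nlinarith
  have hl2 := abs_le_jb l
  by_cases hl : 4 * |l| ≤ N
  · have : |n - l| ≤ |n| + |l| := abs_sub n l
    have h1 := Lh_diff_le h N (q := n - l) (q' := n) (by omega) (by omega)
    have h2 := norm_lam_diff_le n l
    have h4 : 1 ≤ 1 / ce ε := by
      rw [le_div_iff₀ h, one_mul]; exact ce_le_one ε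
    have e1 : |((n - l - n : ℤ) : ℝ)| = |(l : ℝ)| := by
      push_cast; rw [show (n : ℝ) - l - n = -l by ring, abs_neg]
    rw [e1] at h1
    have h3 : 32 / ce ε * |(l : ℝ)| / N ^ 2 ≤ 72 / ce ε * jb l ^ 2 / jb n ^ 2 := by
      have hx : |(l : ℝ)| ≤ jb l ^ 2 := by nlinarith
      have hy : 32 / ce ε * |(l : ℝ)| / N ^ 2 ≤ 32 / ce ε * jb l ^ 2 / N ^ 2 := by gcongr
      refine hy.trans ?_
      rw [div_le_div_iff₀ (by positivity) (by positivity)]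
      have hz : 0 ≤ 8 / ce ε * jb l ^ 2 := by positivity
      calc 32 / ce ε * jb l ^ 2 * jb n ^ 2 = 8 / ce ε * jb l ^ 2 * (4 * jb n ^ 2) := by ring
        _ ≤ 8 / ce ε * jb l ^ 2 * (9 * (N : ℝ) ^ 2) := by gcongr
        _ = _ := by ring
    have h5 : 4 * jb l ^ 2 / jb n ^ 2 ≤ 4 / ce ε * jb l ^ 2 / jb n ^ 2 := by
      have : (4 : ℝ) ≤ 4 / ce ε := by
        calc (4 : ℝ) = 4 * 1 := by ring
          _ ≤ 4 * (1 / ce ε) := by gcongr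
          _ = _ := by ring
      gcongr
    calc ‖Lh N ε (n - l) - Lh N ε n‖
        = ‖((Lh N ε (n - l) - lam (n - l)) - (Lh N ε n - lam n)) + (lam (n - l) - lam n)‖ := by
          congr 1; ring
      _ ≤ 72 / ce ε * jb l ^ 2 / jb n ^ 2 + 4 / ce ε * jb l ^ 2 / jb n ^ 2 :=
          (norm_add_le _ _).trans (add_le_add (h1.trans h3) (h2.trans h5))
      _ = 76 / ce ε * jb l ^ 2 / jb n ^ 2 := by ring
      _ ≤ _ := by gcongr; norm_num
  · have h1 := Lh_bound h N (n - l)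
    have h2 := Lh_bound h N n
    have hlr : (N : ℝ) ≤ 4 * |(l : ℝ)| := by
      have : (N : ℤ) ≤ 4 * |l| := by omega
      exact_mod_cast this
    have hb : jb n ^ 2 ≤ 36 * jb l ^ 2 := by nlinarith
    calc _ ≤ ‖Lh N ε (n - l)‖ + ‖Lh N ε n‖ := norm_sub_le _ _
      _ ≤ 9 / ce ε + 9 / ce ε := by linarith
      _ = 18 / ce ε * jb n ^ 2 / jb n ^ 2 := by field_simp; norm_num
      _ ≤ 18 / ce ε * (36 * jb l ^ 2) / jb n ^ 2 := by gcongr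
      _ = _ := by ring

/-- Lower bound for the discrete symbol of the logarithm; the imaginary part of the aliasing
terms is what keeps it away from `0` for frequencies comparable with `N`. -/
lemma Lh_lower {ε : ℝ} (h : 0 < ce ε) (N : ℕ) [NeZero N] {n : ℤ} (hn : 2 * |n| ≤ N) (h0 : n ≠ 0) :
    ce ε ^ 3 / 512 ≤ ‖Lh N ε n‖ * |(n : ℝ)| := by
  have hN : 0 < N := Nat.pos_of_ne_zero (NeZero.ne N)
  have hNr : (0 : ℝ) < N := by exact_mod_cast hN
  have hc1 := ce_le_one ε
  have key : ∀ q : ℕ, 2 * q ≤ N → q ≠ 0 → ce ε ^ 3 / 512 ≤ ‖Lh N ε q‖ * q := by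
    intro q hq hq0
    have hqr : (0 : ℝ) < q := by exact_mod_cast Nat.pos_of_ne_zero hq0
    have hq2 : 2 * (q : ℝ) ≤ N := by exact_mod_cast hq
    by_cases hs : 16 * (q : ℝ) ≤ ce ε * N
    · have h1 := Lh_sub_lam_le h N (q := q) (by rw [abs_of_nonneg (by omega)]; omega)
      have h2 := norm_lam_of_ne (q := q) (by omega)
      have h3 : ‖lam q‖ ≤ ‖Lh N ε q‖ + ‖Lh N ε q - lam q‖ := by
        have := norm_sub_le (Lh N ε q) (Lh N ε q - lam q)
        simpa using this
      have h4 : 8 / ce ε / N ≤ 1 / 2 / q := by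
        rw [div_div, div_le_div_iff₀ (by positivity) (by positivity)]
        linarith
      rw [h2] at h3
      simp only [Int.cast_natCast, abs_of_pos hqr] at h3
      have h5 : 1 / 2 / (q : ℝ) ≤ ‖Lh N ε q‖ := by
        have : 1 / (q : ℝ) = 1 / 2 / q + 1 / 2 / q := by ring
        linarith
      rw [div_le_iff₀ hqr] at h5
      have : ce ε ^ 3 ≤ 1 := pow_le_one₀ h.le hc1
      linarith
    · push Not at hs
      have him := Lh_formula (z_ne_one h) N q (by rw [abs_of_nonneg (by omega)]; omega)
      have e1 : ((N : ℤ) + q).toNat = N + q := by omega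
      have e2 : ((N : ℤ) - q).toNat = N - q := by omega
      rw [e1, e2] at him
      have hlam : (lam q).im = 0 := by unfold lam; split_ifs <;> simp
      have h6 : (Lh N ε q).im = (Gm N ε (N - q)).im - (Gm N ε (N + q)).im := by
        rw [him]; simp [hlam]; ring
      have h7 := Gm_im_sub h N (k := N - q) (k' := N + q) (by omega) (by omega)
      rw [← h6] at h7
      have h8 := Complex.abs_im_le_norm (Lh N ε q)
      have e3 : ((N - q : ℕ) : ℝ) = N - q := by rw [Nat.cast_sub (by omega)]
      rw [e3] at h7
      push_cast at h7
      have hm : (0 : ℝ) < N - q := by linarith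
      have hpp : (0 : ℝ) < N + q := by linarith
      have h9 : 2 * (q : ℝ) / N ^ 2 ≤ 1 / (N - q : ℝ) - 1 / (N + q) := by
        rw [div_sub_div _ _ hm.ne' hpp.ne', div_le_div_iff₀ (by positivity) (by positivity)]
        nlinarith [sq_nonneg (q : ℝ), mul_pos hqr (mul_pos hqr hqr)]
      have h10 : ce ε / 4 * (2 * (q : ℝ) / N ^ 2) ≤ ‖Lh N ε q‖ :=
        (mul_le_mul_of_nonneg_left h9 (by positivity)).trans (h7.trans h8)
      have h11 : ce ε / 4 * (2 * (q : ℝ) / N ^ 2) * q ≤ ‖Lh N ε q‖ * q := by gcongr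
      refine le_trans ?_ h11
      have h12 : (ce ε * N) ^ 2 ≤ (16 * q) ^ 2 := by gcongr
      have : ce ε / 4 * (2 * (q : ℝ) / N ^ 2) * q = ce ε * q ^ 2 / (2 * N ^ 2) := by
        field_simp; norm_num
      rw [this, div_le_div_iff₀ (by positivity) (by positivity)]
      have := mul_le_mul_of_nonneg_left h12 h.le
      nlinarith
  rcases Int.eq_nat_or_neg n with ⟨q, rfl | rfl⟩
  · have := key q (by simpa [abs_of_nonneg] using (by rw [abs_of_nonneg (by omega)] at hn; omega))
      (by omega)
    simpa using this
  · have := key q (by rw [abs_neg, abs_of_nonneg (by omega)] at hn; omega) (by omega)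
    rw [Lh_neg, RCLike.norm_conj]
    simpa using this

lemma deltah_norm_le (N : ℕ) [NeZero N] (ε : ℝ) (q : ℤ) : ‖deltah N ε q‖ ≤ 1 := by
  rw [deltah_eq]; split_ifs
  · rw [ee_norm]
  · simp

lemma deltah_sub_le (N : ℕ) [NeZero N] (ε : ℝ) {n : ℤ} (hn : 2 * |n| ≤ N) (l : ℤ) :
    ‖deltah N ε (n - l) - (if n = l then 1 else 0)‖ ≤ 4 * jb l ^ 2 / N ^ 2 := by
  have hN : 0 < N := Nat.pos_of_ne_zero (NeZero.ne N)
  have hNr : (0 : ℝ) < N := by exact_mod_cast hN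
  have hpos : 0 ≤ 4 * jb l ^ 2 / (N : ℝ) ^ 2 := by positivity
  by_cases h : n = l
  · subst h
    simp [deltah_eq, ee_zero_left, hpos]
  · rw [if_neg h, sub_zero, deltah_eq]
    split_ifs with hd
    · rw [ee_norm, le_div_iff₀ (by positivity), one_mul]
      have h1 := Int.le_of_dvd (abs_pos.2 (sub_ne_zero.2 h)) ((dvd_abs _ _).2 hd)
      have h2 : |n - l| ≤ |n| + |l| := abs_sub n l
      have h3 : (N : ℤ) ≤ 2 * |l| := by omega
      have h4 : (N : ℝ) ≤ 2 * |(l : ℝ)| := by exact_mod_cast h3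
      have := abs_le_jb l
      nlinarith
    · simpa using hpos

lemma one_div_N_le {N : ℕ} [NeZero N] {n : ℤ} (hn : 2 * |n| ≤ N) :
    1 / (N : ℝ) ≤ 3 / 2 / jb n := by
  have hN : 0 < N := Nat.pos_of_ne_zero (NeZero.ne N)
  have hNr : (0 : ℝ) < N := by exact_mod_cast hN
  have := jb_le_N hn
  rw [div_le_div_iff₀ hNr (jb_pos n)]
  linarith

/-! ### Fourier coefficients of the logarithm -/

lemma ell_eq_of_ne {t : ℝ} (h : Real.sin (Real.pi * t) ≠ 0) :
    ell t = Real.log 4 + 2 * Real.log (Real.sin (Real.pi * t)) := by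
  unfold ell
  rw [Real.log_mul (by norm_num) (by positivity), Real.log_pow]
  norm_num

lemma sin_pos_of_mem {t : ℝ} (h : t ∈ Set.Ioo (0:ℝ) 1) : 0 < Real.sin (Real.pi * t) := by
  have := Real.pi_pos
  exact Real.sin_pos_of_pos_of_lt_pi (mul_pos this h.1) (by nlinarith [h.2])

lemma logsin_intervalIntegrable :
    IntervalIntegrable (fun t : ℝ => Real.log (Real.sin (Real.pi * t)))
      MeasureTheory.volume 0 1 := by
  have := (intervalIntegrable_log_sin (a := 0) (b := Real.pi)).comp_mul_left (c := Real.pi)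
  simpa [Real.pi_ne_zero] using this

lemma ell_ae : (fun t : ℝ => Real.log 4 + 2 * Real.log (Real.sin (Real.pi * t)))
    =ᵐ[MeasureTheory.volume.restrict (Set.uIoc 0 1)] ell := by
  rw [Set.uIoc_of_le zero_le_one, ← MeasureTheory.restrict_Ioo_eq_restrict_Ioc]
  filter_upwards [MeasureTheory.ae_restrict_mem measurableSet_Ioo] with t ht
  exact (ell_eq_of_ne (sin_pos_of_mem ht).ne').symm

lemma ell_intervalIntegrable : IntervalIntegrable ell MeasureTheory.volume 0 1 := by
  have h : IntervalIntegrable (fun t : ℝ => Real.log 4 + 2 * Real.log (Real.sin (Real.pi * t)))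
      MeasureTheory.volume 0 1 :=
    intervalIntegrable_const.add (logsin_intervalIntegrable.const_mul 2)
  exact h.congr_ae ell_ae

lemma ell_mul_intervalIntegrable {f : ℝ → ℂ} (hf : Continuous f) :
    IntervalIntegrable (fun t => (ell t : ℂ) * f t) MeasureTheory.volume 0 1 := by
  have h1 : IntervalIntegrable (fun t => (ell t : ℂ)) MeasureTheory.volume 0 1 :=
    ⟨ell_intervalIntegrable.1.ofReal, ell_intervalIntegrable.2.ofReal⟩
  exact h1.mul_continuousOn hf.continuousOn

lemma integral_ell : ∫ t in (0:ℝ)..1, ell t = 0 := by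
  rw [← intervalIntegral.integral_congr_ae_restrict ell_ae, intervalIntegral.integral_add
    intervalIntegrable_const (logsin_intervalIntegrable.const_mul 2),
    intervalIntegral.integral_const_mul]
  have := intervalIntegral.integral_comp_mul_left (a := 0) (b := 1)
    (fun x => Real.log (Real.sin x)) Real.pi_ne_zero
  simp only [mul_zero, mul_one] at this
  rw [this, integral_log_sin_zero_pi]
  have h4 : Real.log 4 = 2 * Real.log 2 := by
    rw [show (4 : ℝ) = 2 ^ 2 by norm_num, Real.log_pow]; norm_num
  simp only [intervalIntegral.integral_const, smul_eq_mul, h4]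
  field_simp
  ring

lemma ee_one_sub (t : ℝ) : ee 1 t - 1 =
    2 * I * (Real.sin (Real.pi * t) : ℂ) * Complex.exp (I * Real.pi * t) := by
  have h1 : ee 1 t = Complex.exp (I * Real.pi * t) * Complex.exp (I * Real.pi * t) := by
    rw [← Complex.exp_add]; unfold ee; congr 1; push_cast; ring
  have h2 : Complex.exp (-(I * Real.pi * t)) * Complex.exp (I * Real.pi * t) = 1 := by
    rw [← Complex.exp_add]; simp
  rw [ofReal_sin, Complex.sin, h1]
  push_cast
  rw [show -((Real.pi : ℂ) * t) * I = -(I * Real.pi * t) by ring,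
    show ((Real.pi : ℂ) * t) * I = (I * Real.pi * t) by ring]
  linear_combination h2 - (Complex.exp (-(I * Real.pi * t)) * Complex.exp (I * Real.pi * t) - Complex.exp (I * Real.pi * t) ^ 2) * I_sq

lemma ee_one_add (t : ℝ) : ee 1 t + 1 =
    2 * (Real.cos (Real.pi * t) : ℂ) * Complex.exp (I * Real.pi * t) := by
  have h1 : ee 1 t = Complex.exp (I * Real.pi * t) * Complex.exp (I * Real.pi * t) := by
    rw [← Complex.exp_add]; unfold ee; congr 1; push_cast; ring
  have h2 : Complex.exp (-(I * Real.pi * t)) * Complex.exp (I * Real.pi * t) = 1 := by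
    rw [← Complex.exp_add]; simp
  rw [ofReal_cos, Complex.cos, h1]
  push_cast
  rw [show -((Real.pi : ℂ) * t) * I = -(I * Real.pi * t) by ring,
    show ((Real.pi : ℂ) * t) * I = (I * Real.pi * t) by ring]
  linear_combination (-1 : ℂ) * h2

lemma ee_neg_sub_one (q : ℕ) (t : ℝ) :
    ee (-(q : ℤ)) t - 1 = -((ee 1 t - 1) * ∑ j ∈ Finset.range q, ee (-((j : ℤ) + 1)) t) := by
  induction q with
  | zero => simp [ee_zero_left]
  | succ q ih =>
    rw [Finset.sum_range_succ, mul_add, neg_add, ← ih]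
    have : ee (-(q : ℤ)) t = ee 1 t * ee (-((q : ℤ) + 1)) t := by
      rw [← ee_add_left]; congr 1; ring
    push_cast
    rw [this]; ring

lemma ell_hasDerivAt {t : ℝ} (h : Real.sin (Real.pi * t) ≠ 0) :
    HasDerivAt ell (2 * Real.pi * Real.cos (Real.pi * t) / Real.sin (Real.pi * t)) t := by
  have h1 : HasDerivAt (fun t : ℝ => Real.sin (Real.pi * t)) (Real.cos (Real.pi * t) * Real.pi) t := by
    have := ((hasDerivAt_id t).const_mul Real.pi).sin
    exact this.congr_deriv (by simp)
  have h2 := ((h1.pow 2).const_mul 4).log (by simp [h])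
  refine h2.congr_deriv ?_
  simp only [Pi.pow_apply]
  field_simp
  norm_num
  ring

lemma ell_mul_continuous (q : ℕ) : Continuous (fun t : ℝ => (ell t : ℂ) * (ee (-(q : ℤ)) t - 1)) := by
  have key : ∀ t : ℝ, (ell t : ℂ) * (ee (-(q : ℤ)) t - 1) =
      -(((2 * ((2 * Real.sin (Real.pi * t)) * Real.log (2 * Real.sin (Real.pi * t))) : ℝ) : ℂ) * I *
        Complex.exp (I * Real.pi * t) * ∑ j ∈ Finset.range q, ee (-((j : ℤ) + 1)) t) := by
    intro t
    rw [ee_neg_sub_one, ee_one_sub]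
    have : ell t = 2 * Real.log (2 * Real.sin (Real.pi * t)) := by
      unfold ell
      rw [show 4 * Real.sin (Real.pi * t) ^ 2 = (2 * Real.sin (Real.pi * t)) ^ 2 by ring, Real.log_pow]
      norm_num
    rw [this]; push_cast; ring
  simp_rw [key]
  have h1 : Continuous (fun t : ℝ => (2 * Real.sin (Real.pi * t)) * Real.log (2 * Real.sin (Real.pi * t))) :=
    Real.continuous_mul_log.comp (by fun_prop : Continuous fun t : ℝ => 2 * Real.sin (Real.pi * t))
  have h2 : Continuous (fun t : ℝ => ∑ j ∈ Finset.range q, ee (-((j : ℤ) + 1)) t) :=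
    continuous_finsetSum _ fun j _ => ee_continuous _
  have h3 : Continuous (fun t : ℝ => Complex.exp (I * Real.pi * t)) := by fun_prop
  exact ((((continuous_ofReal.comp (h1.const_mul 2)).mul continuous_const).mul h3).mul h2).neg

lemma integral_ell_ee_nat (q : ℕ) (hq : q ≠ 0) :
    ∫ t in (0:ℝ)..1, (ell t : ℂ) * ee (-(q : ℤ)) t = lam q := by
  set S : ℝ → ℂ := fun t => ∑ j ∈ Finset.range q, ee (-((j : ℤ) + 1)) t with hS
  have hScont : Continuous S := continuous_finsetSum _ fun j _ => ee_continuous _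
  have hder : ∀ t ∈ Set.Ioo (0:ℝ) 1, HasDerivAt (fun t : ℝ => (ell t : ℂ) * (ee (-(q : ℤ)) t - 1))
      (-(2 * Real.pi * I) * ((ee 1 t + 1) * S t) - 2 * Real.pi * I * q * ((ell t : ℂ) * ee (-(q : ℤ)) t)) t := by
    intro t ht
    have hs := (sin_pos_of_mem ht).ne'
    have h1 := (ell_hasDerivAt hs).ofReal_comp.mul ((ee_hasDerivAt (-(q : ℤ)) t).sub_const 1)
    refine h1.congr_deriv ?_
    rw [ee_neg_sub_one, ee_one_sub, ee_one_add]
    have hs' : (Real.sin (Real.pi * t) : ℂ) ≠ 0 := by exact_mod_cast hs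
    simp only [ofReal_div, ofReal_mul, ofReal_ofNat, Int.cast_neg, Int.cast_natCast]
    rw [show (∑ j ∈ Finset.range q, ee (-((j : ℤ) + 1)) t) = S t from rfl]
    field_simp
    ring
  have hi1 : Continuous (fun t : ℝ => (ee 1 t + 1) * S t) :=
    ((ee_continuous 1).add continuous_const).mul hScont
  have hi2 := ell_mul_intervalIntegrable (ee_continuous (-(q : ℤ)))
  have hInt : IntervalIntegrable (fun t : ℝ => -(2 * Real.pi * I) * ((ee 1 t + 1) * S t)
      - 2 * Real.pi * I * q * ((ell t : ℂ) * ee (-(q : ℤ)) t)) MeasureTheory.volume 0 1 :=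
    ((hi1.intervalIntegrable 0 1).const_mul _).sub (hi2.const_mul _)
  have hmain := intervalIntegral.integral_eq_sub_of_hasDerivAt_of_le zero_le_one
    (ell_mul_continuous q).continuousOn hder hInt
  rw [intervalIntegral.integral_sub ((hi1.intervalIntegrable 0 1).const_mul _) (hi2.const_mul _),
    intervalIntegral.integral_const_mul, intervalIntegral.integral_const_mul] at hmain
  have hS1 : ∫ t in (0:ℝ)..1, (ee 1 t + 1) * S t = 1 := by
    have e : (fun t => (ee 1 t + 1) * S t) = fun t => ∑ j ∈ Finset.range q,
        (ee (-(j : ℤ)) t + ee (-((j : ℤ) + 1)) t) := by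
      ext t
      rw [hS]
      simp only
      rw [Finset.mul_sum]
      refine Finset.sum_congr rfl fun j _ => ?_
      rw [add_mul, one_mul, ← ee_add_left]
      congr 2; ring
    rw [e, intervalIntegral.integral_finsetSum]
    · have : ∀ j : ℕ, ∫ t in (0:ℝ)..1, (ee (-(j : ℤ)) t + ee (-((j : ℤ) + 1)) t) = if j = 0 then 1 else 0 := by
        intro j
        rw [intervalIntegral.integral_add ((ee_continuous _).intervalIntegrable _ _)
          ((ee_continuous _).intervalIntegrable _ _), ee_integral, ee_integral]
        rw [if_neg (show ¬ (-((j : ℤ) + 1) = 0) by omega)]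
        simp
      simp_rw [this]
      simp [hq]
    · intro j _
      exact ((ee_continuous _).add (ee_continuous _)).intervalIntegrable _ _
  rw [hS1] at hmain
  have e1 : ee (-(q : ℤ)) 1 = 1 := by simpa using ee_int (-(q : ℤ)) 1
  rw [e1, ee_zero_right] at hmain
  simp only [sub_self, mul_zero, mul_one] at hmain
  have hq' : (q : ℂ) ≠ 0 := by exact_mod_cast hq
  have hpi : (2 * Real.pi * I : ℂ) ≠ 0 := by simp [Real.pi_ne_zero]
  have h5 : (q : ℂ) * ∫ t in (0:ℝ)..1, (ell t : ℂ) * ee (-(q : ℤ)) t = -1 := by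
    apply mul_left_cancel₀ hpi
    linear_combination -hmain
  unfold lam
  rw [if_neg (by exact_mod_cast hq)]
  have h6 : |((q : ℤ) : ℝ)| = q := by simp
  rw [h6]
  push_cast
  field_simp
  linear_combination h5

/-- The Fourier coefficients of `log (4 sin² πt)` are `-1/|q|` and `0` for `q = 0`. -/
lemma integral_ell_ee (q : ℤ) : ∫ t in (0:ℝ)..1, (ell t : ℂ) * ee (-q) t = lam q := by
  by_cases h0 : q = 0
  · subst h0
    simp only [neg_zero, ee_zero_left, mul_one, lam, if_true]
    rw [intervalIntegral.integral_ofReal, integral_ell, ofReal_zero]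
  rcases Int.eq_nat_or_neg q with ⟨n, rfl | rfl⟩
  · exact integral_ell_ee_nat n (by omega)
  · rw [lam_neg, ← integral_ell_ee_nat n (by omega)]
    have hl : (starRingEnd ℂ) (lam n) = lam n := by
      unfold lam; split_ifs <;> simp
    have h1 := integral_ell_ee_nat n (by omega)
    rw [h1, ← hl, ← h1, intervalIntegral.integral_of_le zero_le_one,
      intervalIntegral.integral_of_le zero_le_one, ← integral_conj]
    simp only [map_mul, ee_conj, conj_ofReal]

/-! ### One-dimensional Fourier series -/

/-- Rapid decay of a sequence of Fourier coefficients. -/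
def RapD (c : ℤ → ℂ) : Prop := ∀ K : ℕ, ∃ C : ℝ, ∀ n, ‖c n‖ * jb n ^ K ≤ C

/-- The sum of the Fourier series with coefficients `c`. -/
noncomputable def fs (c : ℤ → ℂ) (t : ℝ) : ℂ := ∑' n, c n * ee n t

lemma hasSum_fourier {f : ℝ → ℂ} (hc : Continuous f) (hp : Function.Periodic f 1)
    (hs : Summable (fun n => ‖fc f n‖)) (t : ℝ) : HasSum (fun n => fc f n * ee n t) (f t) := by
  have : Fact ((0:ℝ) < 1) := ⟨one_pos⟩
  let F : C(AddCircle (1:ℝ), ℂ) := ⟨hp.lift, by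
    exact continuous_coinduced_dom.2 hc⟩
  have hF : ∀ x : ℝ, F (x : AddCircle (1:ℝ)) = f x := fun x => hp.lift_coe x
  have hco : ∀ n, fourierCoeff F n = fc f n := by
    intro n
    rw [fourierCoeff_eq_intervalIntegral F n 0, fc_eq]
    simp only [zero_add, div_one, one_smul]
    refine intervalIntegral.integral_congr fun x _ => ?_
    simp only [hF, fourier_coe_apply, smul_eq_mul, ee]
    rw [mul_comm]; simp
  have hsum : Summable (fourierCoeff F) := by
    rw [show fourierCoeff F = fc f from funext hco]
    exact hs.of_norm
  have := has_pointwise_sum_fourier_series_of_summable hsum (t : AddCircle (1:ℝ))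
  simp only [hF, hco, fourier_coe_apply, smul_eq_mul] at this
  refine this.congr_fun fun n => ?_
  simp [ee]

lemma fc_norm_le {f : ℝ → ℂ} {C : ℝ} (h : ∀ t ∈ Set.Icc (0:ℝ) 1, ‖f t‖ ≤ C) (n : ℤ) :
    ‖fc f n‖ ≤ C := by
  rw [fc_eq]
  have := intervalIntegral.norm_integral_le_of_norm_le_const (a := 0) (b := 1) (C := C)
    (f := fun t => f t * ee (-n) t) (fun t ht => by
      rw [norm_mul, ee_norm, mul_one]
      rw [Set.uIoc_of_le zero_le_one] at ht
      exact h t ⟨ht.1.le, ht.2⟩)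
  simpa using this

lemma fc_deriv {f : ℝ → ℂ} (hf : Differentiable ℝ f) (hf' : Continuous (deriv f))
    (hp : Function.Periodic f 1) (n : ℤ) : fc (deriv f) n = 2 * Real.pi * I * n * fc f n := by
  rw [fc_eq, fc_eq]
  have h1 := intervalIntegral.integral_deriv_mul_eq_sub (a := 0) (b := 1) (u := f)
    (u' := deriv f) (v := ee (-n)) (v' := fun t => 2 * Real.pi * I * (-n : ℤ) * ee (-n) t)
    (fun x _ => (hf x).hasDerivAt) (fun x _ => ee_hasDerivAt (-n) x)
    (hf'.intervalIntegrable _ _) ((continuous_const.mul (ee_continuous _)).intervalIntegrable _ _)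
  have e0 : f 1 = f 0 := by simpa using hp 0
  have e1 : ee (-n) 1 = 1 := by simpa using ee_int (-n) 1
  rw [e0, e1, ee_zero_right, sub_self, intervalIntegral.integral_add] at h1
  · have : ∫ x in (0:ℝ)..1, f x * (2 * Real.pi * I * (-n : ℤ) * ee (-n) x) =
        -(2 * Real.pi * I * n) * ∫ x in (0:ℝ)..1, f x * ee (-n) x := by
      rw [← intervalIntegral.integral_const_mul]
      congr 1; ext x; push_cast; ring
    rw [this] at h1
    linear_combination h1
  · exact (hf'.mul (ee_continuous _)).intervalIntegrable _ _
  · exact (hf.continuous.mul (continuous_const.mul (ee_continuous _))).intervalIntegrable _ _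

lemma fc_add {f g : ℝ → ℂ} (hf : Continuous f) (hg : Continuous g) (n : ℤ) :
    fc (fun t => f t + g t) n = fc f n + fc g n := by
  simp only [fc_eq, add_mul]
  exact intervalIntegral.integral_add ((hf.mul (ee_continuous _)).intervalIntegrable _ _)
    ((hg.mul (ee_continuous _)).intervalIntegrable _ _)

lemma fc_const_mul (c : ℂ) (f : ℝ → ℂ) (n : ℤ) : fc (fun t => c * f t) n = c * fc f n := by
  simp only [fc_eq, mul_assoc]
  exact intervalIntegral.integral_const_mul _ _

lemma fc_add_deriv {f : ℝ → ℂ} (hf : Differentiable ℝ f) (hf' : Continuous (deriv f))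
    (hp : Function.Periodic f 1) (n : ℤ) :
    fc (fun t => f t + deriv f t) n = (1 + 2 * Real.pi * I * n) * fc f n := by
  rw [fc_add hf.continuous hf', fc_deriv hf hf' hp]; ring

lemma jb_le_norm (n : ℤ) : jb n ≤ 2 * ‖(1 + 2 * Real.pi * I * n : ℂ)‖ := by
  have h1 := Complex.abs_re_le_norm (1 + 2 * Real.pi * I * n : ℂ)
  have h2 := Complex.abs_im_le_norm (1 + 2 * Real.pi * I * n : ℂ)
  simp at h1 h2
  rw [abs_of_pos Real.pi_pos] at h2
  have h3 : |(n : ℝ)| ≤ 2 * Real.pi * |(n : ℝ)| := by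
    have := Real.pi_gt_three
    nlinarith [abs_nonneg (n : ℝ)]
  unfold jb
  linarith

lemma deriv_periodic {f : ℝ → ℂ} (hp : Function.Periodic f 1) : Function.Periodic (deriv f) 1 := by
  intro x
  have : f = fun y => f (y + 1) := funext fun y => (hp y).symm
  conv_rhs => rw [this]
  rw [deriv_comp_add_const]

lemma continuous_bdd {f : ℝ → ℂ} (hf : Continuous f) : ∃ C, ∀ t ∈ Set.Icc (0:ℝ) 1, ‖f t‖ ≤ C :=
  isCompact_Icc.exists_bound_of_continuousOn hf.continuousOn

lemma fc_rapD {f : ℝ → ℂ} (hf : ContDiff ℝ (⊤ : ℕ∞) f) (hp : Function.Periodic f 1) :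
    RapD (fc f) := by
  intro K
  induction K generalizing f with
  | zero =>
    obtain ⟨C, hC⟩ := continuous_bdd hf.continuous
    exact ⟨C, fun n => by simpa using fc_norm_le hC n⟩
  | succ K ih =>
    have hd := contDiff_infty_iff_deriv.1 hf
    obtain ⟨C, hC⟩ := ih (f := fun t => f t + deriv f t) (hf.add hd.2)
      (fun t => by simp only [hp t, deriv_periodic hp t])
    refine ⟨2 * C, fun n => ?_⟩
    have h1 := hC n
    rw [fc_add_deriv hd.1 hd.2.continuous hp, norm_mul] at h1
    have h2 := jb_le_norm n
    have hj := jb_pos n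
    calc ‖fc f n‖ * jb n ^ (K + 1) = jb n * (‖fc f n‖ * jb n ^ K) := by ring
      _ ≤ (2 * ‖(1 + 2 * Real.pi * I * n : ℂ)‖) * (‖fc f n‖ * jb n ^ K) := by gcongr
      _ = 2 * (‖(1 + 2 * Real.pi * I * n : ℂ)‖ * ‖fc f n‖ * jb n ^ K) := by ring
      _ ≤ 2 * C := by linarith

lemma RapD.summable {c : ℤ → ℂ} (h : RapD c) : Summable (fun n => ‖c n‖) := by
  obtain ⟨C, hC⟩ := h 2
  exact summable_jb_of_le le_rfl hC

lemma RapD.of_le {c d : ℤ → ℂ} (h : RapD c) {A : ℝ} {m : ℕ} (hA : 0 ≤ A)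
    (hd : ∀ n, ‖d n‖ ≤ A * jb n ^ m * ‖c n‖) : RapD d := by
  intro K
  obtain ⟨C, hC⟩ := h (m + K)
  refine ⟨A * C, fun n => ?_⟩
  have hj := jb_pos n
  calc ‖d n‖ * jb n ^ K ≤ (A * jb n ^ m * ‖c n‖) * jb n ^ K := by gcongr; exact hd n
    _ = A * (‖c n‖ * jb n ^ (m + K)) := by ring
    _ ≤ A * C := by gcongr; exact hC n

lemma RapD.deriv {c : ℤ → ℂ} (h : RapD c) : RapD (fun n => 2 * Real.pi * I * n * c n) := by
  refine h.of_le (A := 2 * Real.pi) (m := 1) (by positivity) fun n => ?_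
  rw [norm_mul, norm_mul]
  have : ‖(2 * Real.pi * I : ℂ)‖ = 2 * Real.pi := by simp [abs_of_pos Real.pi_pos]
  rw [this, Complex.norm_intCast, pow_one]
  have := abs_le_jb n
  gcongr

lemma fs_summable {c : ℤ → ℂ} (h : Summable (fun n => ‖c n‖)) (t : ℝ) :
    Summable (fun n => c n * ee n t) := by
  apply Summable.of_norm
  simpa [norm_mul, ee_norm] using h

lemma fs_hasDerivAt {c : ℤ → ℂ} (h : RapD c) (t : ℝ) :
    HasDerivAt (fs c) (fs (fun n => 2 * Real.pi * I * n * c n) t) t := by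
  have h1 := hasDerivAt_tsum (u := fun n => ‖2 * Real.pi * I * n * c n‖) (𝕜 := ℝ)
    (g := fun n t => c n * ee n t) (g' := fun n t => 2 * Real.pi * I * n * c n * ee n t) (y₀ := 0)
    h.deriv.summable (fun n y => ((ee_hasDerivAt n y).const_mul (c n)).congr_deriv (by ring))
    (fun n y => by rw [norm_mul _ (ee n y), ee_norm, mul_one]) (fs_summable h.summable 0) t
  exact h1

lemma fs_deriv {c : ℤ → ℂ} (h : RapD c) :
    deriv (fs c) = fs (fun n => 2 * Real.pi * I * n * c n) :=
  funext fun t => (fs_hasDerivAt h t).deriv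

lemma fs_contDiff {c : ℤ → ℂ} (h : RapD c) : ContDiff ℝ (⊤ : ℕ∞) (fs c) := by
  rw [contDiff_infty]
  intro n
  induction n generalizing c with
  | zero =>
    have : Differentiable ℝ (fs c) := fun t => (fs_hasDerivAt h t).differentiableAt
    exact contDiff_zero.2 this.continuous
  | succ n ih =>
    push_cast
    rw [contDiff_succ_iff_deriv]
    refine ⟨fun t => (fs_hasDerivAt h t).differentiableAt, by simp, ?_⟩
    rw [fs_deriv h]
    exact ih h.deriv

lemma fs_periodic (c : ℤ → ℂ) : Function.Periodic (fs c) 1 := by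
  intro t
  simp only [fs]
  congr 1; ext n
  rw [ee_periodic n t]

lemma fc_fs {c : ℤ → ℂ} (h : Summable (fun n => ‖c n‖)) (m : ℤ) : fc (fs c) m = c m := by
  rw [fc_eq]
  have h1 : HasSum (fun n => ∫ t in (0:ℝ)..1, c n * ee n t * ee (-m) t)
      (∫ t in (0:ℝ)..1, fs c t * ee (-m) t) := by
    refine intervalIntegral.hasSum_integral_of_dominated_convergence (fun n _ => ‖c n‖)
      (fun n => ?_) (fun n => ?_) ?_ ?_ ?_
    · exact ((continuous_const.mul (ee_continuous _)).mul (ee_continuous _)).aestronglyMeasurable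
    · exact Eventually.of_forall fun t _ => by simp [ee_norm]
    · exact Eventually.of_forall fun t _ => h
    · exact intervalIntegrable_const
    · exact Eventually.of_forall fun t _ => (fs_summable h t).hasSum.mul_right _
  have h2 : ∀ n, ∫ t in (0:ℝ)..1, c n * ee n t * ee (-m) t = if n = m then c m else 0 := by
    intro n
    have : (fun t => c n * ee n t * ee (-m) t) = fun t => c n * ee (n - m) t := by
      ext t; rw [mul_assoc, ← ee_add_left]; rfl
    rw [this, intervalIntegral.integral_const_mul, ee_integral]
    by_cases hnm : n = m
    · simp [hnm]
    · simp [hnm, sub_ne_zero.2 hnm]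
  simp_rw [h2] at h1
  exact h1.unique (hasSum_ite_eq m (c m))

/-! ### The Sobolev norm controls Fourier coefficients -/

lemma fc_le_sobNorm {f : ℝ → ℂ} (hf : ContDiff ℝ (⊤ : ℕ∞) f) (hp : Function.Periodic f 1) (n : ℤ) :
    ‖fc f n‖ * jb n ^ 3 ≤ 8 * sobNorm 3 f := by
  have hr : ∀ m : ℤ, |(m : ℝ)| ^ (2 * 3 : ℝ) = |(m : ℝ)| ^ 6 := by
    intro m
    rw [show (2 * 3 : ℝ) = ((6 : ℕ) : ℝ) by norm_num, Real.rpow_natCast]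
  have hsum : Summable (fun m : ℤ => if m = 0 then (0:ℝ) else |(m : ℝ)| ^ (2 * 3 : ℝ) * ‖fc f m‖ ^ 2) := by
    obtain ⟨C, hC⟩ := fc_rapD hf hp 4
    refine Summable.of_nonneg_of_le (fun m => ?_) (fun m => ?_) (summable_jb.mul_left (C ^ 2))
    · split_ifs <;> positivity
    · have hj := jb_pos m
      have h1 : |(m : ℝ)| ^ 6 * ‖fc f m‖ ^ 2 ≤ C ^ 2 * (jb m ^ 2)⁻¹ := by
        rw [← div_eq_mul_inv, le_div_iff₀ (by positivity)]
        have h2 := abs_le_jb m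
        calc |(m : ℝ)| ^ 6 * ‖fc f m‖ ^ 2 * jb m ^ 2 ≤ jb m ^ 6 * ‖fc f m‖ ^ 2 * jb m ^ 2 := by gcongr
          _ = (‖fc f m‖ * jb m ^ 4) ^ 2 := by ring
          _ ≤ C ^ 2 := by gcongr; exact hC m
      split_ifs
      · positivity
      · rw [hr]; exact h1
  have hnn : ∀ m : ℤ, 0 ≤ (if m = 0 then (0:ℝ) else |(m : ℝ)| ^ (2 * 3 : ℝ) * ‖fc f m‖ ^ 2) := by
    intro m; split_ifs <;> positivity
  by_cases h0 : n = 0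
  · subst h0
    have : ‖fc f 0‖ ≤ sobNorm 3 f := by
      unfold sobNorm
      apply Real.le_sqrt_of_sq_le
      have := tsum_nonneg (L := .unconditional ℤ) hnn
      linarith
    rw [jb_zero]
    nlinarith [norm_nonneg (fc f 0)]
  · have h1 := hsum.le_tsum n (fun m _ => hnn m)
    rw [if_neg h0, hr] at h1
    have h2 : |(n : ℝ)| ^ 3 * ‖fc f n‖ ≤ sobNorm 3 f := by
      unfold sobNorm
      apply Real.le_sqrt_of_sq_le
      have : 0 ≤ ‖fc f 0‖ ^ 2 := by positivity
      calc (|(n : ℝ)| ^ 3 * ‖fc f n‖) ^ 2 = |(n : ℝ)| ^ 6 * ‖fc f n‖ ^ 2 := by ring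
        _ ≤ _ := by linarith
    have h3 := jb_le_two_mul h0
    have hj := jb_pos n
    calc ‖fc f n‖ * jb n ^ 3 ≤ ‖fc f n‖ * (2 * |(n : ℝ)|) ^ 3 := by gcongr
      _ = 8 * (|(n : ℝ)| ^ 3 * ‖fc f n‖) := by ring
      _ ≤ _ := by linarith

/-! ### Two-dimensional Fourier series of smooth biperiodic kernels -/

/-- Rapid decay of a doubly indexed family of Fourier coefficients. -/
def Rap (β : ℤ → ℤ → ℂ) : Prop := ∀ K : ℕ, ∃ C : ℝ, ∀ k l, ‖β k l‖ * (jb k * jb l) ^ K ≤ C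

/-- The two-dimensional Fourier coefficients of a kernel. -/
noncomputable def coef (B : ℝ → ℝ → ℂ) (k l : ℤ) : ℂ := fc (fun u => fc (fun s => B s u) k) l

/-- The operator `1 + ∂ₛ`, which multiplies `coef B k l` by `1 + 2πik`. -/
noncomputable def T1 (B : ℝ → ℝ → ℂ) (s u : ℝ) : ℂ := B s u + deriv (fun s => B s u) s

lemma _root_.SPK.cont {B : ℝ → ℝ → ℂ} (hB : SPK B) : Continuous (fun p : ℝ × ℝ => B p.1 p.2) :=
  hB.1.continuous

lemma _root_.SPK.slice {B : ℝ → ℝ → ℂ} (hB : SPK B) (u : ℝ) : ContDiff ℝ (⊤ : ℕ∞) (fun s => B s u) :=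
  hB.1.comp (contDiff_id.prodMk contDiff_const)

lemma _root_.SPK.flip {B : ℝ → ℝ → ℂ} (hB : SPK B) : SPK (fun s u => B u s) :=
  ⟨hB.1.comp (contDiff_snd.prodMk contDiff_fst), fun s t => hB.2.2 t s, fun s t => hB.2.1 t s⟩

lemma _root_.SPK.T1 {B : ℝ → ℝ → ℂ} (hB : SPK B) : SPK (T1 B) := by
  refine ⟨?_, fun s t => ?_, fun s t => ?_⟩
  · refine hB.1.add ?_
    have h1 : ∀ p : ℝ × ℝ, deriv (fun s => B s p.2) p.1 =
        fderiv ℝ (fun p : ℝ × ℝ => B p.1 p.2) p (1, 0) := by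
      intro p
      have hd := (hB.1.differentiable (by simp) p).hasFDerivAt
      have h2 : HasDerivAt (fun s : ℝ => (s, p.2)) ((1:ℝ), (0:ℝ)) p.1 :=
        (hasDerivAt_id p.1).prodMk (hasDerivAt_const p.1 p.2)
      exact (hd.comp_hasDerivAt p.1 h2).deriv
    have h3 : ContDiff ℝ (⊤ : ℕ∞) (fun p : ℝ × ℝ => fderiv ℝ (fun p : ℝ × ℝ => B p.1 p.2) p (1, 0)) :=
      (hB.1.fderiv_right (m := (⊤ : ℕ∞)) (by simp)).clm_apply contDiff_const
    simpa only [h1] using h3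
  · unfold Nystrom.T1
    rw [hB.2.1]
    have hp : Function.Periodic (fun s => B s t) 1 := fun x => hB.2.1 x t
    rw [deriv_periodic hp s]
  · unfold Nystrom.T1
    simp only [hB.2.2]

lemma fc_param_continuous {B : ℝ → ℝ → ℂ} (hB : SPK B) (k : ℤ) :
    Continuous (fun u => fc (fun s => B s u) k) := by
  simp only [fc_eq]
  refine intervalIntegral.continuous_parametric_intervalIntegral_of_continuous'
    (f := fun u s => B s u * ee (-k) s) ?_ 0 1
  exact (hB.cont.comp (continuous_snd.prodMk continuous_fst)).mul
    ((ee_continuous _).comp continuous_snd)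

lemma fc_param_periodic {B : ℝ → ℝ → ℂ} (hB : SPK B) (k : ℤ) :
    Function.Periodic (fun u => fc (fun s => B s u) k) 1 := by
  intro u; simp only [hB.2.2]

lemma coef_T1 {B : ℝ → ℝ → ℂ} (hB : SPK B) (k l : ℤ) :
    coef (T1 B) k l = (1 + 2 * Real.pi * I * k) * coef B k l := by
  unfold coef
  rw [← fc_const_mul]
  congr 1
  ext u
  have h := hB.slice u
  exact fc_add_deriv (h.differentiable (by simp)) (h.continuous_deriv (by simp))
    (fun x => hB.2.1 x u) k

lemma coef_flip {B : ℝ → ℝ → ℂ} (hB : SPK B) (k l : ℤ) :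
    coef (fun s u => B u s) k l = coef B l k := by
  unfold coef
  simp only [fc_eq, ← intervalIntegral.integral_mul_const]
  rw [MeasureTheory.intervalIntegral_intervalIntegral_swap]
  · congr 1; ext x; congr 1; ext y; ring
  · refine (Continuous.integrableOn_Icc (a := ((0:ℝ),(0:ℝ))) (b := ((1:ℝ),(1:ℝ))) ?_).mono_set ?_
    · have := hB.cont
      exact ((this.comp (continuous_fst.prodMk continuous_snd)).mul
        ((ee_continuous _).comp continuous_snd)).mul ((ee_continuous _).comp continuous_fst)
    · rw [Set.uIoc_of_le zero_le_one, Set.Icc_prod_eq]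
      exact Set.prod_mono Set.Ioc_subset_Icc_self Set.Ioc_subset_Icc_self

lemma coef_rap {B : ℝ → ℝ → ℂ} (hB : SPK B) : Rap (coef B) := by
  intro K
  induction K generalizing B with
  | zero =>
    obtain ⟨C, hC⟩ := (isCompact_Icc (a := ((0:ℝ),(0:ℝ))) (b := ((1:ℝ),(1:ℝ)))).exists_bound_of_continuousOn
      hB.cont.continuousOn
    refine ⟨C, fun k l => ?_⟩
    rw [pow_zero, mul_one]
    refine fc_norm_le (fun u hu => fc_norm_le (fun s hs => ?_) k) l
    exact hC (s, u) ⟨⟨hs.1, hu.1⟩, ⟨hs.2, hu.2⟩⟩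
  | succ K ih =>
    obtain ⟨C, hC⟩ := ih (hB.T1.flip.T1)
    refine ⟨4 * C, fun k l => ?_⟩
    have h1 := hC l k
    rw [coef_T1 hB.T1.flip, coef_flip hB.T1, coef_T1 hB, norm_mul, norm_mul] at h1
    have hk := jb_le_norm k
    have hl := jb_le_norm l
    have pk := jb_pos k
    have pl := jb_pos l
    calc ‖coef B k l‖ * (jb k * jb l) ^ (K + 1)
        = jb k * jb l * (‖coef B k l‖ * (jb k * jb l) ^ K) := by ring
      _ ≤ (2 * ‖(1 + 2 * Real.pi * I * k : ℂ)‖) * (2 * ‖(1 + 2 * Real.pi * I * l : ℂ)‖) *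
          (‖coef B k l‖ * (jb k * jb l) ^ K) := by gcongr
      _ = 4 * (‖(1 + 2 * Real.pi * I * l : ℂ)‖ * (‖(1 + 2 * Real.pi * I * k : ℂ)‖ * ‖coef B k l‖)
          * (jb l * jb k) ^ K) := by ring
      _ ≤ 4 * C := by linarith

lemma summable_jb_prod : Summable (fun p : ℤ × ℤ => (jb p.1 ^ 2)⁻¹ * (jb p.2 ^ 2)⁻¹) :=
  summable_jb.mul_of_nonneg summable_jb (fun n => by have := jb_pos n; positivity)
    (fun n => by have := jb_pos n; positivity)

lemma Rap.summable {β : ℤ → ℤ → ℂ} (h : Rap β) : Summable (fun p : ℤ × ℤ => ‖β p.1 p.2‖) := by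
  obtain ⟨C, hC⟩ := h 2
  refine Summable.of_nonneg_of_le (fun _ => norm_nonneg _) (fun p => ?_)
    (summable_jb_prod.mul_left C)
  have h1 := jb_pos p.1
  have h2 := jb_pos p.2
  have := hC p.1 p.2
  rw [← mul_inv, ← mul_pow, ← div_eq_mul_inv, le_div_iff₀ (by positivity)]
  exact this

lemma Rap.bound_one {β : ℤ → ℤ → ℂ} (h : Rap β) (K J : ℕ) :
    ∃ C, 0 ≤ C ∧ ∀ k l, ‖β k l‖ ≤ C / jb k ^ K / jb l ^ J := by
  obtain ⟨C, hC⟩ := h (max K J)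
  have h0 : 0 ≤ C := le_trans (by have := jb_pos 0; positivity) (hC 0 0)
  refine ⟨C, h0, fun k l => ?_⟩
  have h1 := jb_pos k
  have h2 := jb_pos l
  rw [div_div, le_div_iff₀ (by positivity)]
  refine le_trans ?_ (hC k l)
  rw [mul_pow]
  have := pow_le_pow_right₀ (jb_one_le k) (le_max_left K J)
  have := pow_le_pow_right₀ (jb_one_le l) (le_max_right K J)
  gcongr

lemma Rap.fiber_summable {β : ℤ → ℤ → ℂ} (h : Rap β) (k : ℤ) : Summable (fun l => ‖β k l‖) :=
  h.summable.prod_factor k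

lemma hasSum_coef_inner {B : ℝ → ℝ → ℂ} (hB : SPK B) (k : ℤ) (u : ℝ) :
    HasSum (fun l => coef B k l * ee l u) (fc (fun s => B s u) k) :=
  hasSum_fourier (fc_param_continuous hB k) (fc_param_periodic hB k)
    ((coef_rap hB).fiber_summable k) u

lemma hasSum_coef {B : ℝ → ℝ → ℂ} (hB : SPK B) (s u : ℝ) :
    HasSum (fun p : ℤ × ℤ => coef B p.1 p.2 * ee p.1 s * ee p.2 u) (B s u) := by
  have hs : Summable (fun p : ℤ × ℤ => coef B p.1 p.2 * ee p.1 s * ee p.2 u) := by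
    apply Summable.of_norm
    simpa [norm_mul, ee_norm] using (coef_rap hB).summable
  have h1 := hs.hasSum.prod_fiberwise (g := fun k => fc (fun s => B s u) k * ee k s) (fun k => by
    refine ((hasSum_coef_inner hB k u).mul_right (ee k s)).congr_fun ?_
    intro l; ring)
  have h2 : HasSum (fun k => fc (fun s => B s u) k * ee k s) (B s u) :=
    hasSum_fourier (hB.slice u).continuous (fun x => hB.2.1 x u)
      (fc_rapD (hB.slice u) (fun x => hB.2.1 x u)).summable s
  rw [← h1.unique h2]
  exact hs.hasSum

/-- The kernel in the variables `(s, u) = (s, s - t)`. -/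
lemma _root_.SPK.shear {A : ℝ → ℝ → ℂ} (hA : SPK A) : SPK (fun s u => A s (s - u)) := by
  refine ⟨hA.1.comp (contDiff_fst.prodMk (contDiff_fst.sub contDiff_snd)), fun s t => ?_, fun s t => ?_⟩
  · beta_reduce
    rw [show s + 1 - t = (s - t) + 1 by ring, hA.2.2, hA.2.1]
  · beta_reduce
    have := hA.2.2 s (s - (t + 1))
    rw [← this]; congr 1; ring

lemma _root_.SPK.const_mul {A : ℝ → ℝ → ℂ} (hA : SPK A) (c : ℂ) : SPK (fun s u => c * A s u) :=
  ⟨contDiff_const.mul hA.1, fun s t => by simp only [hA.2.1], fun s t => by simp only [hA.2.2]⟩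

lemma _root_.SPK.sub {A B : ℝ → ℝ → ℂ} (hA : SPK A) (hB : SPK B) : SPK (fun s u => A s u - B s u) :=
  ⟨hA.1.sub hB.1, fun s t => by simp only [hA.2.1, hB.2.1], fun s t => by simp only [hA.2.2, hB.2.2]⟩

/-- If `B(s, 0)` is constant, the row sums of the coefficients vanish except in row `0`. -/
lemma coef_row_sum {B : ℝ → ℝ → ℂ} (hB : SPK B) {c : ℂ} (hc : ∀ s, B s 0 = c) (k : ℤ) :
    HasSum (fun l => coef B k l) (if k = 0 then c else 0) := by
  have h := hasSum_coef_inner hB k 0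
  simp only [ee_zero_right, mul_one, hc] at h
  convert h using 1
  rw [fc_eq, intervalIntegral.integral_const_mul, ee_integral]
  by_cases hk : k = 0 <;> simp [hk]

/-! ### Symbols of the logarithmic operator and of its quadrature discretization -/

/-- Fourier coefficients of the factor of `ell (s - t)` in the kernel, in the variables `(s, s - t)`. -/
noncomputable def bet (A : ℝ → ℝ → ℂ) : ℤ → ℤ → ℂ :=
  coef (fun s u => I / (2 * Real.pi) * A s (s - u))

/-- Fourier coefficients of the smooth part of the kernel, in the variables `(s, s - t)`; the
constant `log 4` compensates for the normalization of `ell`. -/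
noncomputable def kap (A K : ℝ → ℝ → ℂ) : ℤ → ℤ → ℂ :=
  coef (fun s u => K s (s - u) - (I / (2 * Real.pi) * Real.log 4) * A s (s - u))

/-- The symbol of the integral operator: it maps `e_n` to `∑ₖ vc k n e_{n+k}`. -/
noncomputable def vc (β κ : ℤ → ℤ → ℂ) (k n : ℤ) : ℂ :=
  ∑' l, (β k l * lam (n - l) + κ k l * (if n = l then 1 else 0))

/-- The symbol of the discretized operator on the shifted grid. -/
noncomputable def vd (N : ℕ) (ε : ℝ) (β κ : ℤ → ℤ → ℂ) (k n : ℤ) : ℂ :=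
  ∑' l, (β k l * Lh N ε (n - l) + κ k l * deltah N ε (n - l))

/-- The action of a symbol on a sequence of Fourier coefficients. -/
noncomputable def act (v : ℤ → ℤ → ℂ) (c : ℤ → ℂ) (m : ℤ) : ℂ := ∑' k, v k (m - k) * c (m - k)

lemma bet_rap {A : ℝ → ℝ → ℂ} (hA : SPK A) : Rap (bet A) := coef_rap (hA.shear.const_mul _)

lemma kap_rap {A K : ℝ → ℝ → ℂ} (hA : SPK A) (hK : SPK K) : Rap (kap A K) :=
  coef_rap (hK.shear.sub (hA.shear.const_mul _))

lemma bet_row_sum {A : ℝ → ℝ → ℂ} (hA : SPK A) {α : ℂ} (h : ∀ s, A s s = α) (k : ℤ) :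
    HasSum (fun l => bet A k l) (if k = 0 then I / (2 * Real.pi) * α else 0) :=
  coef_row_sum (hA.shear.const_mul _) (fun s => by simp [h]) k

/-- Fourier expansion of the logarithmic kernel off the diagonal, in the variables `(s, u = s - t)`. -/
lemma ker_hasSum {A K : ℝ → ℝ → ℂ} (hA : SPK A) (hK : SPK K) (s : ℝ) {u : ℝ}
    (hu : Real.sin (Real.pi * u) ≠ 0) :
    HasSum (fun p : ℤ × ℤ => (bet A p.1 p.2 * ell u + kap A K p.1 p.2) * ee p.1 s * ee p.2 u)
      (logKer A K s (s - u)) := by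
  have h1 := hasSum_coef (hA.shear.const_mul (I / (2 * Real.pi))) s u
  have h2 := hasSum_coef (hK.shear.sub (hA.shear.const_mul (I / (2 * Real.pi) * Real.log 4))) s u
  have h3 := (h1.mul_right (ell u : ℂ)).add h2
  have h4 : logKer A K s (s - u) = I / (2 * Real.pi) * A s (s - u) * (ell u : ℂ) +
      (K s (s - u) - (I / (2 * Real.pi) * Real.log 4) * A s (s - u)) := by
    unfold logKer
    rw [show s - (s - u) = u by ring]
    unfold ell
    rw [Real.log_mul (by norm_num) (by positivity)]
    push_cast
    ring
  rw [h4]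
  refine h3.congr_fun fun p => ?_
  unfold bet kap; ring

lemma logKer_periodic_right {A K : ℝ → ℝ → ℂ} (hA : SPK A) (hK : SPK K) (s : ℝ) :
    Function.Periodic (fun t => logKer A K s t) 1 := by
  intro t
  simp only [logKer, hA.2.2, hK.2.2]
  rw [show Real.pi * (s - (t + 1)) = Real.pi * (s - t) - Real.pi by ring, Real.sin_sub_pi]
  simp

lemma Vop_shift {V : ℝ → ℝ → ℂ} {φ : ℝ → ℂ} (s : ℝ) (hV : Function.Periodic (fun t => V s t) 1)
    (hφ : Function.Periodic φ 1) :
    Vop V φ s = ∫ u in (0:ℝ)..1, V s (s - u) * φ (s - u) := by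
  have h := intervalIntegral.integral_comp_sub_left (a := 0) (b := 1) (fun t => V s t * φ t) s
  rw [h]
  have hp : Function.Periodic (fun t => V s t * φ t) 1 := hV.mul hφ
  have := hp.intervalIntegral_add_eq 0 (s - 1)
  simp only [zero_add, sub_add_cancel] at this
  rw [sub_zero, ← this]
  rfl

lemma lam_integral (b κ' : ℂ) (n l : ℤ) :
    ∫ u in (0:ℝ)..1, (b * ell u + κ') * ee l u * ee (-n) u =
      b * lam (n - l) + κ' * (if n = l then 1 else 0) := by
  have h1 : ∀ u : ℝ, (b * ell u + κ') * ee l u * ee (-n) u =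
      b * ((ell u : ℂ) * ee (-(n - l)) u) + κ' * ee (-(n - l)) u := by
    intro u
    rw [show -(n - l) = l + -n by ring, ee_add_left]; ring
  simp only [h1]
  have hi : Continuous (fun u => κ' * ee (-(n - l)) u) := continuous_const.mul (ee_continuous _)
  rw [intervalIntegral.integral_add ((ell_mul_intervalIntegrable (ee_continuous _)).const_mul b)
    (hi.intervalIntegrable _ _),
    intervalIntegral.integral_const_mul, intervalIntegral.integral_const_mul, integral_ell_ee,
    ee_integral]
  have : (-(n - l) = 0) ↔ n = l := by omega
  simp only [this]

lemma hasSum_mul_prod {ι ι' : Type*} {f : ι → ℂ} {g : ι' → ℂ} {a b : ℂ} (hf : HasSum f a)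
    (hg : HasSum g b) : HasSum (fun x : ι × ι' => f x.1 * g x.2) (a * b) :=
  hf.mul hg (summable_mul_of_summable_norm hf.summable.norm hg.summable.norm)

lemma Vop_hasSum_triple {A K : ℝ → ℝ → ℂ} (hA : SPK A) (hK : SPK K) {c : ℤ → ℂ}
    (hc : Summable (fun n => ‖c n‖)) (s : ℝ) :
    HasSum (fun x : (ℤ × ℤ) × ℤ => (bet A x.1.1 x.1.2 * lam (x.2 - x.1.2) +
      kap A K x.1.1 x.1.2 * (if x.2 = x.1.2 then 1 else 0)) * c x.2 * ee (x.1.1 + x.2) s)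
      (Vop (logKer A K) (fs c) s) := by
  rw [Vop_shift s (logKer_periodic_right hA hK s) (fs_periodic c)]
  have hb := (bet_rap hA).summable
  have hk := (kap_rap hA hK).summable
  have hsum3 : ∀ u : ℝ, Summable (fun x : (ℤ × ℤ) × ℤ =>
      (‖bet A x.1.1 x.1.2‖ * |ell u| + ‖kap A K x.1.1 x.1.2‖) * ‖c x.2‖) := fun u =>
    Summable.mul_of_nonneg (f := fun p : ℤ × ℤ => ‖bet A p.1 p.2‖ * |ell u| + ‖kap A K p.1 p.2‖)
      (g := fun n => ‖c n‖) ((hb.mul_right _).add hk) hc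
      (fun p => by positivity) (fun n => norm_nonneg _)
  have key := intervalIntegral.hasSum_integral_of_dominated_convergence
    (μ := MeasureTheory.volume) (a := 0) (b := 1)
    (F := fun (x : (ℤ × ℤ) × ℤ) (u : ℝ) =>
      ((bet A x.1.1 x.1.2 * ell u + kap A K x.1.1 x.1.2) * ee x.1.1 s * ee x.1.2 u) *
        (c x.2 * ee x.2 (s - u)))
    (f := fun u => logKer A K s (s - u) * fs c (s - u))
    (fun x u => (‖bet A x.1.1 x.1.2‖ * |ell u| + ‖kap A K x.1.1 x.1.2‖) * ‖c x.2‖) ?_ ?_ ?_ ?_ ?_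
  · refine key.congr_fun fun x => ?_
    have : ∀ u : ℝ, (bet A x.1.1 x.1.2 * ell u + kap A K x.1.1 x.1.2) * ee x.1.1 s * ee x.1.2 u *
        (c x.2 * ee x.2 (s - u)) = (c x.2 * ee (x.1.1 + x.2) s) *
        ((bet A x.1.1 x.1.2 * ell u + kap A K x.1.1 x.1.2) * ee x.1.2 u * ee (-x.2) u) := by
      intro u
      rw [ee_sub_right, ee_add_left]; ring
    simp only [this]
    rw [intervalIntegral.integral_const_mul, lam_integral]
    ring
  · intro x
    have hm : MeasureTheory.AEStronglyMeasurable (fun u => (ell u : ℂ))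
        (MeasureTheory.volume.restrict (Set.uIoc 0 1)) := by
      have := ell_intervalIntegrable.1.ofReal (𝕜 := ℂ)
      rw [Set.uIoc_of_le zero_le_one]
      exact this.aestronglyMeasurable
    refine ((((hm.const_mul _).add_const _).mul_const _).mul
      (ee_continuous _).aestronglyMeasurable).mul ?_
    exact (continuous_const.mul ((ee_continuous _).comp
      (continuous_const.sub continuous_id))).aestronglyMeasurable
  · intro x
    refine Eventually.of_forall fun u _ => ?_
    rw [norm_mul, norm_mul, norm_mul, norm_mul, ee_norm, ee_norm, ee_norm, mul_one, mul_one, mul_one]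
    gcongr
    refine (norm_add_le _ _).trans ?_
    rw [norm_mul, Complex.norm_real, Real.norm_eq_abs]
  · refine Eventually.of_forall fun u _ => ?_
    exact hsum3 u
  · have : ∀ u, ∑' x : (ℤ × ℤ) × ℤ, (‖bet A x.1.1 x.1.2‖ * |ell u| + ‖kap A K x.1.1 x.1.2‖) * ‖c x.2‖
        = ((∑' p : ℤ × ℤ, ‖bet A p.1 p.2‖) * |ell u| + ∑' p : ℤ × ℤ, ‖kap A K p.1 p.2‖) * ∑' n, ‖c n‖ := by
      intro u
      have hs := ((hb.mul_right |ell u|).add hk)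
      rw [← tsum_mul_right, ← Summable.tsum_add (hb.mul_right _) hk,
        Summable.tsum_mul_tsum hs hc (hsum3 u)]
    simp only [this]
    exact ((ell_intervalIntegrable.abs.const_mul _).add intervalIntegrable_const).mul_const _
  · have h01 : ∀ᵐ u : ℝ, u ≠ 1 := by
      rw [MeasureTheory.ae_iff]; simp
    filter_upwards [h01] with u hu1 hu
    rw [Set.uIoc_of_le zero_le_one] at hu
    have hs := (sin_pos_of_mem ⟨hu.1, lt_of_le_of_ne hu.2 hu1⟩).ne'
    have e1 := ker_hasSum hA hK s hs
    have e2 : HasSum (fun n => c n * ee n (s - u)) (fs c (s - u)) := (fs_summable hc (s - u)).hasSum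
    have e3 := hasSum_mul_prod e1 e2
    exact e3

/-! ### Estimates for the symbols -/

/-- The constant `∑ₗ (1 + |l|)⁻²`. -/
noncomputable def S2 : ℝ := ∑' l : ℤ, (jb l ^ 2)⁻¹

lemma S2_pos : 0 < S2 :=
  summable_jb.tsum_pos (fun n => by have := jb_pos n; positivity) 0 (by simp [jb_zero])

lemma norm_tsum_jb_le {f : ℤ → ℂ} {D : ℝ} (h : ∀ l, ‖f l‖ ≤ D * (jb l ^ 2)⁻¹) :
    ‖∑' l, f l‖ ≤ D * S2 := by
  refine tsum_of_norm_bounded (summable_jb.hasSum.mul_left D) h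

lemma summable_of_jb_le {f : ℤ → ℂ} {D : ℝ} (h : ∀ l, ‖f l‖ ≤ D * (jb l ^ 2)⁻¹) : Summable f :=
  Summable.of_norm_bounded (summable_jb.mul_left D) h

lemma vc_fiber_summable {β κ : ℤ → ℤ → ℂ} (hβ : Rap β) (hκ : Rap κ) (k n : ℤ) :
    Summable (fun l => β k l * lam (n - l) + κ k l * (if n = l then 1 else 0)) := by
  refine Summable.of_norm_bounded ((hβ.fiber_summable k).add (hκ.fiber_summable k)) fun l => ?_
  refine (norm_add_le _ _).trans (add_le_add ?_ ?_)
  · rw [norm_mul]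
    exact mul_le_of_le_one_right (norm_nonneg _) (norm_lam_le_one _)
  · rw [norm_mul]
    refine mul_le_of_le_one_right (norm_nonneg _) ?_
    split_ifs <;> simp

lemma vd_fiber_summable {β κ : ℤ → ℤ → ℂ} (hβ : Rap β) (hκ : Rap κ) (k n : ℤ) {N : ℕ} [NeZero N]
    {ε : ℝ} (h : 0 < ce ε) :
    Summable (fun l => β k l * Lh N ε (n - l) + κ k l * deltah N ε (n - l)) := by
  refine Summable.of_norm_bounded (((hβ.fiber_summable k).mul_right (9 / ce ε)).add
    (hκ.fiber_summable k)) fun l => ?_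
  refine (norm_add_le _ _).trans (add_le_add ?_ ?_)
  · rw [norm_mul]
    exact mul_le_mul_of_nonneg_left (Lh_bound h N _) (norm_nonneg _)
  · rw [norm_mul]
    exact mul_le_of_le_one_right (norm_nonneg _) (deltah_norm_le N ε _)

/-- The integral operator acts on Fourier coefficients through its symbol `vc`. -/
lemma Vop_fs {A K : ℝ → ℝ → ℂ} (hA : SPK A) (hK : SPK K) {c : ℤ → ℂ}
    (hc : Summable (fun n => ‖c n‖)) (s : ℝ) :
    HasSum (fun m => act (vc (bet A) (kap A K)) c m * ee m s) (Vop (logKer A K) (fs c) s) := by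
  let e : ℤ × (ℤ × ℤ) ≃ (ℤ × ℤ) × ℤ :=
    { toFun := fun x => (x.2, x.1 - x.2.1)
      invFun := fun y => (y.2 + y.1.1, y.1)
      left_inv := fun x => by simp
      right_inv := fun y => by simp }
  have h1 := (e.hasSum_iff).2 (Vop_hasSum_triple hA hK hc s)
  refine h1.prod_fiberwise fun m => ?_
  have h2 := h1.summable.prod_factor m
  have h3 := h2.hasSum.prod_fiberwise
    (g := fun k => vc (bet A) (kap A K) k (m - k) * c (m - k) * ee m s) (fun k => by
      have := ((vc_fiber_summable (bet_rap hA) (kap_rap hA hK) k (m - k)).hasSum.mul_right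
        (c (m - k) * ee m s))
      rw [mul_assoc]
      refine this.congr_fun fun l => ?_
      simp only [e, Function.comp, Equiv.coe_fn_mk]
      rw [show k + (m - k) = m by ring]
      ring)
  have h4 : ∑' k, vc (bet A) (kap A K) k (m - k) * c (m - k) * ee m s =
      act (vc (bet A) (kap A K)) c m * ee m s := tsum_mul_right
  rw [← h4, h3.tsum_eq]
  exact h2.hasSum

lemma vc_le {β κ : ℤ → ℤ → ℂ} (hβ : Rap β) (hκ : Rap κ) (K : ℕ) :
    ∃ C, 0 ≤ C ∧ ∀ k n, ‖vc β κ k n‖ ≤ C / jb k ^ K / jb n := by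
  obtain ⟨C1, h1, H1⟩ := hβ.bound_one K 3
  obtain ⟨C2, h2, H2⟩ := hκ.bound_one K 3
  have hS := S2_pos
  refine ⟨(2 * C1 + C2) * S2, by positivity, fun k n => ?_⟩
  have pk := jb_pos k
  have pn := jb_pos n
  have : (2 * C1 + C2) * S2 / jb k ^ K / jb n = ((2 * C1 + C2) / jb k ^ K / jb n) * S2 := by ring
  rw [this]
  refine norm_tsum_jb_le fun l => ?_
  have pl := jb_pos l
  have hd : ‖(if n = l then (1:ℂ) else 0)‖ ≤ jb l / jb n := by
    split_ifs with hh
    · subst hh; simp [pn.ne']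
    · simp; positivity
  calc ‖β k l * lam (n - l) + κ k l * (if n = l then 1 else 0)‖
      ≤ ‖β k l‖ * ‖lam (n - l)‖ + ‖κ k l‖ * ‖(if n = l then (1:ℂ) else 0)‖ := by
        rw [← norm_mul, ← norm_mul]; exact norm_add_le _ _
    _ ≤ (C1 / jb k ^ K / jb l ^ 3) * (2 * jb l / jb n) + (C2 / jb k ^ K / jb l ^ 3) * (jb l / jb n) := by
        gcongr
        · exact H1 k l
        · exact norm_lam_sub_le _ _
        · exact H2 k l
    _ = _ := by field_simp

/-- The quadrature changes the symbol by `O(1/N)` on the modes `2|n| ≤ N`. -/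
lemma vd_sub_vc_le {β κ : ℤ → ℤ → ℂ} (hβ : Rap β) (hκ : Rap κ) {ε : ℝ} (h : 0 < ce ε) (K : ℕ) :
    ∃ C, 0 ≤ C ∧ ∀ (N : ℕ) [NeZero N] (k n : ℤ), 2 * |n| ≤ N →
      ‖vd N ε β κ k n - vc β κ k n‖ ≤ C / jb k ^ K / N := by
  obtain ⟨C1, h1, H1⟩ := hβ.bound_one K 4
  obtain ⟨C2, h2, H2⟩ := hκ.bound_one K 4
  have hS := S2_pos
  refine ⟨(40 / ce ε * C1 + 4 * C2) * S2, by positivity, fun N _ k n hn => ?_⟩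
  have pk := jb_pos k
  have pN : (1:ℝ) ≤ N := by exact_mod_cast Nat.one_le_iff_ne_zero.2 (NeZero.ne N)
  have pN0 : (0:ℝ) < N := by linarith
  rw [show (40 / ce ε * C1 + 4 * C2) * S2 / jb k ^ K / N =
    ((40 / ce ε * C1 + 4 * C2) / jb k ^ K / N) * S2 by ring]
  unfold vd vc
  rw [← (vd_fiber_summable hβ hκ k n h).tsum_sub (vc_fiber_summable hβ hκ k n)]
  refine norm_tsum_jb_le fun l => ?_
  have pl := jb_pos l
  have ql := jb_one_le l
  calc ‖β k l * Lh N ε (n - l) + κ k l * deltah N ε (n - l) -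
        (β k l * lam (n - l) + κ k l * (if n = l then 1 else 0))‖
      = ‖β k l * (Lh N ε (n - l) - lam (n - l)) +
          κ k l * (deltah N ε (n - l) - (if n = l then 1 else 0))‖ := by congr 1; ring
    _ ≤ ‖β k l‖ * ‖Lh N ε (n - l) - lam (n - l)‖ +
          ‖κ k l‖ * ‖deltah N ε (n - l) - (if n = l then 1 else 0)‖ := by
        rw [← norm_mul, ← norm_mul]; exact norm_add_le _ _
    _ ≤ (C1 / jb k ^ K / jb l ^ 4) * (40 / ce ε * jb l / N) +
        (C2 / jb k ^ K / jb l ^ 4) * (4 * jb l ^ 2 / N ^ 2) := by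
        gcongr
        · exact H1 k l
        · exact Lh_sub_lam_shift_le h N hn l
        · exact H2 k l
        · exact deltah_sub_le N ε hn l
    _ ≤ (C1 / jb k ^ K / jb l ^ 4) * (40 / ce ε * jb l ^ 2 / N) +
        (C2 / jb k ^ K / jb l ^ 4) * (4 * jb l ^ 2 / N ^ 1) := by
        gcongr
        · exact le_self_pow₀ ql (by norm_num)
        · norm_num
    _ = _ := by field_simp

lemma vd_le {β κ : ℤ → ℤ → ℂ} (hβ : Rap β) (hκ : Rap κ) {ε : ℝ} (h : 0 < ce ε) (K : ℕ) :
    ∃ C, 0 ≤ C ∧ ∀ (N : ℕ) [NeZero N] (k n : ℤ), ‖vd N ε β κ k n‖ ≤ C / jb k ^ K := by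
  obtain ⟨C1, h1, H1⟩ := hβ.bound_one K 2
  obtain ⟨C2, h2, H2⟩ := hκ.bound_one K 2
  have hS := S2_pos
  refine ⟨(9 / ce ε * C1 + C2) * S2, by positivity, fun N _ k n => ?_⟩
  have pk := jb_pos k
  rw [show (9 / ce ε * C1 + C2) * S2 / jb k ^ K =
    ((9 / ce ε * C1 + C2) / jb k ^ K) * S2 by ring]
  refine norm_tsum_jb_le fun l => ?_
  have pl := jb_pos l
  calc ‖β k l * Lh N ε (n - l) + κ k l * deltah N ε (n - l)‖
      ≤ ‖β k l‖ * ‖Lh N ε (n - l)‖ + ‖κ k l‖ * ‖deltah N ε (n - l)‖ := by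
        rw [← norm_mul, ← norm_mul]; exact norm_add_le _ _
    _ ≤ (C1 / jb k ^ K / jb l ^ 2) * (9 / ce ε) + (C2 / jb k ^ K / jb l ^ 2) * 1 := by
        gcongr
        · exact H1 k l
        · exact Lh_bound h N _
        · exact H2 k l
        · exact deltah_norm_le N ε _
    _ = _ := by field_simp

/-- For a kernel with constant logarithmic coefficient on the diagonal, the discrete symbol is
diagonal up to an error of order `n⁻²`. -/
lemma vd_main_le {β κ : ℤ → ℤ → ℂ} (hβ : Rap β) (hκ : Rap κ) {α : ℂ}
    (hα : ∀ k, HasSum (fun l => β k l) (if k = 0 then α else 0)) {ε : ℝ} (h : 0 < ce ε) (K : ℕ) :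
    ∃ C, 0 ≤ C ∧ ∀ (N : ℕ) [NeZero N] (k n : ℤ), 2 * |n| ≤ N →
      ‖vd N ε β κ k n - (if k = 0 then α else 0) * Lh N ε n‖ ≤ C / jb k ^ K / jb n ^ 2 := by
  obtain ⟨C1, h1, H1⟩ := hβ.bound_one K 4
  obtain ⟨C2, h2, H2⟩ := hκ.bound_one K 4
  have hS := S2_pos
  refine ⟨(648 / ce ε * C1 + 10 * C2) * S2, by positivity, fun N _ k n hn => ?_⟩
  have pk := jb_pos k
  have pn := jb_pos n
  have pN : (1:ℝ) ≤ N := by exact_mod_cast Nat.one_le_iff_ne_zero.2 (NeZero.ne N)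
  have pN0 : (0:ℝ) < N := by linarith
  rw [show (648 / ce ε * C1 + 10 * C2) * S2 / jb k ^ K / jb n ^ 2 =
    ((648 / ce ε * C1 + 10 * C2) / jb k ^ K / jb n ^ 2) * S2 by ring]
  unfold vd
  rw [← ((hα k).mul_right _).tsum_eq,
    ← (vd_fiber_summable hβ hκ k n h).tsum_sub ((hα k).mul_right _).summable]
  refine norm_tsum_jb_le fun l => ?_
  have pl := jb_pos l
  have ql := jb_one_le l
  have hdl : ‖deltah N ε (n - l)‖ ≤ 10 * jb l ^ 2 / jb n ^ 2 := by
    have e1 := deltah_sub_le N ε hn l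
    have e2 : ‖(if n = l then (1:ℂ) else 0)‖ ≤ jb l ^ 2 / jb n ^ 2 := by
      split_ifs with hh
      · subst hh; simp [pn.ne']
      · simp; positivity
    have e3 : 4 * jb l ^ 2 / (N:ℝ) ^ 2 ≤ 9 * jb l ^ 2 / jb n ^ 2 := by
      have := one_div_N_le hn
      have e5 : (1 / (N:ℝ)) ^ 2 ≤ (3 / 2 / jb n) ^ 2 := by gcongr
      calc 4 * jb l ^ 2 / (N:ℝ) ^ 2 = 4 * jb l ^ 2 * (1 / (N:ℝ)) ^ 2 := by ring
        _ ≤ 4 * jb l ^ 2 * (3 / 2 / jb n) ^ 2 := by gcongr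
        _ = _ := by ring
    calc ‖deltah N ε (n - l)‖ = ‖(deltah N ε (n - l) - (if n = l then 1 else 0)) +
          (if n = l then (1:ℂ) else 0)‖ := by congr 1; ring
      _ ≤ 9 * jb l ^ 2 / jb n ^ 2 + jb l ^ 2 / jb n ^ 2 :=
          (norm_add_le _ _).trans (add_le_add (e1.trans e3) e2)
      _ = _ := by ring
  calc ‖β k l * Lh N ε (n - l) + κ k l * deltah N ε (n - l) - β k l * Lh N ε n‖
      = ‖β k l * (Lh N ε (n - l) - Lh N ε n) + κ k l * deltah N ε (n - l)‖ := by congr 1; ring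
    _ ≤ ‖β k l‖ * ‖Lh N ε (n - l) - Lh N ε n‖ + ‖κ k l‖ * ‖deltah N ε (n - l)‖ := by
        rw [← norm_mul, ← norm_mul]; exact norm_add_le _ _
    _ ≤ (C1 / jb k ^ K / jb l ^ 4) * (648 / ce ε * jb l ^ 2 / jb n ^ 2) +
        (C2 / jb k ^ K / jb l ^ 4) * (10 * jb l ^ 2 / jb n ^ 2) := by
        gcongr
        · exact H1 k l
        · exact Lh_shift_diff_le h N hn l
        · exact H2 k l
    _ = _ := by field_simp

/-! ### Action of the quadrature matrix on exponentials -/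

lemma periodic_val {N : ℕ} [NeZero N] {F : ℤ → ℂ} (hF : Function.Periodic F (N : ℤ)) (x : ℤ) :
    F (((x : ZMod N).val : ℕ) : ℤ) = F x := by
  rw [ZMod.val_intCast]
  conv_rhs => rw [← Int.emod_add_mul_ediv x N, mul_comm]
  exact (hF.int_mul (x / N) (x % N)).symm

lemma sum_zmod_shift {N : ℕ} [NeZero N] {F : ℤ → ℂ} (hF : Function.Periodic F (N : ℤ)) (x : ℤ) :
    ∑ j : ZMod N, F ((j.val : ℕ) + x) = ∑ j : ZMod N, F (j.val : ℕ) := by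
  rw [← Equiv.sum_comp (Equiv.addRight (x : ZMod N)) (fun j : ZMod N => F (j.val : ℕ))]
  refine Finset.sum_congr rfl fun j _ => ?_
  rw [← periodic_val hF]
  simp

lemma sum_zmod_reflect {N : ℕ} [NeZero N] {F : ℤ → ℂ} (hF : Function.Periodic F (N : ℤ)) (x : ℤ) :
    ∑ j : ZMod N, F (x - (j.val : ℕ)) = ∑ j : ZMod N, F (j.val : ℕ) := by
  rw [← Equiv.sum_comp (Equiv.subLeft (x : ZMod N)) (fun j : ZMod N => F (j.val : ℕ))]
  refine Finset.sum_congr rfl fun j _ => ?_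
  rw [← periodic_val hF]
  simp

lemma sum_zmod_range {N : ℕ} [NeZero N] (F : ℕ → ℂ) :
    ∑ j : ZMod N, F j.val = ∑ j ∈ Finset.range N, F j := by
  obtain ⟨n, rfl⟩ := Nat.exists_eq_succ_of_ne_zero (NeZero.ne N)
  exact Fin.sum_univ_eq_sum_range F (n + 1)

lemma sin_grid_ne_zero {ε : ℝ} (h : 0 < ce ε) (N : ℕ) [NeZero N] (j : ℕ) :
    Real.sin (Real.pi * ((j + ε) / N)) ≠ 0 := by
  have hN : (N : ℝ) ≠ 0 := by exact_mod_cast NeZero.ne N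
  intro h0
  rw [Real.sin_eq_zero_iff] at h0
  obtain ⟨p, hp⟩ := h0
  have h1 : (p : ℝ) = (j + ε) / N := by
    have := Real.pi_pos.ne'
    field_simp at hp ⊢
    linarith
  rw [eq_div_iff hN] at h1
  have h2 : 2 * Real.pi * ε = ((2 * (p * N - j) : ℤ) : ℝ) * Real.pi := by
    push_cast
    rw [h1]; ring
  unfold ce at h
  rw [h2, Real.sin_int_mul_pi] at h
  simp at h

/-- The shifted quadrature of the logarithmic kernel, applied to an exponential, acts through `vd`. -/
lemma quad_hasSum {A K : ℝ → ℝ → ℂ} (hA : SPK A) (hK : SPK K) {ε : ℝ} (h : 0 < ce ε) (N : ℕ)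
    [NeZero N] (η : ℝ) (i n : ℤ) :
    HasSum (fun k => vd N ε (bet A) (kap A K) k n * ee (n + k) ((i + η + ε) / N))
      ((1 / N : ℂ) * ∑ j : ZMod N, logKer A K ((i + η + ε) / N) (((j.val : ℕ) + η) / N) *
        ee n (((j.val : ℕ) + η) / N)) := by
  have hN : (N : ℝ) ≠ 0 := by exact_mod_cast NeZero.ne N
  set s : ℝ := (i + η + ε) / N with hs
  set F : ℤ → ℂ := fun x => logKer A K s ((x + η) / N) * ee n ((x + η) / N) with hFdef
  have hF : Function.Periodic F (N : ℤ) := by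
    intro x
    have e1 : (((x + (N : ℤ) : ℤ) : ℝ) + η) / N = (x + η) / N + 1 := by
      push_cast; field_simp; ring
    simp only [hFdef, e1]
    have e2 : logKer A K s ((x + η) / N + 1) = logKer A K s ((x + η) / N) :=
      logKer_periodic_right hA hK s ((x + η) / N)
    rw [ee_periodic n, e2]
  have h1 : ∑ j : ZMod N, logKer A K s (((j.val : ℕ) + η) / N) * ee n (((j.val : ℕ) + η) / N)
      = ∑ m ∈ Finset.range N, logKer A K s (s - (m + ε) / N) * ee n (s - (m + ε) / N) := by
    have e1 := sum_zmod_reflect hF i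
    have e2 := sum_zmod_range (N := N) (fun m => F (i - (m : ℕ)))
    rw [e2] at e1
    refine Eq.trans ?_ (e1.symm.trans ?_)
    · simp only [hFdef]; push_cast; rfl
    · refine Finset.sum_congr rfl fun m _ => ?_
      have e3 : (((i - (m : ℕ) : ℤ) : ℝ) + η) / N = s - (m + ε) / N := by
        rw [hs]; push_cast; field_simp; ring
      simp only [hFdef, e3]
  rw [h1, Finset.mul_sum]
  have h2 : HasSum (fun p : ℤ × ℤ => ∑ m ∈ Finset.range N, (1 / N : ℂ) *
      ((bet A p.1 p.2 * ell ((m + ε) / N) + kap A K p.1 p.2) * ee p.1 s * ee p.2 ((m + ε) / N) *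
        ee n (s - (m + ε) / N)))
      (∑ m ∈ Finset.range N, (1 / N : ℂ) *
        (logKer A K s (s - (m + ε) / N) * ee n (s - (m + ε) / N))) := by
    refine hasSum_sum fun m _ => ?_
    exact ((ker_hasSum hA hK s (sin_grid_ne_zero h N m)).mul_right _).mul_left _
  refine h2.prod_fiberwise fun k => ?_
  have h3 := ((vd_fiber_summable (bet_rap hA) (kap_rap hA hK) k n (N := N) h).hasSum.mul_right
    (ee (n + k) s))
  refine h3.congr_fun fun l => ?_
  unfold Lh deltah
  rw [add_mul]
  simp only [Finset.mul_sum, Finset.sum_mul]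
  rw [← Finset.sum_add_distrib]
  refine Finset.sum_congr rfl fun m _ => ?_
  rw [ee_sub_right, show -(n - l) = l + -n by ring, ee_add_left l, ee_add_left n]
  ring

/-- The symbol of the centered difference quotient `v ↦ (v(t + h/2) - v(t - h/2))/h`, up to `i`. -/
noncomputable def Dh (N : ℕ) (n : ℤ) : ℝ := 2 * N * Real.sin (Real.pi * n / N)

/-- The symbol of the hypersingular operator. -/
noncomputable def ws (β₁ κ₁ β₂ κ₂ : ℤ → ℤ → ℂ) (k n : ℤ) : ℂ :=
  4 * Real.pi ^ 2 * n * (n + k) * vc β₁ κ₁ k n + vc β₂ κ₂ k n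

/-- The symbol of the Nyström matrix. -/
noncomputable def wds (N : ℕ) (ε : ℝ) (β₁ κ₁ β₂ κ₂ : ℤ → ℤ → ℂ) (k n : ℤ) : ℂ :=
  Dh N n * Dh N (n + k) * vd N ε β₁ κ₁ k n + vd N ε β₂ κ₂ k n

lemma ee_diff (n : ℤ) (N : ℕ) (t : ℝ) :
    ee n (t + 1 / (2 * N)) - ee n (t - 1 / (2 * N)) =
      ee n t * (2 * I * Real.sin (Real.pi * n / N)) := by
  have h1 : ee n (1 / (2 * N)) = Complex.exp ((Real.pi * n / N : ℝ) * I) := by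
    unfold ee
    congr 1
    push_cast
    by_cases hN : (N : ℂ) = 0
    · simp [hN]
    · field_simp
  have h2 : ee n (-(1 / (2 * N))) = Complex.exp (-(Real.pi * n / N : ℝ) * I) := by
    unfold ee
    congr 1
    push_cast
    by_cases hN : (N : ℂ) = 0
    · simp [hN]
    · field_simp
  rw [sub_eq_add_neg t, ee_add_right, ee_add_right, h1, h2, ofReal_sin, Complex.sin]
  linear_combination (ee n t * (Complex.exp ((Real.pi * n / N : ℝ) * I) -
    Complex.exp (-(Real.pi * n / N : ℝ) * I))) * I_sq

/-- The Nyström matrix acts on exponentials through the symbol `wds`: the second differences of `V₁`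
produce the two factors `Dh`. -/
lemma Wmat_hasSum {A1 K1 A2 K2 : ℝ → ℝ → ℂ} (hA1 : SPK A1) (hK1 : SPK K1) (hA2 : SPK A2)
    (hK2 : SPK K2) {ε : ℝ} (h : 0 < ce ε) (N : ℕ) [NeZero N] (i n : ℤ) :
    HasSum (fun k => wds N ε (bet A1) (kap A1 K1) (bet A2) (kap A2 K2) k n *
        ee (n + k) (tg (1 / (N : ℝ)) ε i))
      (N * ∑ j : ZMod N, Wmat (logKer A1 K1) (logKer A2 K2) (1 / (N : ℝ)) ε i ((j.val : ℕ) : ℤ) *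
        ee n (tg (1 / (N : ℝ)) 0 ((j.val : ℕ) : ℤ))) := by
  have hN : (N : ℝ) ≠ 0 := by exact_mod_cast NeZero.ne N
  have hNc : (N : ℂ) ≠ 0 := by exact_mod_cast NeZero.ne N
  have q1 := quad_hasSum hA1 hK1 h N (-1/2) (i + 1) n
  have q0 := quad_hasSum hA1 hK1 h N (-1/2) i n
  have q2 := quad_hasSum hA2 hK2 h N 0 i n
  have es : ∀ (e : ℝ) (j : ℤ), (j + -1/2 + e) / N = sg (1 / (N : ℝ)) e j := by
    intro e j; unfold sg; ring
  have es0 : ∀ j : ℕ, ((j : ℝ) + -1/2) / N = sg (1 / (N : ℝ)) 0 (j : ℤ) := by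
    intro j; unfold sg; push_cast; ring
  have et : (i + 0 + ε) / N = tg (1 / (N : ℝ)) ε i := by unfold tg; ring
  have et0 : ∀ j : ℕ, ((j : ℝ) + 0) / N = tg (1 / (N : ℝ)) 0 (j : ℤ) := by
    intro j; unfold tg; push_cast; ring
  simp only [es, es0] at q1 q0
  simp only [et, et0] at q2
  have key := ((q1.sub q0).mul_left ((N : ℂ) ^ 2 * (-2 * I * Real.sin (Real.pi * n / N)))).add q2
  -- summation by parts in the second variable
  set G : ℝ → ℂ := fun t => logKer A1 K1 (sg (1 / (N : ℝ)) ε (i + 1)) t -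
    logKer A1 K1 (sg (1 / (N : ℝ)) ε i) t with hG
  have hGp : Function.Periodic G 1 :=
    (logKer_periodic_right hA1 hK1 _).sub (logKer_periodic_right hA1 hK1 _)
  have htg : ∀ j : ℤ, tg (1 / (N : ℝ)) 0 j = sg (1 / (N : ℝ)) 0 j + 1 / (2 * N) := by
    intro j; unfold tg sg; field_simp; ring
  have htg' : ∀ j : ℤ, tg (1 / (N : ℝ)) 0 (j - 1) = sg (1 / (N : ℝ)) 0 j - 1 / (2 * N) := by
    intro j; unfold tg sg; push_cast; field_simp; ring
  have hsum : ∑ j : ZMod N, G (sg (1 / (N : ℝ)) 0 (((j.val : ℕ) : ℤ) + 1)) *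
        ee n (tg (1 / (N : ℝ)) 0 ((j.val : ℕ) : ℤ)) =
      ∑ j : ZMod N, G (sg (1 / (N : ℝ)) 0 ((j.val : ℕ) : ℤ)) *
        ee n (tg (1 / (N : ℝ)) 0 (((j.val : ℕ) : ℤ) - 1)) := by
    have hF : Function.Periodic (fun x : ℤ => G (sg (1 / (N : ℝ)) 0 x) *
        ee n (tg (1 / (N : ℝ)) 0 (x - 1))) (N : ℤ) := by
      intro x
      have e1 : sg (1 / (N : ℝ)) 0 (x + N) = sg (1 / (N : ℝ)) 0 x + 1 := by
        unfold sg; push_cast; field_simp; ring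
      have e2 : tg (1 / (N : ℝ)) 0 (x + N - 1) = tg (1 / (N : ℝ)) 0 (x - 1) + 1 := by
        unfold tg; push_cast; field_simp; ring
      simp only [e1, e2]
      rw [hGp, ee_periodic n]
    have := sum_zmod_shift hF 1
    simp only [add_sub_cancel_right] at this
    exact this
  have hval : (N : ℂ) * ∑ j : ZMod N, Wmat (logKer A1 K1) (logKer A2 K2) (1 / (N : ℝ)) ε i
        ((j.val : ℕ) : ℤ) * ee n (tg (1 / (N : ℝ)) 0 ((j.val : ℕ) : ℤ)) =
      (N : ℂ) * (∑ j : ZMod N, G (sg (1 / (N : ℝ)) 0 ((j.val : ℕ) : ℤ)) *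
        (ee n (tg (1 / (N : ℝ)) 0 (((j.val : ℕ) : ℤ) - 1)) -
          ee n (tg (1 / (N : ℝ)) 0 ((j.val : ℕ) : ℤ)))) +
      (1 / N : ℂ) * ∑ j : ZMod N, logKer A2 K2 (tg (1 / (N : ℝ)) ε i)
        (tg (1 / (N : ℝ)) 0 ((j.val : ℕ) : ℤ)) * ee n (tg (1 / (N : ℝ)) 0 ((j.val : ℕ) : ℤ)) := by
    simp only [mul_sub, Finset.sum_sub_distrib]
    rw [← hsum, ← mul_sub, ← Finset.sum_sub_distrib, Finset.mul_sum, Finset.mul_sum, Finset.mul_sum,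
      ← Finset.sum_add_distrib]
    refine Finset.sum_congr rfl fun j _ => ?_
    simp only [hG, Wmat]
    push_cast
    field_simp
    ring
  rw [hval]
  have hd : ∀ j : ℤ, ee n (tg (1 / (N : ℝ)) 0 (j - 1)) - ee n (tg (1 / (N : ℝ)) 0 j) =
      ee n (sg (1 / (N : ℝ)) 0 j) * (-2 * I * Real.sin (Real.pi * n / N)) := by
    intro j
    have := ee_diff n N (sg (1 / (N : ℝ)) 0 j)
    rw [htg', htg]
    linear_combination -this
  have hval2 : (N : ℂ) * (∑ j : ZMod N, G (sg (1 / (N : ℝ)) 0 ((j.val : ℕ) : ℤ)) *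
        (ee n (tg (1 / (N : ℝ)) 0 (((j.val : ℕ) : ℤ) - 1)) -
          ee n (tg (1 / (N : ℝ)) 0 ((j.val : ℕ) : ℤ)))) =
      (N : ℂ) ^ 2 * (-2 * I * Real.sin (Real.pi * n / N)) *
      ((1 / N : ℂ) * ∑ j : ZMod N, logKer A1 K1 (sg (1 / (N : ℝ)) ε (i + 1))
          (sg (1 / (N : ℝ)) 0 ((j.val : ℕ) : ℤ)) * ee n (sg (1 / (N : ℝ)) 0 ((j.val : ℕ) : ℤ)) -
        (1 / N : ℂ) * ∑ j : ZMod N, logKer A1 K1 (sg (1 / (N : ℝ)) ε i)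
          (sg (1 / (N : ℝ)) 0 ((j.val : ℕ) : ℤ)) * ee n (sg (1 / (N : ℝ)) 0 ((j.val : ℕ) : ℤ))) := by
    rw [← mul_sub, ← Finset.sum_sub_distrib]
    simp only [hd, Finset.mul_sum]
    refine Finset.sum_congr rfl fun j _ => ?_
    simp only [hG]
    field_simp
  rw [hval2]
  refine key.congr_fun fun k => ?_
  have hs1 : sg (1 / (N : ℝ)) ε (i + 1) = tg (1 / (N : ℝ)) ε i + 1 / (2 * N) := by
    unfold tg sg; push_cast; field_simp; ring
  have hs0 : sg (1 / (N : ℝ)) ε i = tg (1 / (N : ℝ)) ε i - 1 / (2 * N) := by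
    unfold tg sg; field_simp; ring
  have hd2 := ee_diff (n + k) N (tg (1 / (N : ℝ)) ε i)
  rw [← mul_sub, hs1, hs0, hd2]
  unfold wds Dh
  push_cast
  linear_combination (4 * (N : ℂ) ^ 2 * Complex.sin (Real.pi * n / N) *
    Complex.sin (Real.pi * (n + k) / N) * vd N ε (bet A1) (kap A1 K1) k n *
    ee (n + k) (tg (1 / (N : ℝ)) ε i)) * I_sq

/-! ### The hypersingular operator on Fourier series and bounds on its symbol -/

/-- Symbols of order one, rapidly decaying off the diagonal. -/
def Sym (v : ℤ → ℤ → ℂ) : Prop :=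
  ∀ K : ℕ, ∃ C : ℝ, 0 ≤ C ∧ ∀ k n, ‖v k n‖ ≤ C / jb k ^ K * jb n

lemma jb_le_mul' (m k : ℤ) : jb m ≤ jb k * jb (m - k) := by
  simpa using jb_add_le k (m - k)

lemma act_term_le {v : ℤ → ℤ → ℂ} (hv : Sym v) {c : ℤ → ℂ} (hc : RapD c) (K : ℕ) :
    ∃ D : ℝ, 0 ≤ D ∧ ∀ m k, ‖v k (m - k) * c (m - k)‖ ≤ D / jb m ^ K * (jb k ^ 2)⁻¹ := by
  obtain ⟨C, hC0, hC⟩ := hv (K + 2)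
  obtain ⟨D, hD⟩ := hc (K + 1)
  have hD0 : 0 ≤ D := le_trans (by have := jb_pos 0; positivity) (hD 0)
  refine ⟨C * D, by positivity, fun m k => ?_⟩
  have pk := jb_pos k
  have pm := jb_pos m
  have pn := jb_pos (m - k)
  have h1 : ‖c (m - k)‖ ≤ D / jb (m - k) ^ (K + 1) := by
    rw [le_div_iff₀ (by positivity)]; exact hD _
  calc ‖v k (m - k) * c (m - k)‖
      ≤ (C / jb k ^ (K + 2) * jb (m - k)) * (D / jb (m - k) ^ (K + 1)) := by
        rw [norm_mul]; gcongr; exact hC k (m - k)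
    _ = C * D / (jb k * jb (m - k)) ^ K * (jb k ^ 2)⁻¹ := by
        rw [mul_pow, pow_add, pow_succ]; field_simp; ring
    _ ≤ C * D / jb m ^ K * (jb k ^ 2)⁻¹ := by
        gcongr; exact jb_le_mul' m k

lemma act_summable {v : ℤ → ℤ → ℂ} (hv : Sym v) {c : ℤ → ℂ} (hc : RapD c) (m : ℤ) :
    Summable (fun k => v k (m - k) * c (m - k)) := by
  obtain ⟨D, _, hD⟩ := act_term_le hv hc 0
  exact summable_of_jb_le (hD m)

lemma act_rapD {v : ℤ → ℤ → ℂ} (hv : Sym v) {c : ℤ → ℂ} (hc : RapD c) : RapD (act v c) := by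
  intro K
  obtain ⟨D, _, hD⟩ := act_term_le hv hc K
  refine ⟨D * S2, fun m => ?_⟩
  have pm := jb_pos m
  have := norm_tsum_jb_le (hD m)
  rw [← le_div_iff₀ (by positivity)]
  refine this.trans (le_of_eq ?_)
  ring

lemma vc_sym {β κ : ℤ → ℤ → ℂ} (hβ : Rap β) (hκ : Rap κ) : Sym (vc β κ) := by
  intro K
  obtain ⟨C, hC0, hC⟩ := vc_le hβ hκ K
  refine ⟨C, hC0, fun k n => (hC k n).trans ?_⟩
  have := jb_one_le n
  have pk := jb_pos k
  have : 0 ≤ C / jb k ^ K := by positivity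
  exact (div_le_self this (jb_one_le n)).trans (le_mul_of_one_le_right this (jb_one_le n))

lemma ws_sym {β₁ κ₁ β₂ κ₂ : ℤ → ℤ → ℂ} (h1 : Rap β₁) (h2 : Rap κ₁) (h3 : Rap β₂) (h4 : Rap κ₂) :
    Sym (ws β₁ κ₁ β₂ κ₂) := by
  intro K
  obtain ⟨C, hC0, hC⟩ := vc_le h1 h2 (K + 1)
  obtain ⟨D, hD0, hD⟩ := vc_sym h3 h4 K
  refine ⟨4 * Real.pi ^ 2 * C + D, by positivity, fun k n => ?_⟩
  have pk := jb_pos k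
  have pn := jb_pos n
  have e1 : ‖(4 * Real.pi ^ 2 * n * (n + k) * vc β₁ κ₁ k n : ℂ)‖ ≤
      4 * Real.pi ^ 2 * jb n * (jb n * jb k) * (C / jb k ^ (K + 1) / jb n) := by
    have : (n + k : ℂ) = ((n + k : ℤ) : ℂ) := by push_cast; rfl
    rw [this, norm_mul, norm_mul, norm_mul, Complex.norm_intCast, Complex.norm_intCast]
    have e2 : ‖(4 * Real.pi ^ 2 : ℂ)‖ = 4 * Real.pi ^ 2 := by simp
    rw [e2]
    gcongr
    · exact abs_le_jb n
    · exact (abs_le_jb _).trans (jb_add_le n k)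
    · exact hC k n
  calc ‖ws β₁ κ₁ β₂ κ₂ k n‖ ≤ _ := norm_add_le _ _
    _ ≤ 4 * Real.pi ^ 2 * jb n * (jb n * jb k) * (C / jb k ^ (K + 1) / jb n) +
        D / jb k ^ K * jb n := add_le_add e1 (hD k n)
    _ = _ := by rw [pow_succ]; field_simp; ring

/-- The hypersingular operator acts on Fourier coefficients through the symbol `ws`. -/
lemma Wop_fs {A1 K1 A2 K2 : ℝ → ℝ → ℂ} (hA1 : SPK A1) (hK1 : SPK K1) (hA2 : SPK A2)
    (hK2 : SPK K2) {c : ℤ → ℂ} (hc : RapD c) (s : ℝ) :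
    Wop (logKer A1 K1) (logKer A2 K2) (fs c) s =
      fs (act (ws (bet A1) (kap A1 K1) (bet A2) (kap A2 K2)) c) s := by
  have r1 := bet_rap hA1
  have r2 := kap_rap hA1 hK1
  have r3 := bet_rap hA2
  have r4 := kap_rap hA2 hK2
  set c' : ℤ → ℂ := fun n => 2 * Real.pi * I * n * c n with hc'def
  have hc' : RapD c' := hc.deriv
  have e1 : Vop (logKer A1 K1) (deriv (fs c)) = fs (act (vc (bet A1) (kap A1 K1)) c') := by
    ext x
    rw [fs_deriv hc]
    exact (Vop_fs hA1 hK1 hc'.summable x).tsum_eq.symm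
  have e2 : Vop (logKer A2 K2) (fs c) s = fs (act (vc (bet A2) (kap A2 K2)) c) s :=
    (Vop_fs hA2 hK2 hc.summable s).tsum_eq.symm
  have a1 := act_rapD (vc_sym r1 r2) hc'
  have a2 := act_rapD (vc_sym r3 r4) hc
  unfold Wop
  rw [e1, e2, fs_deriv a1]
  unfold fs
  rw [← tsum_neg, ← ((fs_summable a1.deriv.summable s).neg).tsum_add (fs_summable a2.summable s)]
  congr 1
  ext m
  have hm : act (ws (bet A1) (kap A1 K1) (bet A2) (kap A2 K2)) c m =
      -(2 * Real.pi * I * m * act (vc (bet A1) (kap A1 K1)) c' m) +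
        act (vc (bet A2) (kap A2 K2)) c m := by
    unfold act
    rw [← tsum_mul_left, ← tsum_neg,
      ← (((act_summable (vc_sym r1 r2) hc' m).mul_left _).neg).tsum_add
        (act_summable (vc_sym r3 r4) hc m)]
    congr 1
    ext k
    unfold ws
    simp only [hc'def]
    push_cast
    linear_combination (4 * (Real.pi : ℂ) ^ 2 * m * (m - k) * vc (bet A1) (kap A1 K1) k (m - k) *
      c (m - k)) * I_sq
  rw [hm]
  ring

/-- Injectivity of the operator, expressed on rapidly decaying Fourier coefficients. -/
lemma act_injective {A1 K1 A2 K2 : ℝ → ℝ → ℂ} (hA1 : SPK A1) (hK1 : SPK K1) (hA2 : SPK A2)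
    (hK2 : SPK K2)
    (hinj : ∀ φ : ℝ → ℂ, ContDiff ℝ (⊤ : ℕ∞) φ → Function.Periodic φ 1 →
      (∀ s, Wop (logKer A1 K1) (logKer A2 K2) φ s = 0) → ∀ s, φ s = 0)
    {c : ℤ → ℂ} (hc : RapD c)
    (h0 : ∀ m, act (ws (bet A1) (kap A1 K1) (bet A2) (kap A2 K2)) c m = 0) (n : ℤ) : c n = 0 := by
  have h := hinj (fs c) (fs_contDiff hc) (fs_periodic c) (fun s => by
    rw [Wop_fs hA1 hK1 hA2 hK2 hc]
    unfold fs
    simp [h0])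
  rw [← fc_fs hc.summable n, fc_eq]
  simp [h]

lemma abs_sin_sub_le (x : ℝ) : |Real.sin x - x| ≤ 2 * x ^ 2 := by
  rcases le_total |x| 1 with h | h
  · have h1 := Real.sin_bound h
    have h0 := abs_nonneg x
    have e3 : |x ^ 3 / 6| = |x| ^ 3 / 6 := by rw [abs_div, abs_pow]; norm_num
    have e2 : x ^ 2 = |x| ^ 2 := (sq_abs x).symm
    have a3 : |x| ^ 3 ≤ |x| ^ 2 := pow_le_pow_of_le_one h0 h (by norm_num)
    have a5 : |x| ^ 5 ≤ |x| ^ 2 := pow_le_pow_of_le_one h0 h (by norm_num)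
    calc |Real.sin x - x| = |(Real.sin x - (x - x ^ 3 / 6)) - x ^ 3 / 6| := by ring_nf
      _ ≤ |Real.sin x - (x - x ^ 3 / 6)| + |x ^ 3 / 6| := abs_sub _ _
      _ ≤ 2 * x ^ 2 := by
        rw [e3, e2]
        have : 0 ≤ |x| ^ 2 := by positivity
        linarith
  · have h1 := Real.abs_sin_le_abs (x := x)
    calc |Real.sin x - x| ≤ |Real.sin x| + |x| := abs_sub _ _
      _ ≤ 2 * |x| := by linarith
      _ ≤ 2 * (|x| * |x|) := by nlinarith
      _ = 2 * x ^ 2 := by rw [abs_mul_abs_self]; ring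

lemma Dh_abs_le (N : ℕ) [NeZero N] (n : ℤ) : |Dh N n| ≤ 2 * Real.pi * |(n : ℝ)| := by
  have hN : (0 : ℝ) < N := by exact_mod_cast NeZero.pos N
  unfold Dh
  rw [abs_mul, abs_of_pos (by positivity : (0 : ℝ) < 2 * N)]
  have h1 := Real.abs_sin_le_abs (x := Real.pi * n / N)
  rw [abs_div, abs_mul, abs_of_pos Real.pi_pos, abs_of_pos hN] at h1
  calc _ ≤ 2 * (N : ℝ) * (Real.pi * |(n : ℝ)| / N) := by gcongr
    _ = _ := by field_simp

lemma Dh_sub_le (N : ℕ) [NeZero N] (n : ℤ) :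
    |Dh N n - 2 * Real.pi * n| ≤ 4 * Real.pi ^ 2 * (n : ℝ) ^ 2 / N := by
  have hN : (0 : ℝ) < N := by exact_mod_cast NeZero.pos N
  have e : Dh N n - 2 * Real.pi * n =
      2 * N * (Real.sin (Real.pi * n / N) - Real.pi * n / N) := by
    unfold Dh; field_simp
  rw [e, abs_mul, abs_of_pos (by positivity : (0 : ℝ) < 2 * N)]
  calc _ ≤ 2 * (N : ℝ) * (2 * (Real.pi * n / N) ^ 2) := by gcongr; exact abs_sin_sub_le _
    _ = _ := by field_simp; ring

lemma Dh_lower (N : ℕ) [NeZero N] {n : ℤ} (hn : 2 * |n| ≤ N) : 4 * |(n : ℝ)| ≤ |Dh N n| := by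
  have hN : (0 : ℝ) < N := by exact_mod_cast NeZero.pos N
  have hn' : 2 * |(n : ℝ)| ≤ N := by exact_mod_cast hn
  have e : |Real.pi * n / N| = Real.pi * |(n : ℝ)| / N := by
    rw [abs_div, abs_mul, abs_of_pos Real.pi_pos, abs_of_pos hN]
  have h1 := Real.mul_abs_le_abs_sin (x := Real.pi * n / N) (by
    rw [e, div_le_div_iff₀ hN (by norm_num)]
    nlinarith [Real.pi_pos])
  rw [e] at h1
  unfold Dh
  rw [abs_mul, abs_of_pos (by positivity : (0 : ℝ) < 2 * N)]
  calc 4 * |(n : ℝ)| = 2 * (N : ℝ) * (2 / Real.pi * (Real.pi * |(n : ℝ)| / N)) := by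
        have := Real.pi_pos
        field_simp; ring
    _ ≤ _ := by gcongr

lemma Dh_mul_sub_le (N : ℕ) [NeZero N] (n k : ℤ) :
    |Dh N n * Dh N (n + k) - 4 * Real.pi ^ 2 * n * (n + k)| ≤
      16 * Real.pi ^ 3 * (jb n ^ 3 * jb k ^ 2) / N := by
  have hN : (0 : ℝ) < N := by exact_mod_cast NeZero.pos N
  have hpi := Real.pi_pos
  have pn := jb_pos n
  have pk := jb_one_le k
  have a1 : |(n : ℝ)| ≤ jb n := abs_le_jb n
  have a2 : |((n + k : ℤ) : ℝ)| ≤ jb n * jb k := (abs_le_jb _).trans (jb_add_le n k)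
  have q1 : (n : ℝ) ^ 2 ≤ jb n ^ 2 := by rw [← sq_abs]; gcongr
  have q2 : ((n + k : ℤ) : ℝ) ^ 2 ≤ (jb n * jb k) ^ 2 := by rw [← sq_abs]; gcongr
  have e : Dh N n * Dh N (n + k) - 4 * Real.pi ^ 2 * n * (n + k) =
      Dh N n * (Dh N (n + k) - 2 * Real.pi * ((n + k : ℤ) : ℝ)) +
        (Dh N n - 2 * Real.pi * n) * (2 * Real.pi * ((n + k : ℤ) : ℝ)) := by
    push_cast; ring
  rw [e]
  have t1 : |Dh N n * (Dh N (n + k) - 2 * Real.pi * ((n + k : ℤ) : ℝ))| ≤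
      (2 * Real.pi * jb n) * (4 * Real.pi ^ 2 * (jb n * jb k) ^ 2 / N) := by
    rw [abs_mul]
    gcongr
    · exact (Dh_abs_le N n).trans (by gcongr)
    · exact (Dh_sub_le N (n + k)).trans (by gcongr)
  have t2 : |(Dh N n - 2 * Real.pi * n) * (2 * Real.pi * ((n + k : ℤ) : ℝ))| ≤
      (4 * Real.pi ^ 2 * jb n ^ 2 / N) * (2 * Real.pi * (jb n * jb k ^ 2)) := by
    rw [abs_mul, abs_mul, abs_of_pos (by positivity : (0 : ℝ) < 2 * Real.pi)]
    gcongr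
    · exact (Dh_sub_le N n).trans (by gcongr)
    · refine a2.trans ?_
      gcongr
      nlinarith
  calc _ ≤ _ := abs_add_le _ _
    _ ≤ _ := add_le_add t1 t2
    _ = _ := by ring

/-! ### Uniform symbol estimates -/

/-- The properties of the symbol `w` of the operator and of the symbols `wd N` of its
discretizations on which stability and convergence rest: `w` has order one, `wd N` approximates it
with one power of `1/N` on the modes `2|n| ≤ N`, the part of `wd N` off the diagonal has order
zero, and its diagonal is elliptic of order one. -/
structure Symb (w : ℤ → ℤ → ℂ) (wd : ℕ → ℤ → ℤ → ℂ) : Prop where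
  sym : Sym w
  cons : ∀ K : ℕ, ∃ C : ℝ, 0 ≤ C ∧ ∀ (N : ℕ) [NeZero N] (k n : ℤ), 2 * |n| ≤ N →
    ‖wd N k n - w k n‖ ≤ C / jb k ^ K * jb n ^ 2 / N
  off : ∀ K : ℕ, ∃ C : ℝ, 0 ≤ C ∧ ∀ (N : ℕ) [NeZero N] (k n : ℤ), k ≠ 0 → 2 * |n| ≤ N →
    ‖wd N k n‖ ≤ C / jb k ^ K
  diag : ∃ c : ℝ, 0 < c ∧ ∃ C : ℝ, 0 ≤ C ∧ ∀ (N : ℕ) [NeZero N] (n : ℤ), 2 * |n| ≤ N →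
    c * jb n - C ≤ ‖wd N 0 n‖

lemma Dh_mul_norm_le (N : ℕ) [NeZero N] (n k : ℤ) :
    ‖(Dh N n * Dh N (n + k) : ℂ)‖ ≤ 4 * Real.pi ^ 2 * (jb n ^ 2 * jb k) := by
  have hpi := Real.pi_pos
  have pn := jb_pos n
  have pk := jb_pos k
  have a1 : |(n : ℝ)| ≤ jb n := abs_le_jb n
  have a2 : |((n + k : ℤ) : ℝ)| ≤ jb n * jb k := (abs_le_jb _).trans (jb_add_le n k)
  rw [norm_mul, Complex.norm_real, Complex.norm_real, Real.norm_eq_abs, Real.norm_eq_abs]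
  calc |Dh N n| * |Dh N (n + k)| ≤ (2 * Real.pi * jb n) * (2 * Real.pi * (jb n * jb k)) := by
        gcongr
        · exact (Dh_abs_le N n).trans (by gcongr)
        · exact (Dh_abs_le N _).trans (by gcongr)
    _ = _ := by ring

lemma wds_cons {β₁ κ₁ β₂ κ₂ : ℤ → ℤ → ℂ} (h1 : Rap β₁) (h2 : Rap κ₁) (h3 : Rap β₂) (h4 : Rap κ₂)
    {ε : ℝ} (h : 0 < ce ε) (K : ℕ) :
    ∃ C : ℝ, 0 ≤ C ∧ ∀ (N : ℕ) [NeZero N] (k n : ℤ), 2 * |n| ≤ N →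
      ‖wds N ε β₁ κ₁ β₂ κ₂ k n - ws β₁ κ₁ β₂ κ₂ k n‖ ≤ C / jb k ^ K * jb n ^ 2 / N := by
  obtain ⟨C1, hC1, H1⟩ := vd_sub_vc_le h1 h2 h (K + 1)
  obtain ⟨C2, hC2, H2⟩ := vc_le h1 h2 (K + 2)
  obtain ⟨C3, hC3, H3⟩ := vd_sub_vc_le h3 h4 h K
  have hpi := Real.pi_pos
  refine ⟨4 * Real.pi ^ 2 * C1 + 16 * Real.pi ^ 3 * C2 + C3, by positivity, fun N _ k n hn => ?_⟩
  have hN : (0 : ℝ) < N := by exact_mod_cast NeZero.pos N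
  have pn := jb_one_le n
  have pk := jb_pos k
  have e : wds N ε β₁ κ₁ β₂ κ₂ k n - ws β₁ κ₁ β₂ κ₂ k n =
      (Dh N n * Dh N (n + k)) * (vd N ε β₁ κ₁ k n - vc β₁ κ₁ k n) +
      ((Dh N n * Dh N (n + k) - 4 * Real.pi ^ 2 * n * (n + k) : ℝ) : ℂ) * vc β₁ κ₁ k n +
      (vd N ε β₂ κ₂ k n - vc β₂ κ₂ k n) := by
    unfold wds ws; push_cast; ring
  rw [e]
  have t1 : ‖(Dh N n * Dh N (n + k) : ℂ) * (vd N ε β₁ κ₁ k n - vc β₁ κ₁ k n)‖ ≤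
      4 * Real.pi ^ 2 * (jb n ^ 2 * jb k) * (C1 / jb k ^ (K + 1) / N) := by
    rw [norm_mul]
    gcongr
    · exact Dh_mul_norm_le N n k
    · exact H1 N k n hn
  have t2 : ‖((Dh N n * Dh N (n + k) - 4 * Real.pi ^ 2 * n * (n + k) : ℝ) : ℂ) * vc β₁ κ₁ k n‖ ≤
      16 * Real.pi ^ 3 * (jb n ^ 3 * jb k ^ 2) / N * (C2 / jb k ^ (K + 2) / jb n) := by
    rw [norm_mul, Complex.norm_real, Real.norm_eq_abs]
    gcongr
    · exact Dh_mul_sub_le N n k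
    · exact H2 k n
  have t3 : ‖vd N ε β₂ κ₂ k n - vc β₂ κ₂ k n‖ ≤ C3 / jb k ^ K * jb n ^ 2 / N := by
    refine (H3 N k n hn).trans ?_
    gcongr
    exact le_mul_of_one_le_right (by positivity) (one_le_pow₀ pn)
  have pn0 := jb_pos n
  calc _ ≤ _ := norm_add₃_le
    _ ≤ _ := add_le_add (add_le_add t1 t2) t3
    _ = _ := by rw [pow_add, pow_add]; field_simp

/-- Off the diagonal the order drops to zero, because the logarithmic coefficient is constant on `s = t`. -/
lemma wds_off {β₁ κ₁ β₂ κ₂ : ℤ → ℤ → ℂ} (h1 : Rap β₁) (h2 : Rap κ₁) (h3 : Rap β₂) (h4 : Rap κ₂)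
    {α : ℂ} (hα : ∀ k, HasSum (fun l => β₁ k l) (if k = 0 then α else 0))
    {ε : ℝ} (h : 0 < ce ε) (K : ℕ) :
    ∃ C : ℝ, 0 ≤ C ∧ ∀ (N : ℕ) [NeZero N] (k n : ℤ), k ≠ 0 → 2 * |n| ≤ N →
      ‖wds N ε β₁ κ₁ β₂ κ₂ k n‖ ≤ C / jb k ^ K := by
  obtain ⟨C1, hC1, H1⟩ := vd_main_le h1 h2 hα h (K + 1)
  obtain ⟨C2, hC2, H2⟩ := vd_le h3 h4 h K
  have hpi := Real.pi_pos
  refine ⟨4 * Real.pi ^ 2 * C1 + C2, by positivity, fun N _ k n hk hn => ?_⟩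
  have pn := jb_pos n
  have pk := jb_pos k
  have t1 : ‖(Dh N n * Dh N (n + k) : ℂ) * vd N ε β₁ κ₁ k n‖ ≤
      4 * Real.pi ^ 2 * (jb n ^ 2 * jb k) * (C1 / jb k ^ (K + 1) / jb n ^ 2) := by
    rw [norm_mul]
    gcongr
    · exact Dh_mul_norm_le N n k
    · have := H1 N k n hn
      simpa [hk] using this
  calc _ ≤ _ := norm_add_le _ _
    _ ≤ _ := add_le_add t1 (H2 N k n)
    _ = _ := by rw [pow_add]; field_simp

/-- Ellipticity of the diagonal of the discrete symbol, from the lower bounds for `Lh` and `Dh`. -/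
lemma wds_diag {β₁ κ₁ β₂ κ₂ : ℤ → ℤ → ℂ} (h1 : Rap β₁) (h2 : Rap κ₁) (h3 : Rap β₂) (h4 : Rap κ₂)
    {α : ℂ} (hα0 : α ≠ 0) (hα : ∀ k, HasSum (fun l => β₁ k l) (if k = 0 then α else 0))
    {ε : ℝ} (h : 0 < ce ε) :
    ∃ c : ℝ, 0 < c ∧ ∃ C : ℝ, 0 ≤ C ∧ ∀ (N : ℕ) [NeZero N] (n : ℤ), 2 * |n| ≤ N →
      c * jb n - C ≤ ‖wds N ε β₁ κ₁ β₂ κ₂ 0 n‖ := by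
  obtain ⟨C1, hC1, H1⟩ := vd_main_le h1 h2 hα h 0
  obtain ⟨C2, hC2, H2⟩ := vd_le h3 h4 h 0
  have hpi := Real.pi_pos
  have hα' : 0 < ‖α‖ := norm_pos_iff.2 hα0
  set c : ℝ := 16 * ‖α‖ * (ce ε ^ 3 / 512) with hc
  refine ⟨c, by positivity, 4 * Real.pi ^ 2 * C1 + C2 + c, by positivity, fun N _ n hn => ?_⟩
  have pn := jb_pos n
  have e : wds N ε β₁ κ₁ β₂ κ₂ 0 n = (Dh N n * Dh N (n + 0) : ℂ) * (α * Lh N ε n) +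
      ((Dh N n * Dh N (n + 0) : ℂ) * (vd N ε β₁ κ₁ 0 n - α * Lh N ε n) + vd N ε β₂ κ₂ 0 n) := by
    unfold wds; ring
  have t1 : ‖(Dh N n * Dh N (n + 0) : ℂ) * (vd N ε β₁ κ₁ 0 n - α * Lh N ε n)‖ ≤
      4 * Real.pi ^ 2 * C1 := by
    rw [norm_mul]
    calc _ ≤ 4 * Real.pi ^ 2 * (jb n ^ 2 * jb 0) * (C1 / jb 0 ^ 0 / jb n ^ 2) := by
          refine mul_le_mul (Dh_mul_norm_le N n 0) ?_ (norm_nonneg _) ?_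
          · simpa using H1 N 0 n hn
          · have := jb_pos 0
            positivity
      _ = _ := by rw [jb_zero]; field_simp
  have t2 : ‖vd N ε β₂ κ₂ 0 n‖ ≤ C2 := by simpa using H2 N 0 n
  have t3 : c * |(n : ℝ)| ≤ ‖(Dh N n * Dh N (n + 0) : ℂ) * (α * Lh N ε n)‖ := by
    rcases eq_or_ne n 0 with h0 | h0
    · rw [h0, Int.cast_zero, abs_zero, mul_zero]; exact norm_nonneg _
    · have a0 : 0 < |(n : ℝ)| := by positivity
      have a1 := Dh_lower N hn
      have a2 := Lh_lower h N hn h0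
      rw [add_zero, norm_mul, norm_mul, norm_mul, Complex.norm_real, Real.norm_eq_abs]
      calc c * |(n : ℝ)| = (4 * |(n : ℝ)|) * (4 * |(n : ℝ)|) * (‖α‖ * (ce ε ^ 3 / 512 / |(n : ℝ)|)) := by
            rw [hc]; field_simp; ring
        _ ≤ _ := by
            gcongr
            rw [div_le_iff₀ a0]; exact a2
  have t4 := norm_sub_norm_le ((Dh N n * Dh N (n + 0) : ℂ) * (α * Lh N ε n))
    (-((Dh N n * Dh N (n + 0) : ℂ) * (vd N ε β₁ κ₁ 0 n - α * Lh N ε n) + vd N ε β₂ κ₂ 0 n))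
  rw [sub_neg_eq_add, norm_neg, ← e] at t4
  have t5 := norm_add_le ((Dh N n * Dh N (n + 0) : ℂ) * (vd N ε β₁ κ₁ 0 n - α * Lh N ε n))
    (vd N ε β₂ κ₂ 0 n)
  have e2 : c * jb n = c + c * |(n : ℝ)| := by unfold jb; ring
  linarith

lemma symb_wds {A1 K1 A2 K2 : ℝ → ℝ → ℂ} (hA1 : SPK A1) (hK1 : SPK K1) (hA2 : SPK A2)
    (hK2 : SPK K2) {α : ℂ} (hα : α ≠ 0) (hdiag : ∀ s : ℝ, A1 s s = α) {ε : ℝ} (h : 0 < ce ε) :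
    Symb (ws (bet A1) (kap A1 K1) (bet A2) (kap A2 K2))
      (fun N => wds N ε (bet A1) (kap A1 K1) (bet A2) (kap A2 K2)) := by
  have r1 := bet_rap hA1
  have r2 := kap_rap hA1 hK1
  have r3 := bet_rap hA2
  have r4 := kap_rap hA2 hK2
  have hs := bet_row_sum hA1 hdiag
  have hα' : I / (2 * Real.pi) * α ≠ 0 := by
    have := Real.pi_ne_zero
    simp [hα]
  exact ⟨ws_sym r1 r2 r3 r4, wds_cons r1 r2 r3 r4 h, wds_off r1 r2 r3 r4 hs h,
    wds_diag r1 r2 r3 r4 hα' hs h⟩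

/-- Uniform first-order bound for the discrete symbols. -/
lemma Symb.bound {w : ℤ → ℤ → ℂ} {wd : ℕ → ℤ → ℤ → ℂ} (hs : Symb w wd) (K : ℕ) :
    ∃ C : ℝ, 0 ≤ C ∧ ∀ (N : ℕ) [NeZero N] (k n : ℤ), 2 * |n| ≤ N →
      ‖wd N k n‖ ≤ C / jb k ^ K * jb n := by
  obtain ⟨C1, hC1, H1⟩ := hs.sym K
  obtain ⟨C2, hC2, H2⟩ := hs.cons K
  refine ⟨C1 + 3 / 2 * C2, by positivity, fun N _ k n hn => ?_⟩
  have hN : (0 : ℝ) < N := by exact_mod_cast NeZero.pos N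
  have pn := jb_pos n
  have pk := jb_pos k
  have h3 := one_div_N_le hn
  calc ‖wd N k n‖ = ‖w k n + (wd N k n - w k n)‖ := by congr 1; ring
    _ ≤ ‖w k n‖ + ‖wd N k n - w k n‖ := norm_add_le _ _
    _ ≤ C1 / jb k ^ K * jb n + C2 / jb k ^ K * jb n ^ 2 * (1 / N) := by
        gcongr
        · exact H1 k n
        · refine (H2 N k n hn).trans (le_of_eq ?_); ring
    _ ≤ C1 / jb k ^ K * jb n + C2 / jb k ^ K * jb n ^ 2 * (3 / 2 / jb n) := by gcongr
    _ = _ := by field_simp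

lemma Symb.tendsto {w : ℤ → ℤ → ℂ} {wd : ℕ → ℤ → ℤ → ℂ} (hs : Symb w wd) (k n : ℤ) :
    Tendsto (fun N => wd N k n) atTop (𝓝 (w k n)) := by
  obtain ⟨C2, hC2, H2⟩ := hs.cons 0
  rw [tendsto_iff_norm_sub_tendsto_zero]
  have h0 : Tendsto (fun N : ℕ => C2 / jb k ^ 0 * jb n ^ 2 / N) atTop (𝓝 0) :=
    tendsto_const_div_atTop_nhds_zero_nat _
  refine squeeze_zero' (Eventually.of_forall fun _ => norm_nonneg _) ?_ h0
  filter_upwards [eventually_ge_atTop (2 * n.natAbs + 1)] with N hN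
  have hn : 2 * |n| ≤ N := by rw [Int.abs_eq_natAbs]; omega
  have : NeZero N := ⟨by omega⟩
  exact H2 N k n hn

lemma Symb.off_limit {w : ℤ → ℤ → ℂ} {wd : ℕ → ℤ → ℤ → ℂ} (hs : Symb w wd) (K : ℕ) :
    ∃ C : ℝ, 0 ≤ C ∧ ∀ k n : ℤ, k ≠ 0 → ‖w k n‖ ≤ C / jb k ^ K := by
  obtain ⟨C, hC, H⟩ := hs.off K
  refine ⟨C, hC, fun k n hk => ?_⟩
  refine le_of_tendsto (hs.tendsto k n).norm ?_
  filter_upwards [eventually_ge_atTop (2 * n.natAbs + 1)] with N hN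
  have hn : 2 * |n| ≤ N := by rw [Int.abs_eq_natAbs]; omega
  have : NeZero N := ⟨by omega⟩
  exact H N k n hk hn

lemma Symb.diag_limit {w : ℤ → ℤ → ℂ} {wd : ℕ → ℤ → ℤ → ℂ} (hs : Symb w wd) :
    ∃ c : ℝ, 0 < c ∧ ∃ C : ℝ, 0 ≤ C ∧ ∀ n : ℤ, c * jb n - C ≤ ‖w 0 n‖ := by
  obtain ⟨c, hc, C, hC, H⟩ := hs.diag
  refine ⟨c, hc, C, hC, fun n => ?_⟩
  refine ge_of_tendsto (hs.tendsto 0 n).norm ?_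
  filter_upwards [eventually_ge_atTop (2 * n.natAbs + 1)] with N hN
  have hn : 2 * |n| ≤ N := by rw [Int.abs_eq_natAbs]; omega
  have : NeZero N := ⟨by omega⟩
  exact H N n hn

/-! ### Stability -/

/-- The representative of smallest absolute value of a residue class modulo `N`. -/
abbrev rp {N : ℕ} (a : ZMod N) : ℤ := a.valMinAbs

lemma rp_le {N : ℕ} [NeZero N] (a : ZMod N) : 2 * |rp a| ≤ N := by
  have := ZMod.natAbs_valMinAbs_le a
  rw [Int.abs_eq_natAbs]
  unfold rp
  omega

lemma rp_of_lt {N : ℕ} [NeZero N] {m : ℤ} (hm : 2 * |m| < N) : rp (m : ZMod N) = m := by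
  have := abs_lt.1 (show |m * 2| < N by rw [abs_mul, abs_two]; omega)
  exact (ZMod.valMinAbs_spec _ _).2 ⟨rfl, this.1, this.2.le⟩

lemma rp_min {N : ℕ} [NeZero N] (m : ℤ) : |rp (m : ZMod N)| ≤ |m| := by
  rcases lt_or_ge (2 * |m|) N with h | h
  · rw [rp_of_lt h]
  · have := rp_le (m : ZMod N)
    omega

/-- The smallest representative is at most any other, in particular `k + rp (μ - k)`. -/
lemma jb_rp_le {N : ℕ} [NeZero N] (μ : ZMod N) (k : ℤ) : jb (rp μ) ≤ jb k * jb (rp (μ - (k : ZMod N))) := by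
  refine le_trans ?_ (jb_add_le k (rp (μ - (k : ZMod N))))
  have e : ((k + rp (μ - (k : ZMod N)) : ℤ) : ZMod N) = μ := by
    push_cast
    ring
  have h := rp_min (N := N) (k + rp (μ - (k : ZMod N)))
  rw [e] at h
  exact jb_le_of_abs_le (by exact_mod_cast h)

/-- The action of the discrete symbol on the discrete Fourier coefficients. A mode `k + rp (μ - k)`
outside the fundamental range is folded back to `rp μ`, which on the shifted grid costs a phase. -/
noncomputable def Fh (N : ℕ) (ε : ℝ) (u : ℤ → ℤ → ℂ) (c : ZMod N → ℂ) (μ : ZMod N) : ℂ :=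
  ∑' k : ℤ, ee (k + rp (μ - (k : ZMod N)) - rp μ) (ε / N) * (u k (rp (μ - (k : ZMod N))) * c (μ - (k : ZMod N)))

lemma Fh_term_le {w : ℤ → ℤ → ℂ} {wd : ℕ → ℤ → ℤ → ℂ} (hs : Symb w wd) (ε : ℝ) (K : ℕ) :
    ∃ C : ℝ, 0 ≤ C ∧ ∀ (N : ℕ) [NeZero N] (c : ZMod N → ℂ) (P : ℝ),
      (∀ a, jb (rp a) ^ 2 * ‖c a‖ ≤ P) → ∀ (μ : ZMod N) (k : ℤ),
      ‖ee (k + rp (μ - (k : ZMod N)) - rp μ) (ε / N) * (wd N k (rp (μ - (k : ZMod N))) * c (μ - (k : ZMod N)))‖ ≤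
        C * P * (jb k ^ K)⁻¹ := by
  obtain ⟨C, hC, H⟩ := hs.bound K
  refine ⟨C, hC, fun N _ c P hP μ k => ?_⟩
  have p1 := jb_one_le (rp (μ - (k : ZMod N)))
  have pk := jb_pos k
  rw [norm_mul, norm_mul, ee_norm, one_mul]
  calc _ ≤ C / jb k ^ K * jb (rp (μ - (k : ZMod N))) * ‖c (μ - (k : ZMod N))‖ := by
        gcongr; exact H N k _ (rp_le _)
    _ ≤ C / jb k ^ K * (jb (rp (μ - (k : ZMod N))) ^ 2 * ‖c (μ - (k : ZMod N))‖) := by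
        rw [mul_assoc]
        gcongr
        nlinarith
    _ ≤ C / jb k ^ K * P := by gcongr; exact hP _
    _ = _ := by field_simp

lemma exists_bound_zmod {N : ℕ} [NeZero N] (c : ZMod N → ℂ) :
    ∃ ν, ∀ a, jb (rp a) ^ 2 * ‖c a‖ ≤ jb (rp ν) ^ 2 * ‖c ν‖ :=
  Finite.exists_max fun a => jb (rp a) ^ 2 * ‖c a‖

lemma Fh_summable {w : ℤ → ℤ → ℂ} {wd : ℕ → ℤ → ℤ → ℂ} (hs : Symb w wd) (ε : ℝ) (N : ℕ) [NeZero N]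
    (c : ZMod N → ℂ) (μ : ZMod N) : Summable fun k : ℤ =>
      ee (k + rp (μ - (k : ZMod N)) - rp μ) (ε / N) * (wd N k (rp (μ - (k : ZMod N))) * c (μ - (k : ZMod N))) := by
  obtain ⟨C, _, H⟩ := Fh_term_le hs ε 2
  obtain ⟨ν, hν⟩ := exists_bound_zmod c
  exact summable_of_jb_le (H N c _ hν μ)

/-- The off-diagonal part of the discrete symbol, being of order zero, preserves second-order decay. -/
lemma Fh_off_le {w : ℤ → ℤ → ℂ} {wd : ℕ → ℤ → ℤ → ℂ} (hs : Symb w wd) (ε : ℝ) :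
    ∃ C : ℝ, 0 ≤ C ∧ ∀ (N : ℕ) [NeZero N] (c : ZMod N → ℂ),
      (∀ a, jb (rp a) ^ 2 * ‖c a‖ ≤ 1) → ∀ μ : ZMod N,
      ‖Fh N ε (wd N) c μ - wd N 0 (rp μ) * c μ‖ ≤ C / jb (rp μ) ^ 2 := by
  obtain ⟨C, hC, H⟩ := hs.off 4
  have hS := S2_pos
  refine ⟨C * S2, by positivity, fun N _ c hP μ => ?_⟩
  have pm := jb_pos (rp μ)
  unfold Fh
  rw [(Fh_summable hs ε N c μ).tsum_eq_add_tsum_ite 0]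
  simp only [Int.cast_zero, sub_zero, zero_add, sub_self, ee_zero_left, one_mul,
    add_sub_cancel_left]
  rw [show C * S2 / jb (rp μ) ^ 2 = C / jb (rp μ) ^ 2 * S2 by ring]
  refine norm_tsum_jb_le fun k => ?_
  have pk := jb_pos k
  have p1 := jb_pos (rp (μ - (k : ZMod N)))
  split_ifs with hk
  · rw [norm_zero]; positivity
  · rw [norm_mul, norm_mul, ee_norm, one_mul]
    have hc : ‖c (μ - (k : ZMod N))‖ ≤ 1 / jb (rp (μ - (k : ZMod N))) ^ 2 := by
      rw [le_div_iff₀ (by positivity), mul_comm]; exact hP _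
    calc _ ≤ C / jb k ^ 4 * (1 / jb (rp (μ - (k : ZMod N))) ^ 2) := by
          gcongr; exact H N k _ hk (rp_le _)
      _ = C / (jb k * jb (rp (μ - (k : ZMod N)))) ^ 2 * (jb k ^ 2)⁻¹ := by
          field_simp
      _ ≤ _ := by
          gcongr; exact jb_rp_le μ k

/-- Ellipticity bootstraps the decay of a null sequence of the symbol. -/
lemma null_rapD {w : ℤ → ℤ → ℂ} {wd : ℕ → ℤ → ℤ → ℂ} (hs : Symb w wd) {x : ℤ → ℂ}
    (hx : ∀ n, jb n ^ 2 * ‖x n‖ ≤ 1) (h0 : ∀ m, act w x m = 0) : RapD x := by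
  obtain ⟨c, hc, C0, hC0, Hd⟩ := hs.diag_limit
  have hS := S2_pos
  intro K
  induction K with
  | zero =>
    refine ⟨1, fun n => ?_⟩
    have := one_le_pow₀ (jb_one_le n) (n := 2)
    have h1 := hx n
    have h2 := norm_nonneg (x n)
    rw [pow_zero, mul_one]
    nlinarith
  | succ K ih =>
    obtain ⟨D, hD⟩ := ih
    have hD0 : 0 ≤ D := le_trans (by have := jb_pos 0; positivity) (hD 0)
    obtain ⟨C, hC, H⟩ := hs.off_limit (K + 2)
    refine ⟨(C0 * D + C * D * S2) / c, fun m => ?_⟩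
    have pm := jb_pos m
    obtain ⟨C1, hC1, H1⟩ := hs.sym 2
    have hsum : Summable fun k => w k (m - k) * x (m - k) := by
      refine summable_of_jb_le (D := C1) fun k => ?_
      have pk := jb_pos k
      have p1 := jb_one_le (m - k)
      rw [norm_mul]
      calc _ ≤ C1 / jb k ^ 2 * jb (m - k) * ‖x (m - k)‖ := by gcongr; exact H1 _ _
        _ ≤ C1 / jb k ^ 2 * (jb (m - k) ^ 2 * ‖x (m - k)‖) := by
            rw [mul_assoc]
            gcongr
            nlinarith
        _ ≤ C1 / jb k ^ 2 * 1 := by gcongr; exact hx _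
        _ = _ := by field_simp
    have e := h0 m
    unfold act at e
    rw [hsum.tsum_eq_add_tsum_ite 0, sub_zero] at e
    have t1 : ‖w 0 m * x m‖ ≤ C * D / jb m ^ K * S2 := by
      rw [eq_neg_of_add_eq_zero_left e, norm_neg]
      refine norm_tsum_jb_le fun k => ?_
      have pk := jb_pos k
      have p1 := jb_pos (m - k)
      split_ifs with hk
      · rw [norm_zero]; positivity
      · rw [norm_mul]
        have hxx : ‖x (m - k)‖ ≤ D / jb (m - k) ^ K := by
          rw [le_div_iff₀ (by positivity)]; exact hD _
        calc _ ≤ C / jb k ^ (K + 2) * (D / jb (m - k) ^ K) := by gcongr; exact H _ _ hk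
          _ = C * D / (jb k * jb (m - k)) ^ K * (jb k ^ 2)⁻¹ := by
              rw [mul_pow, pow_add]; field_simp
          _ ≤ _ := by gcongr; exact jb_le_mul' m k
    rw [norm_mul] at t1
    have t2 : (c * jb m - C0) * ‖x m‖ ≤ C * D / jb m ^ K * S2 :=
      le_trans (by gcongr; exact Hd m) t1
    have t3 : (c * jb m - C0) * ‖x m‖ * jb m ^ K ≤ C * D * S2 := by
      calc _ ≤ C * D / jb m ^ K * S2 * jb m ^ K := by gcongr
        _ = _ := by field_simp
    have t4 : C0 * (‖x m‖ * jb m ^ K) ≤ C0 * D := by gcongr; exact hD m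
    rw [le_div_iff₀ hc, pow_succ]
    linarith

lemma Fh_smul (N : ℕ) (ε : ℝ) (u : ℤ → ℤ → ℂ) (r : ℂ) (c : ZMod N → ℂ) (μ : ZMod N) :
    Fh N ε u (fun a => r * c a) μ = r * Fh N ε u c μ := by
  unfold Fh
  rw [← tsum_mul_left]
  congr 1
  ext k
  ring

/-- Failure of stability produces normalized coefficient vectors, of growing length, whose images
under the discrete symbol tend to zero. -/
lemma exists_bad_seq {wd : ℕ → ℤ → ℤ → ℂ} {ε : ℝ}
    (hbad : ¬ ∃ C : ℝ, 0 < C ∧ ∃ N0 : ℕ, ∀ (N : ℕ) [NeZero N], N0 ≤ N → ∀ (c : ZMod N → ℂ) (B : ℝ),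
      (∀ μ, jb (rp μ) * ‖Fh N ε (wd N) c μ‖ ≤ B) → ∀ μ, jb (rp μ) ^ 2 * ‖c μ‖ ≤ C * B) (M : ℕ) :
    ∃ (N : ℕ) (_ : NeZero N), M ≤ N ∧ ∃ (c : ZMod N → ℂ) (ν : ZMod N),
      (∀ a, jb (rp a) ^ 2 * ‖c a‖ ≤ 1) ∧ jb (rp ν) ^ 2 * ‖c ν‖ = 1 ∧
      ∀ μ, jb (rp μ) * ‖Fh N ε (wd N) c μ‖ ≤ 1 / ((M : ℝ) + 1) := by
  push Not at hbad
  obtain ⟨N, hN, hMN, c, B, hB, μ₀, hμ₀⟩ := hbad (M + 1) (by positivity) M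
  obtain ⟨ν, hν⟩ := exists_bound_zmod c
  set P := jb (rp ν) ^ 2 * ‖c ν‖ with hP
  have hB0 : 0 ≤ B := le_trans (by have := jb_pos (rp μ₀); positivity) (hB μ₀)
  have hP1 : (M + 1) * B < P := hμ₀.trans_le (hν μ₀)
  have hP0 : 0 < P := lt_of_le_of_lt (by positivity) hP1
  have hn : ‖((P⁻¹ : ℝ) : ℂ)‖ = P⁻¹ := by
    rw [Complex.norm_real, Real.norm_eq_abs, abs_of_pos (by positivity)]
  refine ⟨N, hN, hMN, fun a => ((P⁻¹ : ℝ) : ℂ) * c a, ν, fun a => ?_, ?_, fun μ => ?_⟩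
  · rw [norm_mul, hn]
    calc _ = P⁻¹ * (jb (rp a) ^ 2 * ‖c a‖) := by ring
      _ ≤ P⁻¹ * P := by gcongr; exact hν a
      _ = 1 := by field_simp
  · rw [norm_mul, hn]
    calc _ = P⁻¹ * P := by rw [hP]; ring
      _ = 1 := by field_simp
  · rw [Fh_smul, norm_mul, hn]
    calc _ = P⁻¹ * (jb (rp μ) * ‖Fh N ε (wd N) c μ‖) := by ring
      _ ≤ P⁻¹ * B := by gcongr; exact hB μ
      _ ≤ _ := by
        rw [inv_mul_eq_div, div_le_div_iff₀ hP0 (by positivity)]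
        linarith

/-- Uniform stability of the discretizations, in weighted maximum norms of the discrete Fourier
coefficients: otherwise a limit of normalized almost null vectors along an ultrafilter would be a
null sequence of the continuous symbol, hence zero, while ellipticity keeps the mode carrying the
maximum in a bounded range. -/
theorem stability {w : ℤ → ℤ → ℂ} {wd : ℕ → ℤ → ℤ → ℂ} (hs : Symb w wd) (ε : ℝ)
    (hinj : ∀ c : ℤ → ℂ, RapD c → (∀ m, act w c m = 0) → ∀ n, c n = 0) :
    ∃ C : ℝ, 0 < C ∧ ∃ N0 : ℕ, ∀ (N : ℕ) [NeZero N], N0 ≤ N → ∀ (c : ZMod N → ℂ) (B : ℝ),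
      (∀ μ, jb (rp μ) * ‖Fh N ε (wd N) c μ‖ ≤ B) → ∀ μ, jb (rp μ) ^ 2 * ‖c μ‖ ≤ C * B := by
  by_contra hbad
  have hseq := exists_bad_seq hbad
  choose N hN hMN c ν hc hν hF using hseq
  have hNt : Tendsto N atTop atTop := tendsto_atTop_mono hMN tendsto_id
  set U : Filter ℕ := ((hyperfilter ℕ : Ultrafilter ℕ) : Filter ℕ) with hU
  have hUle : U ≤ atTop := Nat.hyperfilter_le_atTop
  have hNU : Tendsto N U atTop := hNt.mono_left hUle
  -- eventually an integer is its own smallest representative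
  have hrp : ∀ m : ℤ, ∀ᶠ M in U, rp (m : ZMod (N M)) = m := by
    intro m
    filter_upwards [hNU.eventually_ge_atTop (2 * m.natAbs + 1)] with M hM
    refine rp_of_lt ?_
    rw [Int.abs_eq_natAbs]; omega
  have hc1 : ∀ M (a : ZMod (N M)), ‖c M a‖ ≤ 1 := by
    intro M a
    have h1 := one_le_pow₀ (jb_one_le (rp a)) (n := 2)
    have h2 := hc M a
    have h3 := norm_nonneg (c M a)
    nlinarith
  have hlim : ∀ n : ℤ, ∃ y : ℂ, Tendsto (fun M => c M (n : ZMod (N M))) U (𝓝 y) := by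
    intro n
    have hcomp : IsCompact (Metric.closedBall (0 : ℂ) 1) := isCompact_closedBall _ _
    obtain ⟨y, _, hy⟩ := hcomp.ultrafilter_le_nhds
      ((hyperfilter ℕ).map fun M => c M (n : ZMod (N M))) (by
        rw [le_principal_iff]
        refine Filter.mem_map.2 (Filter.univ_mem' fun M => ?_)
        simpa using hc1 M _)
    exact ⟨y, hy⟩
  choose x hx using hlim
  have hxb : ∀ n, jb n ^ 2 * ‖x n‖ ≤ 1 := by
    intro n
    refine le_of_tendsto ((hx n).norm.const_mul (jb n ^ 2)) ?_
    filter_upwards [hrp n] with M hM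
    have := hc M (n : ZMod (N M))
    rwa [hM] at this
  obtain ⟨C1, hC1, H1⟩ := Fh_term_le hs ε 2
  have hx0 : ∀ m, act w x m = 0 := by
    intro m
    have t1 : Tendsto (fun M => Fh (N M) ε (wd (N M)) (c M) (m : ZMod (N M))) U (𝓝 (act w x m)) := by
      unfold Fh act
      refine tendsto_tsum_of_dominated_convergence (summable_jb.mul_left (C1 * 1)) ?_
        (Eventually.of_forall fun M k => H1 (N M) (c M) 1 (hc M) _ k)
      intro k
      have e := ((hs.tendsto k (m - k)).comp hNU).mul (hx (m - k))
      refine e.congr' ?_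
      filter_upwards [hrp m, hrp (m - k)] with M h2 h3
      have e4 : ((m : ZMod (N M)) - (k : ZMod (N M))) = ((m - k : ℤ) : ZMod (N M)) := by push_cast; rfl
      rw [e4, h2, h3]
      simp [ee_zero_left]
    have t2 : Tendsto (fun M => Fh (N M) ε (wd (N M)) (c M) (m : ZMod (N M))) U (𝓝 0) := by
      refine squeeze_zero_norm (fun M => ?_)
        ((tendsto_one_div_add_atTop_nhds_zero_nat (𝕜 := ℝ)).mono_left hUle)
      refine le_trans ?_ (hF M (m : ZMod (N M)))
      exact le_mul_of_one_le_left (norm_nonneg _) (jb_one_le _)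
    exact tendsto_nhds_unique t1 t2
  have hxz := hinj x (null_rapD hs hxb hx0) hx0
  -- the maximizing mode stays bounded
  obtain ⟨κ, hκ, C0, hC0, Hd⟩ := hs.diag
  obtain ⟨C2, hC2, H2⟩ := Fh_off_le hs ε
  set R : ℝ := 2 * (C0 + C2) / κ with hR
  have hbd : ∀ᶠ M in U, jb (rp (ν M)) ≤ R := by
    have hlarge : ∀ᶠ M : ℕ in U, 1 / ((M : ℝ) + 1) < κ / 2 :=
      ((tendsto_one_div_add_atTop_nhds_zero_nat (𝕜 := ℝ)).mono_left hUle).eventually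
        (gt_mem_nhds (by positivity))
    filter_upwards [hlarge] with M hM
    set n := rp (ν M) with hn
    have pn := jb_pos n
    have a1 := hF M (ν M)
    have a2 := H2 (N M) (c M) (hc M) (ν M)
    have a3 := Hd (N M) n (rp_le _)
    have a4 : ‖c M (ν M)‖ = 1 / jb n ^ 2 := by
      rw [eq_div_iff (by positivity), mul_comm]; exact hν M
    have a5 : ‖wd (N M) 0 n * c M (ν M)‖ ≤
        ‖Fh (N M) ε (wd (N M)) (c M) (ν M)‖ + C2 / jb n ^ 2 := by
      have := norm_sub_norm_le (wd (N M) 0 n * c M (ν M)) (Fh (N M) ε (wd (N M)) (c M) (ν M))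
      rw [norm_sub_rev] at this
      linarith
    rw [norm_mul, a4] at a5
    have a6 : (κ * jb n - C0) ≤ jb n * (jb n * ‖Fh (N M) ε (wd (N M)) (c M) (ν M)‖) + C2 := by
      refine a3.trans ?_
      calc ‖wd (N M) 0 n‖ = jb n ^ 2 * (‖wd (N M) 0 n‖ * (1 / jb n ^ 2)) := by field_simp
        _ ≤ jb n ^ 2 * (‖Fh (N M) ε (wd (N M)) (c M) (ν M)‖ + C2 / jb n ^ 2) := by gcongr
        _ = _ := by field_simp
    have a7 : jb n * (jb n * ‖Fh (N M) ε (wd (N M)) (c M) (ν M)‖) ≤ jb n * (κ / 2) := by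
      gcongr
      exact a1.trans hM.le
    rw [hR, le_div_iff₀ hκ]
    linarith
  have hR0 : 0 < R := by
    obtain ⟨M, hM⟩ := hbd.exists
    exact (jb_pos _).trans_le hM
  set S : Finset ℤ := Finset.Icc (-⌈R⌉) ⌈R⌉ with hS
  have hsm : ∀ᶠ M in U, ∀ n ∈ S, ‖c M (n : ZMod (N M))‖ < 1 / R ^ 2 := by
    rw [Filter.eventually_all_finset]
    intro n _
    have := (hx n).norm
    rw [hxz n, norm_zero] at this
    exact this.eventually (gt_mem_nhds (by positivity))
  obtain ⟨M, hM1, hM2⟩ := (hbd.and hsm).exists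
  have hmem : rp (ν M) ∈ S := by
    rw [hS, Finset.mem_Icc, ← abs_le]
    have h1 : |((rp (ν M) : ℤ) : ℝ)| ≤ R := by
      unfold jb at hM1; linarith
    have h2 := h1.trans (Int.le_ceil R)
    exact_mod_cast h2
  have h3 := hM2 _ hmem
  rw [ZMod.coe_valMinAbs] at h3
  have h4 := hν M
  have p := jb_pos (rp (ν M))
  have h5 : jb (rp (ν M)) ^ 2 * ‖c M (ν M)‖ < R ^ 2 * (1 / R ^ 2) := by
    refine mul_lt_mul' (by gcongr) h3 (norm_nonneg _) (by positivity)
  rw [h4] at h5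
  have : R ^ 2 * (1 / R ^ 2) = 1 := by field_simp
  linarith

/-! ### Discrete Fourier analysis on the shifted grids -/

lemma tg_eq (N : ℕ) (ε : ℝ) (i : ℤ) : tg (1 / (N : ℝ)) ε i = (i + ε) / N := by
  unfold tg; ring

/-- Aliasing on the shifted grid: congruent frequencies agree up to the phase `e_{m-n}(ε/N)`. -/
lemma ee_fold (N : ℕ) [NeZero N] (ε : ℝ) (i : ℤ) {m n : ℤ} (h : (m : ZMod N) = (n : ZMod N)) :
    ee (m - n) (ε / N) * ee n (tg (1 / (N : ℝ)) ε i) = ee m (tg (1 / (N : ℝ)) ε i) := by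
  have hN : (N : ℝ) ≠ 0 := by exact_mod_cast NeZero.ne N
  obtain ⟨p, hp⟩ := (ZMod.intCast_eq_intCast_iff_dvd_sub n m N).1 h.symm
  have hm : m = n + p * N := by linarith
  have e1 : ee (p * N) (ε / N) = ee p ε := by
    unfold ee
    have : (N : ℂ) ≠ 0 := by exact_mod_cast NeZero.ne N
    congr 1
    push_cast
    field_simp
  rw [tg_eq, hm, ee_grid_shift, add_sub_cancel_left, e1, mul_comm]

/-- A trigonometric polynomial with frequencies in the fundamental range is determined by its values
on the shifted grid. -/
lemma dft_injective (N : ℕ) [NeZero N] (ε : ℝ) (d : ZMod N → ℂ)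
    (h : ∀ i : ZMod N, ∑ a, d a * ee (rp a) (tg (1 / (N : ℝ)) ε ((i.val : ℕ) : ℤ)) = 0)
    (b : ZMod N) : d b = 0 := by
  have hN : (N : ℂ) ≠ 0 := by exact_mod_cast NeZero.ne N
  have h1 : ∑ i : ZMod N, (∑ a, d a * ee (rp a) (tg (1 / (N : ℝ)) ε ((i.val : ℕ) : ℤ))) *
      ee (-rp b) (tg (1 / (N : ℝ)) ε ((i.val : ℕ) : ℤ)) = 0 :=
    Finset.sum_eq_zero fun i _ => by rw [h i, zero_mul]
  simp_rw [Finset.sum_mul] at h1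
  rw [Finset.sum_comm] at h1
  have h2 : ∀ a : ZMod N, ∑ i : ZMod N, d a * ee (rp a) (tg (1 / (N : ℝ)) ε ((i.val : ℕ) : ℤ)) *
      ee (-rp b) (tg (1 / (N : ℝ)) ε ((i.val : ℕ) : ℤ)) = if a = b then d a * N else 0 := by
    intro a
    have e1 : ∀ i : ZMod N, d a * ee (rp a) (tg (1 / (N : ℝ)) ε ((i.val : ℕ) : ℤ)) *
        ee (-rp b) (tg (1 / (N : ℝ)) ε ((i.val : ℕ) : ℤ)) =
        d a * ee (rp a - rp b) (((i.val : ℕ) + ε) / N) := by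
      intro i
      rw [mul_assoc, ← ee_add_left, tg_eq, sub_eq_add_neg]
      push_cast
      rfl
    simp_rw [e1]
    rw [← Finset.mul_sum, sum_zmod_range (N := N) fun j => ee (rp a - rp b) (((j : ℕ) + ε) / N),
      grid_sum]
    have e2 : (N : ℤ) ∣ rp a - rp b ↔ a = b := by
      rw [← ZMod.intCast_zmod_eq_zero_iff_dvd]
      push_cast
      simp [sub_eq_zero]
    by_cases hab : a = b
    · subst hab; simp [ee_zero_left]
    · rw [if_neg (fun hh => hab (e2.1 hh)), if_neg hab, mul_zero]
  rw [Finset.sum_congr rfl fun a _ => h2 a] at h1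
  simpa [hN] using h1

/-- Every grid vector is interpolated by a trigonometric polynomial with frequencies in the
fundamental range. -/
lemma exists_dft (N : ℕ) [NeZero N] (v : ZMod N → ℂ) :
    ∃ b : ZMod N → ℂ, ∀ j : ZMod N,
      v j = ∑ a, b a * ee (rp a) (tg (1 / (N : ℝ)) 0 ((j.val : ℕ) : ℤ)) := by
  let L : (ZMod N → ℂ) →ₗ[ℂ] (ZMod N → ℂ) :=
    { toFun := fun b j => ∑ a, b a * ee (rp a) (tg (1 / (N : ℝ)) 0 ((j.val : ℕ) : ℤ))
      map_add' := fun b c => by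
        ext j
        simp [add_mul, Finset.sum_add_distrib]
      map_smul' := fun r b => by
        ext j
        simp [Finset.mul_sum, mul_assoc] }
  have hL : Function.Injective L := by
    rw [← LinearMap.ker_eq_bot, LinearMap.ker_eq_bot']
    intro b hb
    ext a
    exact dft_injective N 0 b (fun i => congrFun hb i) a
  obtain ⟨b, hb⟩ := LinearMap.injective_iff_surjective.1 hL v
  exact ⟨b, fun j => (congrFun hb j).symm⟩

/-- Folding the modes produced by a symbol acting on a band-limited function back into the
fundamental range. -/
lemma fold_symbol (N : ℕ) [NeZero N] (ε : ℝ) {u : ℤ → ℤ → ℂ}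
    (hu : ∀ a : ZMod N, Summable fun k => ‖u k (rp a)‖) (c : ZMod N → ℂ) (i : ℤ) :
    ∑ a, c a * ∑' k, u k (rp a) * ee (rp a + k) (tg (1 / (N : ℝ)) ε i) =
      ∑ μ, Fh N ε u c μ * ee (rp μ) (tg (1 / (N : ℝ)) ε i) := by
  set t := tg (1 / (N : ℝ)) ε i with ht
  have s1 : ∀ a : ZMod N, HasSum (fun k => c a * (u k (rp a) * ee (rp a + k) t))
      (c a * ∑' k, u k (rp a) * ee (rp a + k) t) := by
    intro a
    refine (Summable.hasSum ?_).mul_left _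
    refine Summable.of_norm ?_
    simpa [norm_mul, ee_norm] using hu a
  have s2 : ∀ μ : ZMod N, HasSum (fun k : ℤ => ee (k + rp (μ - (k : ZMod N)) - rp μ) (ε / N) *
      (u k (rp (μ - (k : ZMod N))) * c (μ - (k : ZMod N))) * ee (rp μ) t)
      (Fh N ε u c μ * ee (rp μ) t) := by
    intro μ
    refine (Summable.hasSum ?_).mul_right _
    refine Summable.of_norm_bounded (summable_sum (s := Finset.univ)
      fun a _ => (hu a).mul_right ‖c a‖) fun k => ?_
    rw [norm_mul, norm_mul, ee_norm, one_mul]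
    exact Finset.single_le_sum (f := fun a => ‖u k (rp a)‖ * ‖c a‖)
      (fun a _ => by positivity) (Finset.mem_univ (μ - (k : ZMod N)))
  have t1 := hasSum_sum (s := Finset.univ) fun a _ => s1 a
  have t2 := hasSum_sum (s := Finset.univ) fun μ _ => s2 μ
  refine t1.unique (t2.congr_fun fun k => ?_)
  refine Fintype.sum_equiv (Equiv.addRight (k : ZMod N)) _ _ fun a => ?_
  simp only [Equiv.coe_addRight, add_sub_cancel_right]
  have e := ee_fold N ε i (m := k + rp a) (n := rp (a + (k : ZMod N))) (by push_cast; ring)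
  rw [← ht] at e
  rw [add_comm (rp a) k, ← e]
  ring

/-- The coefficient of `e_{rp μ}` when the Fourier series with coefficients `g` is restricted to the
shifted grid and all frequencies congruent to `μ` are folded to `rp μ`. -/
noncomputable def foldc (N : ℕ) (ε : ℝ) (g : ℤ → ℂ) (μ : ZMod N) : ℂ :=
  ∑' m : ℤ, if (m : ZMod N) = μ then ee (m - rp μ) (ε / N) * g m else 0

lemma fold_series (N : ℕ) [NeZero N] (ε : ℝ) {g : ℤ → ℂ} (hg : Summable fun m => ‖g m‖) (i : ℤ) :
    fs g (tg (1 / (N : ℝ)) ε i) = ∑ μ, foldc N ε g μ * ee (rp μ) (tg (1 / (N : ℝ)) ε i) := by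
  set t := tg (1 / (N : ℝ)) ε i with ht
  have s2 : ∀ μ : ZMod N, HasSum (fun m : ℤ =>
      (if (m : ZMod N) = μ then ee (m - rp μ) (ε / N) * g m else 0) * ee (rp μ) t)
      (foldc N ε g μ * ee (rp μ) t) := by
    intro μ
    refine (Summable.hasSum ?_).mul_right _
    refine Summable.of_norm_bounded hg fun m => ?_
    split_ifs
    · rw [norm_mul, ee_norm, one_mul]
    · simp
  have t2 := hasSum_sum (s := Finset.univ) fun μ _ => s2 μ
  refine (fs_summable hg t).hasSum.unique (t2.congr_fun fun m => ?_)
  simp only [ite_mul, zero_mul, Finset.sum_ite_eq, Finset.mem_univ, if_true]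
  have e := ee_fold N ε i (m := m) (n := rp (m : ZMod N)) (by simp)
  rw [← ht] at e
  rw [← e]
  ring

/-- Truncation of a sequence of Fourier coefficients to the fundamental range. -/
noncomputable def trunc (N : ℕ) (c : ℤ → ℂ) (n : ℤ) : ℂ :=
  if rp (n : ZMod N) = n then c n else 0

lemma act_eq (w : ℤ → ℤ → ℂ) (c : ℤ → ℂ) (m : ℤ) : act w c m = ∑' n, w (m - n) n * c n := by
  unfold act
  rw [← (Equiv.subLeft m).tsum_eq fun n => w (m - n) n * c n]
  simp

lemma trunc_tsum (N : ℕ) [NeZero N] (c f : ℤ → ℂ) :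
    ∑' n, f n * trunc N c n = ∑ a : ZMod N, f (rp a) * c (rp a) := by
  rw [← tsum_fintype (L := .unconditional _)]
  have h := (ZMod.injective_valMinAbs (n := N)).tsum_eq (f := fun n => f n * trunc N c n) (by
    intro n hn
    refine ⟨(n : ZMod N), ?_⟩
    by_contra h
    exact hn (by simp [trunc, rp, h]))
  rw [← h]
  congr 1
  ext a
  simp [trunc, rp]

lemma trunc_rapD {c : ℤ → ℂ} (hc : RapD c) (N : ℕ) : RapD (trunc N c) :=
  hc.of_le (A := 1) (m := 0) zero_le_one fun n => by
    unfold trunc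
    split_ifs <;> simp

lemma sub_trunc_rapD {c : ℤ → ℂ} (hc : RapD c) (N : ℕ) : RapD (fun n => c n - trunc N c n) :=
  hc.of_le (A := 1) (m := 0) zero_le_one fun n => by
    unfold trunc
    split_ifs <;> simp

lemma Sym.summable {w : ℤ → ℤ → ℂ} (hw : Sym w) (n : ℤ) : Summable fun k => ‖w k n‖ := by
  obtain ⟨C, hC, H⟩ := hw 2
  refine Summable.of_nonneg_of_le (fun _ => norm_nonneg _) (fun k => ?_)
    (summable_jb.mul_left (C * jb n))
  refine (H k n).trans (le_of_eq ?_)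
  ring

/-- The exact operator applied to the retained modes, restricted to the shifted grid. -/
lemma fs_act_trunc {w : ℤ → ℤ → ℂ} (hw : Sym w) (N : ℕ) [NeZero N] (ε : ℝ) (c : ℤ → ℂ) (i : ℤ) :
    fs (act w (trunc N c)) (tg (1 / (N : ℝ)) ε i) =
      ∑ μ, Fh N ε w (fun a => c (rp a)) μ * ee (rp μ) (tg (1 / (N : ℝ)) ε i) := by
  rw [← fold_symbol N ε (fun a => hw.summable (rp a))]
  set t := tg (1 / (N : ℝ)) ε i
  have s1 : ∀ a : ZMod N, HasSum (fun m => c (rp a) * (w (m - rp a) (rp a) * ee m t))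
      (c (rp a) * ∑' k, w k (rp a) * ee (rp a + k) t) := by
    intro a
    refine HasSum.mul_left _ ?_
    have h1 : Summable fun k => w k (rp a) * ee (rp a + k) t := by
      refine Summable.of_norm ?_
      simpa [norm_mul, ee_norm] using hw.summable (rp a)
    have h2 := (Equiv.subRight (rp a)).hasSum_iff.2 h1.hasSum
    refine h2.congr_fun fun m => ?_
    simp
  have t1 := hasSum_sum (s := Finset.univ) fun a _ => s1 a
  unfold fs
  rw [← t1.tsum_eq]
  congr 1
  ext m
  rw [act_eq, trunc_tsum N c fun n => w (m - n) n, Finset.sum_mul]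
  refine Finset.sum_congr rfl fun a _ => ?_
  ring

/-! ### Consistency and convergence -/

/-- Consistency of the discrete symbol on the retained modes. -/
lemma Fh_cons {w : ℤ → ℤ → ℂ} {wd : ℕ → ℤ → ℤ → ℂ} (hs : Symb w wd) (ε : ℝ) :
    ∃ C : ℝ, 0 ≤ C ∧ ∀ (N : ℕ) [NeZero N] (c : ℤ → ℂ) (P : ℝ),
      (∀ n, ‖c n‖ * jb n ^ 3 ≤ P) → ∀ μ : ZMod N,
      jb (rp μ) * ‖Fh N ε w (fun a => c (rp a)) μ - Fh N ε (wd N) (fun a => c (rp a)) μ‖ ≤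
        C * P / N := by
  obtain ⟨C, hC, H⟩ := hs.cons 3
  obtain ⟨C1, hC1, H1⟩ := hs.sym 2
  have hS := S2_pos
  refine ⟨C * S2, by positivity, fun N _ c P hP μ => ?_⟩
  have hN : (0 : ℝ) < N := by exact_mod_cast NeZero.pos N
  have hP0 : 0 ≤ P := le_trans (by have := jb_pos 0; positivity) (hP 0)
  have pm := jb_pos (rp μ)
  have hc : ∀ n, ‖c n‖ ≤ P / jb n ^ 3 := fun n => by
    have := jb_pos n
    rw [le_div_iff₀ (by positivity)]; exact hP n
  have s1 := Fh_summable hs ε N (fun a => c (rp a)) μ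
  have s2 : Summable fun k : ℤ => ee (k + rp (μ - (k : ZMod N)) - rp μ) (ε / N) *
      (w k (rp (μ - (k : ZMod N))) * c (rp (μ - (k : ZMod N)))) := by
    refine summable_of_jb_le (D := C1 * P) fun k => ?_
    have pk := jb_pos k
    have p1 := jb_one_le (rp (μ - (k : ZMod N)))
    have p0 := jb_pos (rp (μ - (k : ZMod N)))
    rw [norm_mul, norm_mul, ee_norm, one_mul]
    calc _ ≤ C1 / jb k ^ 2 * jb (rp (μ - (k : ZMod N))) * (P / jb (rp (μ - (k : ZMod N))) ^ 3) := by
          gcongr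
          · exact H1 _ _
          · exact hc _
      _ = C1 * P * (jb k ^ 2)⁻¹ / jb (rp (μ - (k : ZMod N))) ^ 2 := by field_simp
      _ ≤ _ := div_le_self (by positivity) (one_le_pow₀ p1)
  have key : ‖Fh N ε w (fun a => c (rp a)) μ - Fh N ε (wd N) (fun a => c (rp a)) μ‖ ≤
      C * P / N / jb (rp μ) * S2 := by
    unfold Fh
    rw [← s2.tsum_sub s1]
    refine norm_tsum_jb_le fun k => ?_
    have pk := jb_pos k
    have p0 := jb_pos (rp (μ - (k : ZMod N)))
    rw [← mul_sub, ← sub_mul, norm_mul, norm_mul, ee_norm, one_mul, norm_sub_rev]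
    calc _ ≤ C / jb k ^ 3 * jb (rp (μ - (k : ZMod N))) ^ 2 / N *
          (P / jb (rp (μ - (k : ZMod N))) ^ 3) := by
          gcongr
          · exact H N k _ (rp_le _)
          · exact hc _
      _ = C * P / N / (jb k * jb (rp (μ - (k : ZMod N)))) * (jb k ^ 2)⁻¹ := by field_simp
      _ ≤ _ := by
          gcongr; exact jb_rp_le μ k
  calc _ ≤ jb (rp μ) * (C * P / N / jb (rp μ) * S2) := by gcongr
    _ = _ := by field_simp

/-- Decay of the discarded modes: either keep all three powers, or trade one for `2/N`. -/
lemma rest_bound {N : ℕ} [NeZero N] {c : ℤ → ℂ} {P : ℝ} (hP : ∀ n, ‖c n‖ * jb n ^ 3 ≤ P) (n : ℤ) :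
    ‖c n - trunc N c n‖ ≤ P / jb n ^ 3 ∧ ‖c n - trunc N c n‖ ≤ 2 * P / N / jb n ^ 2 := by
  have hN : (0 : ℝ) < N := by exact_mod_cast NeZero.pos N
  have hP0 : 0 ≤ P := le_trans (by have := jb_pos 0; positivity) (hP 0)
  have pn := jb_pos n
  have hc : ‖c n‖ ≤ P / jb n ^ 3 := by
    rw [le_div_iff₀ (by positivity)]; exact hP n
  unfold trunc
  split_ifs with h
  · rw [sub_self, norm_zero]
    exact ⟨by positivity, by positivity⟩
  · rw [sub_zero]
    refine ⟨hc, hc.trans ?_⟩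
    have h1 : (N : ℤ) ≤ 2 * |n| := by
      by_contra h2
      exact h (rp_of_lt (by omega))
    have h2 : (N : ℝ) ≤ 2 * jb n := by
      have : (N : ℝ) ≤ 2 * |(n : ℝ)| := by exact_mod_cast h1
      unfold jb; linarith
    rw [div_div, div_le_div_iff₀ (by positivity) (by positivity)]
    calc P * (N * jb n ^ 2) ≤ P * (2 * jb n * jb n ^ 2) := by gcongr
      _ = _ := by ring

/-- The two bounds for the image of the discarded modes: second-order decay, and first-order decay
with a factor `1/N`. -/
lemma act_rest_le {w : ℤ → ℤ → ℂ} (hw : Sym w) :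
    ∃ C : ℝ, 0 ≤ C ∧ ∀ (N : ℕ) [NeZero N] (c : ℤ → ℂ) (P : ℝ), (∀ n, ‖c n‖ * jb n ^ 3 ≤ P) → ∀ m,
      ‖act w (fun n => c n - trunc N c n) m‖ ≤ C * P / jb m ^ 2 ∧
      ‖act w (fun n => c n - trunc N c n) m‖ ≤ C * P / N / jb m := by
  obtain ⟨C, hC, H⟩ := hw 4
  have hS := S2_pos
  refine ⟨2 * C * S2, by positivity, fun N _ c P hP m => ?_⟩
  have hN : (0 : ℝ) < N := by exact_mod_cast NeZero.pos N
  have hP0 : 0 ≤ P := le_trans (by have := jb_pos 0; positivity) (hP 0)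
  have pm := jb_pos m
  constructor
  · have : ‖act w (fun n => c n - trunc N c n) m‖ ≤ C * P / jb m ^ 2 * S2 := by
      unfold act
      refine norm_tsum_jb_le fun k => ?_
      have pk := jb_pos k
      have p1 := jb_pos (m - k)
      rw [norm_mul]
      calc _ ≤ C / jb k ^ 4 * jb (m - k) * (P / jb (m - k) ^ 3) := by
            gcongr
            · exact H _ _
            · exact (rest_bound hP _).1
        _ = C * P / (jb k * jb (m - k)) ^ 2 * (jb k ^ 2)⁻¹ := by field_simp
        _ ≤ _ := by gcongr; exact jb_le_mul' m k
    refine this.trans ?_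
    have e : 2 * C * S2 * P / jb m ^ 2 = 2 * (C * P / jb m ^ 2 * S2) := by ring
    have : 0 ≤ C * P / jb m ^ 2 * S2 := by positivity
    linarith
  · have : ‖act w (fun n => c n - trunc N c n) m‖ ≤ 2 * C * P / N / jb m * S2 := by
      unfold act
      refine norm_tsum_jb_le fun k => ?_
      have pk := jb_pos k
      have pk1 := jb_one_le k
      have p1 := jb_pos (m - k)
      rw [norm_mul]
      calc _ ≤ C / jb k ^ 4 * jb (m - k) * (2 * P / N / jb (m - k) ^ 2) := by
            gcongr
            · exact H _ _
            · exact (rest_bound hP _).2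
        _ = 2 * C * P / N / (jb k * jb (m - k)) * (jb k ^ 2)⁻¹ / jb k := by field_simp
        _ ≤ 2 * C * P / N / (jb k * jb (m - k)) * (jb k ^ 2)⁻¹ :=
            div_le_self (by positivity) pk1
        _ ≤ _ := by gcongr; exact jb_le_mul' m k
    refine this.trans (le_of_eq ?_)
    ring

/-- Folding costs nothing: the frequency `rp μ` itself is controlled by the first-order bound carrying
`1/N`, the frequencies `rp μ + qN` with `q ≠ 0` by the second-order bound. -/
lemma foldc_le {g : ℤ → ℂ} {N : ℕ} [NeZero N] (ε : ℝ) {D : ℝ} (hD : 0 ≤ D)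
    (h1 : ∀ m, ‖g m‖ ≤ D / jb m ^ 2) (h2 : ∀ m, ‖g m‖ ≤ D / N / jb m) (μ : ZMod N) :
    jb (rp μ) * ‖foldc N ε g μ‖ ≤ 24 * S2 * D / N := by
  have hN : (0 : ℝ) < N := by exact_mod_cast NeZero.pos N
  have hN0 : (N : ℤ) ≠ 0 := by exact_mod_cast NeZero.ne N
  have pm := jb_pos (rp μ)
  have hinj : Function.Injective fun q : ℤ => rp μ + q * N := fun p q hpq => by
    simpa [NeZero.ne N] using hpq
  have e : foldc N ε g μ = ∑' q : ℤ,
      ee (rp μ + q * N - rp μ) (ε / N) * g (rp μ + q * N) := by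
    unfold foldc
    rw [← hinj.tsum_eq]
    · congr 1
      ext q
      rw [if_pos (by simp)]
    · intro m hm
      have hmμ : (m : ZMod N) = μ := by
        by_contra h
        exact hm (by simp [h])
      obtain ⟨p, hp⟩ := (ZMod.intCast_eq_intCast_iff_dvd_sub (rp μ) m N).1 (by simp [hmμ])
      exact ⟨p, by simp only; linarith⟩
  have key : ‖foldc N ε g μ‖ ≤ 24 * D / N / jb (rp μ) * S2 := by
    rw [e]
    refine norm_tsum_jb_le fun q => ?_
    rw [norm_mul, ee_norm, one_mul]
    rcases eq_or_ne q 0 with hq | hq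
    · subst hq
      rw [zero_mul, add_zero, jb_zero, one_pow, inv_one, mul_one]
      refine (h2 _).trans ?_
      gcongr
      linarith
    · have pq := jb_pos q
      have b1 : (N : ℝ) * jb q ≤ 4 * jb (rp μ + q * N) := by
        have r1 : 2 * |((rp μ : ℤ) : ℝ)| ≤ N := by exact_mod_cast rp_le μ
        have r2 : (1 : ℝ) ≤ |(q : ℝ)| := by exact_mod_cast Int.one_le_abs hq
        have r3 : |(q : ℝ)| * N ≤ |((rp μ : ℤ) : ℝ) + q * N| + |((rp μ : ℤ) : ℝ)| := by
          calc |(q : ℝ)| * N = |(((rp μ : ℤ) : ℝ) + q * N) - ((rp μ : ℤ) : ℝ)| := by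
                rw [add_sub_cancel_left, abs_mul, abs_of_pos hN]
            _ ≤ _ := abs_sub _ _
        unfold jb
        push_cast
        nlinarith
      have b2 := one_div_N_le (rp_le μ)
      have b3 : ((N : ℝ) * jb q) ^ 2 ≤ (4 * jb (rp μ + q * N)) ^ 2 := by gcongr
      have pl := jb_pos (rp μ + q * N)
      calc ‖g (rp μ + q * N)‖ ≤ D / jb (rp μ + q * N) ^ 2 := h1 _
        _ ≤ 16 * D / ((N : ℝ) * jb q) ^ 2 := by
            rw [div_le_div_iff₀ (by positivity) (by positivity)]
            calc _ ≤ D * (4 * jb (rp μ + q * N)) ^ 2 := by gcongr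
              _ = _ := by ring
        _ = 16 * D / N * (1 / N) * (jb q ^ 2)⁻¹ := by field_simp
        _ ≤ 16 * D / N * (3 / 2 / jb (rp μ)) * (jb q ^ 2)⁻¹ := by gcongr
        _ = _ := by field_simp; ring
  calc _ ≤ jb (rp μ) * (24 * D / N / jb (rp μ) * S2) := by gcongr
    _ = _ := by field_simp

lemma Symb.summable {w : ℤ → ℤ → ℂ} {wd : ℕ → ℤ → ℤ → ℂ} (hs : Symb w wd) (N : ℕ) [NeZero N]
    (a : ZMod N) : Summable fun k => ‖wd N k (rp a)‖ := by
  obtain ⟨C, hC, H⟩ := hs.bound 2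
  refine Summable.of_nonneg_of_le (fun _ => norm_nonneg _) (fun k => ?_)
    (summable_jb.mul_left (C * jb (rp a)))
  calc _ ≤ _ := H N k (rp a) (rp_le a)
    _ = _ := by rw [div_eq_mul_inv]; ring

lemma Fh_sub {w : ℤ → ℤ → ℂ} {wd : ℕ → ℤ → ℤ → ℂ} (hs : Symb w wd) (ε : ℝ) (N : ℕ) [NeZero N]
    (b p : ZMod N → ℂ) (μ : ZMod N) :
    Fh N ε (wd N) (fun a => b a - p a) μ = Fh N ε (wd N) b μ - Fh N ε (wd N) p μ := by
  unfold Fh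
  rw [← (Fh_summable hs ε N b μ).tsum_sub (Fh_summable hs ε N p μ)]
  congr 1
  ext k
  ring

/-- The Nyström matrix applied to a trigonometric polynomial, as a trigonometric polynomial on the
shifted grid. -/
lemma disc_identity {A1 K1 A2 K2 : ℝ → ℝ → ℂ} (hA1 : SPK A1) (hK1 : SPK K1) (hA2 : SPK A2)
    (hK2 : SPK K2) {α : ℂ} (hα : α ≠ 0) (hdiag : ∀ s : ℝ, A1 s s = α) {ε : ℝ} (h : 0 < ce ε)
    (N : ℕ) [NeZero N] {v b : ZMod N → ℂ}
    (hv : ∀ j : ZMod N, v j = ∑ a, b a * ee (rp a) (tg (1 / (N : ℝ)) 0 ((j.val : ℕ) : ℤ)))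
    (i : ℤ) :
    N * ∑ j : ZMod N, Wmat (logKer A1 K1) (logKer A2 K2) (1 / (N : ℝ)) ε i ((j.val : ℕ) : ℤ) * v j =
      ∑ μ, Fh N ε (wds N ε (bet A1) (kap A1 K1) (bet A2) (kap A2 K2)) b μ *
        ee (rp μ) (tg (1 / (N : ℝ)) ε i) := by
  rw [← fold_symbol N ε (fun a => (symb_wds hA1 hK1 hA2 hK2 hα hdiag h).summable N a) b i]
  have e : ∀ a : ZMod N, _ := fun a => (Wmat_hasSum hA1 hK1 hA2 hK2 h N i (rp a)).tsum_eq
  simp_rw [e, hv, Finset.mul_sum]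
  rw [Finset.sum_comm]
  refine Finset.sum_congr rfl fun a _ => Finset.sum_congr rfl fun j _ => ?_
  ring

/-- The data `Wφ` on the shifted grid: retained modes plus the folded contribution of the tail. -/
lemma data_identity {A1 K1 A2 K2 : ℝ → ℝ → ℂ} (hA1 : SPK A1) (hK1 : SPK K1) (hA2 : SPK A2)
    (hK2 : SPK K2) {w : ℤ → ℤ → ℂ} (hw : w = ws (bet A1) (kap A1 K1) (bet A2) (kap A2 K2))
    (hsym : Sym w) (N : ℕ) [NeZero N] (ε : ℝ) {c : ℤ → ℂ} (hc : RapD c) (i : ℤ) :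
    Wop (logKer A1 K1) (logKer A2 K2) (fs c) (tg (1 / (N : ℝ)) ε i) =
      ∑ μ, (Fh N ε w (fun a => c (rp a)) μ + foldc N ε (act w (fun n => c n - trunc N c n)) μ) *
        ee (rp μ) (tg (1 / (N : ℝ)) ε i) := by
  have r1 := trunc_rapD hc N
  have r2 := sub_trunc_rapD hc N
  rw [Wop_fs hA1 hK1 hA2 hK2 hc, ← hw]
  simp_rw [add_mul]
  rw [Finset.sum_add_distrib, ← fs_act_trunc hsym, ← fold_series N ε (act_rapD hsym r2).summable]
  unfold fs
  rw [← (fs_summable (act_rapD hsym r1).summable _).tsum_add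
    (fs_summable (act_rapD hsym r2).summable _)]
  congr 1
  ext m
  rw [← add_mul]
  congr 1
  unfold act
  rw [← (act_summable hsym r1 m).tsum_add (act_summable hsym r2 m)]
  congr 1
  ext k
  ring

lemma sum_rp_le (N : ℕ) [NeZero N] : ∑ a : ZMod N, (jb (rp a) ^ 2)⁻¹ ≤ S2 := by
  have := summable_jb.sum_le_tsum (Finset.univ.map ⟨fun a : ZMod N => rp a, ZMod.injective_valMinAbs⟩)
    (fun n _ => by have := jb_pos n; positivity)
  simpa [S2] using this

/-- Nodal error from the error of the discrete Fourier coefficients. -/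
lemma nodal_le {N : ℕ} [NeZero N] {c : ℤ → ℂ} (hc : RapD c) {P : ℝ}
    (hP : ∀ n, ‖c n‖ * jb n ^ 3 ≤ P) {b : ZMod N → ℂ} {D : ℝ}
    (hb : ∀ a, jb (rp a) ^ 2 * ‖b a - c (rp a)‖ ≤ D) (t : ℝ) :
    ‖∑ a, b a * ee (rp a) t - fs c t‖ ≤ (D + 2 * P / N) * S2 := by
  have e1 : fs (trunc N c) t = ∑ a : ZMod N, c (rp a) * ee (rp a) t := by
    unfold fs
    simpa only [mul_comm] using trunc_tsum N c (fun n => ee n t)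
  have e2 : fs c t = fs (trunc N c) t + fs (fun n => c n - trunc N c n) t := by
    unfold fs
    rw [← (fs_summable (trunc_rapD hc N).summable t).tsum_add
      (fs_summable (sub_trunc_rapD hc N).summable t)]
    congr 1
    ext n
    ring
  have e3 : ∑ a, b a * ee (rp a) t - fs c t =
      ∑ a : ZMod N, (b a - c (rp a)) * ee (rp a) t - fs (fun n => c n - trunc N c n) t := by
    simp_rw [sub_mul]
    rw [e2, e1, Finset.sum_sub_distrib]
    ring
  have hD : 0 ≤ D := le_trans (by have := jb_pos (rp (0 : ZMod N)); positivity) (hb 0)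
  have b1 : ‖∑ a : ZMod N, (b a - c (rp a)) * ee (rp a) t‖ ≤ D * S2 := by
    calc _ ≤ ∑ a : ZMod N, D * (jb (rp a) ^ 2)⁻¹ := by
          refine norm_sum_le_of_le _ fun a _ => ?_
          have := jb_pos (rp a)
          rw [norm_mul, ee_norm, mul_one, ← div_eq_mul_inv, le_div_iff₀ (by positivity), mul_comm]
          exact hb a
      _ ≤ D * S2 := by
          rw [← Finset.mul_sum]
          exact mul_le_mul_of_nonneg_left (sum_rp_le N) hD
  have b2 : ‖fs (fun n => c n - trunc N c n) t‖ ≤ 2 * P / N * S2 := by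
    refine norm_tsum_jb_le fun n => ?_
    rw [norm_mul, ee_norm, mul_one, ← div_eq_mul_inv]
    exact (rest_bound hP n).2
  rw [e3, add_mul]
  exact (norm_sub_le _ _).trans (add_le_add b1 b2)

/-- Unique solvability of the discrete system, from injectivity of a square matrix. -/
lemma existsUnique_solution {ι : Type*} [Fintype ι] [DecidableEq ι] (M : Matrix ι ι ℂ)
    (h : ∀ v, M.mulVec v = 0 → v = 0) (g : ι → ℂ) : ∃! v, M.mulVec v = g := by
  have hi : Function.Injective (Matrix.toLin' M) := by
    rw [← LinearMap.ker_eq_bot, LinearMap.ker_eq_bot']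
    simpa using h
  obtain ⟨v, hv⟩ := LinearMap.injective_iff_surjective.1 hi g
  exact ⟨v, by simpa using hv, fun u hu => hi (by rw [hv]; simpa using hu)⟩

end Nystrom

open Nystrom

/-- first-order uniform nodal convergence
`max_j |φ_j − φ(t_j)| ≤ C h ‖φ‖₃` for all stable `ε`. -/
theorem stmt_17
    (A1 K1 A2 K2 : ℝ → ℝ → ℂ) (hA1 : SPK A1) (hK1 : SPK K1) (hA2 : SPK A2) (hK2 : SPK K2)
    (α : ℂ) (hα : α ≠ 0) (hdiag : ∀ s : ℝ, A1 s s = α)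
    (hinj : ∀ φ : ℝ → ℂ, ContDiff ℝ (⊤ : ℕ∞) φ → Function.Periodic φ 1 →
      (∀ s, Wop (logKer A1 K1) (logKer A2 K2) φ s = 0) → ∀ s, φ s = 0)
    (ε : ℝ) (hε : ∀ k : ℤ, ε ≠ (k : ℝ) / 2) :
    ∃ h0 > (0:ℝ), ∃ C > (0:ℝ), ∀ φ : ℝ → ℂ, ContDiff ℝ (⊤ : ℕ∞) φ → Function.Periodic φ 1 →
      ∀ (N : ℕ) [NeZero N], 1 / (N : ℝ) ≤ h0 →
        (∃! v : ZMod N → ℂ, Nys (logKer A1 K1) (logKer A2 K2) ε N φ v) ∧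
        ∀ v : ZMod N → ℂ, Nys (logKer A1 K1) (logKer A2 K2) ε N φ v →
          ∀ j : ZMod N,
            ‖v j - φ (tg (1 / (N : ℝ)) 0 ((j.val : ℕ) : ℤ))‖ ≤
              C * (1 / (N : ℝ)) * sobNorm 3 φ := by
  -- `ε ∉ ½ℤ` enters only through `sin 2πε ≠ 0`
  have hce : 0 < ce ε := abs_pos.2 (sin_ne_zero_of_not_half hε)
  have hs := symb_wds hA1 hK1 hA2 hK2 hα hdiag hce
  obtain ⟨C, hC, N0, stab⟩ := stability hs ε
    (fun c hc h0 => act_injective hA1 hK1 hA2 hK2 hinj hc h0)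
  obtain ⟨C1, hC1, cons⟩ := Fh_cons hs ε
  obtain ⟨C2, hC2, rest⟩ := act_rest_le hs.sym
  have hS := S2_pos
  refine ⟨1 / (N0 + 1), by positivity,
    8 * S2 * (C * (C1 + 24 * S2 * C2) + 2), by positivity, fun φ hφ hper N _ hN => ?_⟩
  have hNpos : (0 : ℝ) < N := by exact_mod_cast NeZero.pos N
  have hNC : (N : ℂ) ≠ 0 := by exact_mod_cast NeZero.ne N
  have hN0 : N0 ≤ N := by
    rw [one_div_le_one_div hNpos (by positivity)] at hN
    have : N0 + 1 ≤ N := by exact_mod_cast hN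
    omega
  have disc : ∀ {v b : ZMod N → ℂ},
      (∀ j : ZMod N, v j = ∑ a, b a * ee (rp a) (tg (1 / (N : ℝ)) 0 ((j.val : ℕ) : ℤ))) → ∀ i, _ :=
    fun hv i => disc_identity hA1 hK1 hA2 hK2 hα hdiag hce N hv i
  have hc := fc_rapD hφ hper
  have hφs : fs (fc φ) = φ := funext fun t =>
    (hasSum_fourier hφ.continuous hper hc.summable t).tsum_eq
  have hP := fc_le_sobNorm hφ hper
  have hP0 : 0 ≤ sobNorm 3 φ := Real.sqrt_nonneg _
  refine ⟨?_, fun v hv j => ?_⟩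
  · have := existsUnique_solution (Matrix.of fun i j : ZMod N => Wmat (logKer A1 K1) (logKer A2 K2)
      (1 / (N : ℝ)) ε ((i.val : ℕ) : ℤ) ((j.val : ℕ) : ℤ)) (fun v hv => ?_)
      (fun i => (1 / (N : ℂ)) * Wop (logKer A1 K1) (logKer A2 K2) φ
        (tg (1 / (N : ℝ)) ε ((i.val : ℕ) : ℤ)))
    · simpa only [Nys, funext_iff, Matrix.mulVec, dotProduct, Matrix.of_apply] using this
    · obtain ⟨b, hb⟩ := exists_dft N v
      have h0 := dft_injective N ε _ fun i => by
        rw [← disc hb]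
        have := congrFun hv i
        simp only [Matrix.mulVec, dotProduct, Matrix.of_apply, Pi.zero_apply] at this
        rw [this, mul_zero]
      have hb0 : ∀ a, b a = 0 := fun a => by
        have := stab N hN0 b 0 (fun μ => by rw [h0 μ]; simp) a
        have hj := jb_pos (rp a)
        rw [mul_zero] at this
        by_contra hne
        have : 0 < jb (rp a) ^ 2 * ‖b a‖ := by have := norm_pos_iff.2 hne; positivity
        linarith
      ext j
      rw [hb j]
      simp [hb0]
  · obtain ⟨b, hb⟩ := exists_dft N v
    have key := dft_injective N ε (fun μ =>
        Fh N ε (wds N ε (bet A1) (kap A1 K1) (bet A2) (kap A2 K2)) b μ -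
        (Fh N ε (ws (bet A1) (kap A1 K1) (bet A2) (kap A2 K2)) (fun a => fc φ (rp a)) μ +
          foldc N ε (act (ws (bet A1) (kap A1 K1) (bet A2) (kap A2 K2))
            (fun n => fc φ n - trunc N (fc φ) n)) μ)) fun i => by
      simp_rw [sub_mul]
      rw [Finset.sum_sub_distrib, ← disc hb, ← data_identity hA1 hK1 hA2 hK2 rfl hs.sym N ε hc, hφs,
        hv i, ← mul_assoc, mul_one_div_cancel hNC, one_mul, sub_self]
    have est := stab N hN0 (fun a => b a - fc φ (rp a))
      ((C1 + 24 * S2 * C2) * (8 * sobNorm 3 φ) / N) fun μ => by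
      have e : Fh N ε (wds N ε (bet A1) (kap A1 K1) (bet A2) (kap A2 K2))
          (fun a => b a - fc φ (rp a)) μ = _ := Fh_sub hs ε N b (fun a => fc φ (rp a)) μ
      rw [e, sub_eq_zero.1 (key μ), add_sub_right_comm]
      have i1 := cons N (fc φ) _ hP μ
      have i2 := foldc_le ε (D := C2 * (8 * sobNorm 3 φ)) (by positivity)
        (fun m => (rest N (fc φ) _ hP m).1) (fun m => (rest N (fc φ) _ hP m).2) μ
      refine (mul_le_mul_of_nonneg_left (norm_add_le _ _) (jb_pos _).le).trans ?_
      rw [mul_add]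
      exact (add_le_add i1 i2).trans (le_of_eq (by ring))
    have fin := nodal_le hc hP est (tg (1 / (N : ℝ)) 0 ((j.val : ℕ) : ℤ))
    rw [← hb, hφs] at fin
    refine fin.trans (le_of_eq ?_)
    field_simp
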